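/- There exists an absolute constant A > 0 such that for every set L of n lines and every set C of k circles in ℝ² with k ≥ 2, the number T(L,C) of tangent pairs satisfies T(L,C) ≤ A · ( n^{2/3} k^{2/3} + n^{6/11} k^{9/11} (log k)^{2/11} + k + n ). -/

import Mathlib

/-!
Every line is dual to a point of the plane, and every circle to two quadratics, one for each sign of
its radius, so that tangency becomes the incidence of a point with the graph of a quadratic.

Two quadratics meet at most twice, and their graphs drawn through given points can cross many times
only by forming lenses. Along each curve the lenses of a nonoverlapping family give a sequence of
curves, and any two of these sequences list their common entries in reverse cyclic order. By the
Marcus–Tardos theorem `n` curves therefore carry `O(n ^ (3 / 2) * log n)` such lenses. Removing the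
arcs that bound the lenses of a maximal such family leaves a drawing without lenses, to which the
crossing lemma applies, and this bounds the incidences of `m` points and `n` quadratics by
`O(m + n + (m * n) ^ (2 / 3) + n ^ (3 / 2) * log n)`.

The last term is improved by a cutting. In the three-dimensional space of quadratics each point is
dual to a plane. The minimum norm points of the faces of a cell of the arrangement of a random
sample of `r` planes split the cell into simplices of bounded description, so by the Clarkson–Shor
argument the `n` quadratics fall into `O(r ^ 3)` classes, each split by only `O(m / r)` planes on
average. Applying the first bound to groups of equal size within the classes, and recursing on the
quadratics left over, gives the exponents `6 / 11`, `9 / 11` and `2 / 11`.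
-/

noncomputable section

abbrev Pt2 := EuclideanSpace ℝ (Fin 2)

/-- A line in the plane: the set of points `a + t • v` for a nonzero direction `v`. -/
def IsLine2 (l : Set Pt2) : Prop :=
  ∃ a v : Pt2, v ≠ 0 ∧ l = {x : Pt2 | ∃ t : ℝ, x = a + t • v}

/-- A circle in the plane: a metric sphere with positive radius. -/
def IsCircle2 (s : Set Pt2) : Prop :=
  ∃ c : Pt2, ∃ r : ℝ, 0 < r ∧ s = Metric.sphere c r

/-- Two subsets of the plane are tangent if they intersect in exactly one point. -/
def Tangent2 (a b : Set Pt2) : Prop := ∃ p : Pt2, a ∩ b = {p}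

namespace LineCircle

open Finset

section Collisions

variable {α β γ ι κ : Type*} [DecidableEq γ]

/-- The ordered pairs of elements of `S` with the same image under `f`, diagonal pairs included. -/
def collisions (f : α → γ) (S : Finset α) : Finset (α × α) :=
  {z ∈ S ×ˢ S | f z.1 = f z.2}

lemma mem_collisions {f : α → γ} {S : Finset α} {z : α × α} :
    z ∈ collisions f S ↔ (z.1 ∈ S ∧ z.2 ∈ S) ∧ f z.1 = f z.2 := by
  rw [collisions, mem_filter, mem_product]

lemma card_filter_eq_eq_sum_mul {f : α → γ} {g : β → γ} {S : Finset α} {T : Finset β}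
    {U : Finset γ} (hf : ∀ x ∈ S, f x ∈ U) :
    #{z ∈ S ×ˢ T | f z.1 = g z.2} = ∑ c ∈ U, #{x ∈ S | f x = c} * #{y ∈ T | g y = c} := by
  have hmaps : ∀ z ∈ ({z ∈ S ×ˢ T | f z.1 = g z.2} : Finset (α × β)), f z.1 ∈ U := fun z hz =>
    hf _ (mem_product.1 (mem_filter.1 hz).1).1
  rw [card_eq_sum_card_fiberwise hmaps]
  refine sum_congr rfl fun c _ => ?_
  rw [← card_product]
  congr 1
  ext z
  simp only [mem_filter, mem_product]
  grind

lemma card_collisions_eq_sum_sq {f : α → γ} {S : Finset α} {U : Finset γ}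
    (hf : ∀ x ∈ S, f x ∈ U) : #(collisions f S) = ∑ c ∈ U, #{x ∈ S | f x = c} ^ 2 := by
  simp only [collisions, card_filter_eq_eq_sum_mul hf, sq]

lemma sq_card_le_card_mul_card_collisions {f : α → γ} {S : Finset α} {U : Finset γ}
    (hf : ∀ x ∈ S, f x ∈ U) : #S ^ 2 ≤ #U * #(collisions f S) := by
  rw [card_collisions_eq_sum_sq hf, card_eq_sum_card_fiberwise hf]
  exact sq_sum_le_card_mul_sum_sq

lemma two_mul_card_filter_eq_le (f : α → γ) (g : β → γ) (S : Finset α) (T : Finset β) :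
    2 * #{z ∈ S ×ˢ T | f z.1 = g z.2} ≤ #(collisions f S) + #(collisions g T) := by
  have hf : ∀ x ∈ S, f x ∈ S.image f ∪ T.image g := fun x hx =>
    mem_union_left _ (mem_image_of_mem f hx)
  have hg : ∀ y ∈ T, g y ∈ S.image f ∪ T.image g := fun y hy =>
    mem_union_right _ (mem_image_of_mem g hy)
  rw [card_filter_eq_eq_sum_mul hf, card_collisions_eq_sum_sq hf, card_collisions_eq_sum_sq hg,
    mul_sum, ← sum_add_distrib]
  refine sum_le_sum fun c _ => ?_
  simpa only [mul_assoc] using two_mul_le_add_sq #{x ∈ S | f x = c} #{y ∈ T | g y = c}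

lemma card_collisions_eq_card_add_two_mul [LinearOrder κ] {f : α → γ} {g : α → κ} {S : Finset α}
    (hg : Set.InjOn g S) :
    #(collisions f S) = #S + 2 * #{z ∈ S ×ˢ S | f z.1 = f z.2 ∧ g z.1 < g z.2} := by
  classical
  set lower : Finset (α × α) := {z ∈ S ×ˢ S | f z.1 = f z.2 ∧ g z.1 < g z.2} with hlower
  set upper : Finset (α × α) := {z ∈ S ×ˢ S | f z.1 = f z.2 ∧ g z.2 < g z.1} with hupper
  have hdiag : #(S.diag ∪ (lower ∪ upper)) = #S + (#lower + #upper) := by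
    rw [card_union_of_disjoint, card_union_of_disjoint, diag_card]
    · exact disjoint_left.2 fun z hz hz' => by grind
    · exact disjoint_left.2 fun z hz hz' => by grind
  have hsplit : collisions f S = S.diag ∪ (lower ∪ upper) := by
    ext ⟨x, y⟩
    have hxy : x ∈ S → y ∈ S → g x = g y → x = y := fun hx hy h => hg hx hy h
    have := lt_trichotomy (g x) (g y)
    simp only [mem_collisions, mem_union, mem_diag, hlower, hupper, mem_filter, mem_product]
    grind
  have hswap : #upper = #lower :=
    card_equiv (Equiv.prodComm α α) fun z => by
      simp only [hlower, hupper, mem_filter, mem_product, Equiv.prodComm_apply, Prod.fst_swap,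
        Prod.snd_swap]
      grind
  rw [hsplit, hdiag, hswap]
  ring

lemma card_filter_product_product {δ : Type*} (S : Finset α) (K : Finset κ) (T : Finset β)
    (L : Finset δ) (P : α × κ → β × δ → Prop) [∀ x y, Decidable (P x y)] :
    #{z ∈ (S ×ˢ K) ×ˢ (T ×ˢ L) | P z.1 z.2} =
      ∑ p ∈ S ×ˢ T, #{w ∈ K ×ˢ L | P (p.1, w.1) (p.2, w.2)} := by
  rw [← card_sigma]
  refine card_nbij' (fun z => ⟨(z.1.1, z.2.1), (z.1.2, z.2.2)⟩)
    (fun q => ((q.1.1, q.2.1), (q.1.2, q.2.2))) ?_ ?_ (fun _ _ => rfl) (fun _ _ => rfl)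
  all_goals
    intro z hz
    simp only [coe_filter, coe_sigma, mem_product, Set.mem_sigma_iff, SetLike.mem_coe,
      Set.mem_ofPred_eq] at hz ⊢
    tauto

lemma card_collisions_product_le (I : Finset ι) (K : Finset κ) (f : ι → κ → γ)
    (hf : ∀ i ∈ I, Set.InjOn (f i) K) :
    #(collisions (fun x : ι × κ => f x.1 x.2) (I ×ˢ K)) ≤
      ∑ p ∈ I.offDiag, #{w ∈ K ×ˢ K | f p.1 w.1 = f p.2 w.2} + #I * #K := by
  classical
  have hdiag : ∀ i ∈ I, #{w ∈ K ×ˢ K | f i w.1 = f i w.2} ≤ #K := fun i hi => by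
    refine card_le_card_of_injOn Prod.fst (fun w hw => (mem_product.1 (mem_filter.1 hw).1).1) ?_
    rintro ⟨x, y⟩ hxy ⟨x', y'⟩ hxy' (rfl : x = x')
    have h := mem_filter.1 (mem_coe.1 hxy)
    have h' := mem_filter.1 (mem_coe.1 hxy')
    exact Prod.ext rfl <| hf i hi (mem_product.1 h.1).2 (mem_product.1 h'.1).2 (h.2.symm.trans h'.2)
  rw [collisions, card_filter_product_product (P := fun x y => f x.1 x.2 = f y.1 y.2),
    ← diag_union_offDiag, sum_union (disjoint_diag_offDiag I), sum_diag, add_comm]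
  exact Nat.add_le_add_left (by simpa using sum_le_sum hdiag) _

end Collisions

/-! ### Intersection-reverse sequences -/

section IntersectionReverse

/-- Any three points of `W`, listed by increasing first coordinate, have second coordinates in the
reverse cyclic order. This is the relation of Marcus and Tardos between the positions of the
common entries of two intersection-reverse sequences. -/
def ReversesCyclicOrder (W : Finset (ℕ × ℕ)) : Prop :=
  ∀ a ∈ W, ∀ b ∈ W, ∀ c ∈ W, a.1 < b.1 → b.1 < c.1 →
    ¬(a.2 < b.2 ∧ b.2 < c.2) ∧ ¬(b.2 < c.2 ∧ c.2 < a.2) ∧ ¬(c.2 < a.2 ∧ a.2 < b.2)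

/-- A partial matching of two sequences of positions that reverses the cyclic order. -/
structure IsReverseMatching (W : Finset (ℕ × ℕ)) : Prop where
  fst_injOn : Set.InjOn Prod.fst (W : Set (ℕ × ℕ))
  snd_injOn : Set.InjOn Prod.snd (W : Set (ℕ × ℕ))
  reverses : ReversesCyclicOrder W

/-- The block of a point when both coordinates are cut into intervals of length `k`. -/
def block (k : ℕ) (w : ℕ × ℕ) : ℕ × ℕ := (w.1 / k, w.2 / k)

/-- The strictly increasing pairs of points of `W`. -/
def increasingPairs (W : Finset (ℕ × ℕ)) : Finset ((ℕ × ℕ) × (ℕ × ℕ)) :=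
  {z ∈ W ×ˢ W | z.1.1 < z.2.1 ∧ z.1.2 < z.2.2}

/-- The pairs of points of `W` in a common block, listed by increasing first coordinate. -/
def blockPairs (k : ℕ) (W : Finset (ℕ × ℕ)) : Finset ((ℕ × ℕ) × (ℕ × ℕ)) :=
  {z ∈ W ×ˢ W | block k z.1 = block k z.2 ∧ z.1.1 < z.2.1}

/-- The pairs of `blockPairs` whose second coordinates increase. -/
def blockIncreasingPairs (k : ℕ) (W : Finset (ℕ × ℕ)) : Finset ((ℕ × ℕ) × (ℕ × ℕ)) :=
  {z ∈ W ×ˢ W | block k z.1 = block k z.2 ∧ z.1.1 < z.2.1 ∧ z.1.2 < z.2.2}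

/-- The pairs of `blockPairs` whose second coordinates decrease. -/
def blockDecreasingPairs (k : ℕ) (W : Finset (ℕ × ℕ)) : Finset ((ℕ × ℕ) × (ℕ × ℕ)) :=
  {z ∈ W ×ˢ W | block k z.1 = block k z.2 ∧ z.1.1 < z.2.1 ∧ z.2.2 < z.1.2}

/-- The points of `W` lying in a block that contains an increasing pair of `W`. -/
def increasingBlocks (k : ℕ) (W : Finset (ℕ × ℕ)) : Finset (ℕ × ℕ) :=
  {w ∈ W | ∃ a ∈ W, ∃ b ∈ W, block k a = block k w ∧ block k b = block k w ∧
    a.1 < b.1 ∧ a.2 < b.2}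

variable {W Y : Finset (ℕ × ℕ)} {a b c d v w : ℕ × ℕ} {k : ℕ}

lemma increasingBlocks_subset (k : ℕ) (W : Finset (ℕ × ℕ)) : increasingBlocks k W ⊆ W :=
  filter_subset _ _

lemma lt_of_div_lt_div_right {a b k : ℕ} (h : a / k < b / k) : a < b :=
  not_le.1 fun hba => h.not_ge (Nat.div_le_div_right hba)

lemma block_mul_two_eq (h : block k v = block k w) : block (k * 2) v = block (k * 2) w := by
  simp only [block, Prod.mk.injEq] at h
  simp only [block, ← Nat.div_div_eq_div_mul, h.1, h.2]

lemma block_mem_of_block_mul_two_eq (h : block (k * 2) w = b) :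
    block k w ∈ ({2 * b.1, 2 * b.1 + 1} : Finset ℕ) ×ˢ ({2 * b.2, 2 * b.2 + 1} : Finset ℕ) := by
  subst h
  simp only [block, ← Nat.div_div_eq_div_mul, mem_product, mem_insert, mem_singleton]
  omega

lemma block_eq_zero (h : w ∈ range k ×ˢ range k) : block k w = 0 := by
  simp only [mem_product, mem_range] at h
  simp only [block, Nat.div_eq_of_lt h.1, Nat.div_eq_of_lt h.2, Prod.mk_zero_zero]

lemma increasingBlocks_subset_mul_two (k : ℕ) (W : Finset (ℕ × ℕ)) :
    increasingBlocks k W ⊆ increasingBlocks (k * 2) W := fun w hw => by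
  obtain ⟨hw, a, ha, b, hb, haw, hbw, hab⟩ := mem_filter.1 hw
  exact mem_filter.2 ⟨hw, a, ha, b, hb, block_mul_two_eq haw, block_mul_two_eq hbw, hab⟩

lemma increasingBlocks_one (W : Finset (ℕ × ℕ)) : increasingBlocks 1 W = ∅ := by
  refine filter_eq_empty_iff.2 ?_
  rintro w - ⟨a, -, b, -, haw, hbw, hab, -⟩
  simp only [block, Nat.div_one] at haw hbw
  exact hab.ne (congrArg Prod.fst (haw.trans hbw.symm))

lemma card_increasingBlocks_two_pow (W : Finset (ℕ × ℕ)) (J : ℕ) :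
    #(increasingBlocks (2 ^ J) W) =
      ∑ j ∈ range J, #(increasingBlocks (2 ^ j * 2) W \ increasingBlocks (2 ^ j) W) := by
  induction J with
  | zero => simp [increasingBlocks_one]
  | succ J ih =>
    rw [sum_range_succ, ← ih, pow_succ, add_comm,
      card_sdiff_add_card_eq_card (increasingBlocks_subset_mul_two _ W)]

lemma blockPairs_mono (h : Y ⊆ W) : blockPairs k Y ⊆ blockPairs k W :=
  filter_subset_filter _ (product_subset_product h h)

lemma blockIncreasingPairs_subset (k : ℕ) (W : Finset (ℕ × ℕ)) :
    blockIncreasingPairs k W ⊆ increasingPairs (increasingBlocks k W) := fun z hz => by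
  simp only [blockIncreasingPairs, mem_filter, mem_product] at hz
  obtain ⟨⟨h₁, h₂⟩, hb, hx, hy⟩ := hz
  simp only [increasingPairs, increasingBlocks, mem_filter, mem_product]
  exact ⟨⟨⟨h₁, z.1, h₁, z.2, h₂, rfl, hb.symm, hx, hy⟩,
    ⟨h₂, z.1, h₁, z.2, h₂, hb, rfl, hx, hy⟩⟩, hx, hy⟩

lemma swap_mem_increasingBlocks (hw : w ∈ increasingBlocks k W) :
    w.swap ∈ increasingBlocks k (W.image Prod.swap) := by
  obtain ⟨hw, a, ha, b, hb, haw, hbw, hab, hab'⟩ := mem_filter.1 hw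
  exact mem_filter.2 ⟨mem_image_of_mem _ hw, a.swap, mem_image_of_mem _ ha, b.swap,
    mem_image_of_mem _ hb, congrArg Prod.swap haw, congrArg Prod.swap hbw, hab', hab⟩

namespace IsReverseMatching

lemma image_swap (hW : IsReverseMatching W) : IsReverseMatching (W.image Prod.swap) where
  fst_injOn := by
    rw [coe_image]
    rintro _ ⟨v, hv, rfl⟩ _ ⟨w, hw, rfl⟩ h
    exact congrArg Prod.swap (hW.snd_injOn hv hw h)
  snd_injOn := by
    rw [coe_image]
    rintro _ ⟨v, hv, rfl⟩ _ ⟨w, hw, rfl⟩ h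
    exact congrArg Prod.swap (hW.fst_injOn hv hw h)
  reverses := by
    simp only [ReversesCyclicOrder, forall_mem_image, Prod.fst_swap, Prod.snd_swap]
    refine fun a ha b hb c hc hab hbc => ⟨fun h => ?_, fun h => ?_, fun h => ?_⟩
    · exact (hW.reverses a ha b hb c hc h.1 h.2).1 ⟨hab, hbc⟩
    · exact (hW.reverses b hb c hc a ha h.1 h.2).2.2 ⟨hab, hbc⟩
    · exact (hW.reverses c hc a ha b hb h.1 h.2).2.1 ⟨hab, hbc⟩

lemma not_consecutive_increasing_pairs (hW : IsReverseMatching W) (ha : a ∈ W) (hb : b ∈ W)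
    (hc : c ∈ W) (hd : d ∈ W) (hab : a.1 < b.1) (hbc : b.1 < c.1) (hcd : c.1 < d.1)
    (hab' : a.2 < b.2) : ¬c.2 < d.2 := fun hcd' => by
  have habc := hW.reverses a ha b hb c hc hab hbc
  have habd := hW.reverses a ha b hb d hd hab (hbc.trans hcd)
  have hacd := hW.reverses a ha c hc d hd (hab.trans hbc) hcd
  have hac : a.2 ≠ c.2 := fun h => (hab.trans hbc).ne (congrArg Prod.fst (hW.snd_injOn ha hc h))
  have hbc' : b.2 ≠ c.2 := fun h => hbc.ne (congrArg Prod.fst (hW.snd_injOn hb hc h))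
  omega

lemma block_fst_eq (hW : IsReverseMatching W) (hv : v ∈ increasingBlocks k W)
    (hw : w ∈ increasingBlocks k W) : (block k v).1 = (block k w).1 := by
  wlog hlt : (block k v).1 < (block k w).1 generalizing v w
  · by_contra hne
    exact hne (this hw hv ((Ne.lt_or_gt hne).resolve_left hlt)).symm
  obtain ⟨-, a, ha, b, hb, -, hbv, hab, hab'⟩ := mem_filter.1 hv
  obtain ⟨-, c, hc, d, hd, hcw, -, hcd, hcd'⟩ := mem_filter.1 hw
  rw [← hbv, ← hcw] at hlt
  exact absurd hcd' <|
    hW.not_consecutive_increasing_pairs ha hb hc hd hab (lt_of_div_lt_div_right hlt) hcd hab'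

lemma block_eq (hW : IsReverseMatching W) (hv : v ∈ increasingBlocks k W)
    (hw : w ∈ increasingBlocks k W) : block k v = block k w :=
  Prod.ext (hW.block_fst_eq hv hw) <|
    hW.image_swap.block_fst_eq (swap_mem_increasingBlocks hv) (swap_mem_increasingBlocks hw)

-- No point is both the lower and the upper end of an increasing pair, so the graph of increasing
-- pairs is bipartite.
lemma four_mul_card_increasingPairs_le (hW : IsReverseMatching W) (hY : Y ⊆ W) :
    4 * #(increasingPairs Y) ≤ #Y ^ 2 := by
  set lower : Finset (ℕ × ℕ) := {w ∈ Y | ∃ v ∈ Y, w.1 < v.1 ∧ w.2 < v.2}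
  set upper : Finset (ℕ × ℕ) := {w ∈ Y | ∃ v ∈ Y, v.1 < w.1 ∧ v.2 < w.2}
  have hdisj : Disjoint lower upper := by
    refine disjoint_left.2 fun w hl hu => ?_
    obtain ⟨hw, v, hv, hwv, hwv'⟩ := mem_filter.1 hl
    obtain ⟨-, u, hu, huw, huw'⟩ := mem_filter.1 hu
    exact (hW.reverses u (hY hu) w (hY hw) v (hY hv) huw hwv).1 ⟨huw', hwv'⟩
  have hpairs : #(increasingPairs Y) ≤ #lower * #upper := by
    rw [← card_product]
    refine card_le_card fun z hz => ?_
    obtain ⟨hz, hlt⟩ := mem_filter.1 hz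
    obtain ⟨h₁, h₂⟩ := mem_product.1 hz
    exact mem_product.2 ⟨mem_filter.2 ⟨h₁, z.2, h₂, hlt⟩, mem_filter.2 ⟨h₂, z.1, h₁, hlt⟩⟩
  have hcard : #lower + #upper ≤ #Y := by
    rw [← card_union_of_disjoint hdisj]
    exact card_le_card (union_subset (filter_subset _ _) (filter_subset _ _))
  calc 4 * #(increasingPairs Y) ≤ 4 * (#lower * #upper) := Nat.mul_le_mul_left 4 hpairs
    _ = 4 * #lower * #upper := (mul_assoc _ _ _).symm
    _ ≤ (#lower + #upper) ^ 2 := four_mul_le_pow_two_add _ _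
    _ ≤ #Y ^ 2 := Nat.pow_le_pow_left hcard 2

lemma card_collisions_block (hW : IsReverseMatching W) (hY : Y ⊆ W) :
    #(collisions (block k) Y) = #Y + 2 * #(blockPairs k Y) :=
  card_collisions_eq_card_add_two_mul (hW.fst_injOn.mono (coe_subset.2 hY))

lemma sq_card_increasingBlocks_eq (hW : IsReverseMatching W) (k : ℕ) :
    #(increasingBlocks k W) ^ 2 =
      #(increasingBlocks k W) + 2 * #(blockPairs k (increasingBlocks k W)) := by
  rw [← hW.card_collisions_block (increasingBlocks_subset k W), collisions, filter_true_of_mem,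
    card_product, sq]
  exact fun z hz => hW.block_eq (mem_product.1 hz).1 (mem_product.1 hz).2

lemma blockPairs_union_subset (hW : IsReverseMatching W) (k : ℕ) :
    blockPairs k (W \ increasingBlocks k W) ∪ blockPairs k (increasingBlocks k W) ⊆
      blockDecreasingPairs k W ∪ increasingPairs (increasingBlocks k W) := fun z hz => by
  have hz' : z ∈ blockPairs k W := by
    rcases mem_union.1 hz with h | h
    · exact blockPairs_mono sdiff_subset h
    · exact blockPairs_mono (increasingBlocks_subset k W) h
  obtain ⟨hmem, hb, hx⟩ := mem_filter.1 hz'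
  have hne : z.1.2 ≠ z.2.2 := fun h =>
    hx.ne <| congrArg Prod.fst <|
      hW.snd_injOn (mem_product.1 hmem).1 (mem_product.1 hmem).2 h
  rcases hne.lt_or_gt with hy | hy
  · exact mem_union_right _ <|
      blockIncreasingPairs_subset k W (mem_filter.2 ⟨hmem, hb, hx, hy⟩)
  · exact mem_union_left _ (mem_filter.2 ⟨hmem, hb, hx, hy⟩)

lemma two_mul_card_blockPairs_add_le (hW : IsReverseMatching W) (k : ℕ) :
    2 * #(blockPairs k (W \ increasingBlocks k W)) + 2 * #(blockIncreasingPairs k W) ≤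
      2 * #(blockDecreasingPairs k W) + #(increasingBlocks k W) := by
  have hdisj : Disjoint (blockPairs k (W \ increasingBlocks k W))
      (blockPairs k (increasingBlocks k W)) := by
    refine disjoint_left.2 fun z hz hz' => ?_
    exact (mem_sdiff.1 (mem_product.1 (mem_filter.1 hz).1).1).2
      (mem_product.1 (mem_filter.1 hz').1).1
  have hpairs := (card_le_card (hW.blockPairs_union_subset k)).trans (card_union_le _ _)
  rw [card_union_of_disjoint hdisj] at hpairs
  have hsq := hW.sq_card_increasingBlocks_eq k
  have hbipartite := hW.four_mul_card_increasingPairs_le (increasingBlocks_subset k W)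
  have hincr := card_le_card (blockIncreasingPairs_subset k W)
  omega

lemma sq_card_add_le (hW : IsReverseMatching W) (hY : Y ⊆ W \ increasingBlocks k W)
    (hblocks : #(Y.image (block k)) ≤ 4) :
    #Y ^ 2 + 8 * #(blockIncreasingPairs k W) ≤ 4 * (#W + 2 * #(blockDecreasingPairs k W)) := by
  have hsq : #Y ^ 2 ≤ 4 * (#Y + 2 * #(blockPairs k (W \ increasingBlocks k W))) :=
    calc #Y ^ 2 ≤ #(Y.image (block k)) * #(collisions (block k) Y) :=
          sq_card_le_card_mul_card_collisions fun _ => mem_image_of_mem _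
      _ ≤ 4 * (#Y + 2 * #(blockPairs k Y)) := by
          rw [hW.card_collisions_block (hY.trans sdiff_subset)]
          exact Nat.mul_le_mul_right _ hblocks
      _ ≤ 4 * (#Y + 2 * #(blockPairs k (W \ increasingBlocks k W))) := by
          have := card_le_card (blockPairs_mono (k := k) hY)
          omega
  have hpairs := hW.two_mul_card_blockPairs_add_le k
  have hcard := card_sdiff_add_card_eq_card (increasingBlocks_subset k W)
  have hYcard := card_le_card hY
  omega

lemma card_image_block_le_four (hW : IsReverseMatching W)
    (hY : Y ⊆ increasingBlocks (k * 2) W) : #(Y.image (block k)) ≤ 4 := by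
  obtain rfl | ⟨w₀, hw₀⟩ := Y.eq_empty_or_nonempty
  · simp
  have hsub : Y.image (block k) ⊆
      ({2 * (block (k * 2) w₀).1, 2 * (block (k * 2) w₀).1 + 1} : Finset ℕ) ×ˢ
        ({2 * (block (k * 2) w₀).2, 2 * (block (k * 2) w₀).2 + 1} : Finset ℕ) :=
    image_subset_iff.2 fun w hw =>
      block_mem_of_block_mul_two_eq (hW.block_eq (hY hw) (hY hw₀))
  refine (card_le_card hsub).trans ?_
  rw [card_product]
  exact Nat.mul_le_mul card_le_two card_le_two

-- Points are counted by the first dyadic scale at which their block contains an increasing pair.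
lemma sq_card_add_sum_le (hW : IsReverseMatching W) {J : ℕ}
    (hJ : W ⊆ range (2 ^ J) ×ˢ range (2 ^ J)) :
    #W ^ 2 + (J + 1) * ∑ j ∈ range (J + 1), 8 * #(blockIncreasingPairs (2 ^ j) W) ≤
      (J + 1) * ∑ j ∈ range (J + 1), 4 * (#W + 2 * #(blockDecreasingPairs (2 ^ j) W)) := by
  set layer : ℕ → Finset (ℕ × ℕ) := fun j =>
    (if j < J then increasingBlocks (2 ^ j * 2) W else W) \ increasingBlocks (2 ^ j) W with hlayer
  have hlayer_lt : ∀ j < J,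
      layer j = increasingBlocks (2 ^ j * 2) W \ increasingBlocks (2 ^ j) W := fun j hj => by
    simp only [hlayer, if_pos hj]
  have hlayer_top : layer J = W \ increasingBlocks (2 ^ J) W := by
    simp only [hlayer, lt_irrefl, if_false]
  have hcard : #W = ∑ j ∈ range (J + 1), #(layer j) := by
    rw [sum_range_succ, sum_congr rfl fun j hj => by rw [hlayer_lt j (mem_range.1 hj)],
      ← card_increasingBlocks_two_pow, hlayer_top, add_comm,
      card_sdiff_add_card_eq_card (increasingBlocks_subset _ W)]
  have hlayer_sq : ∀ j ∈ range (J + 1), #(layer j) ^ 2 + 8 * #(blockIncreasingPairs (2 ^ j) W) ≤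
      4 * (#W + 2 * #(blockDecreasingPairs (2 ^ j) W)) := fun j hj => by
    rcases (Nat.lt_succ_iff.1 (mem_range.1 hj)).lt_or_eq with hlt | rfl
    · rw [hlayer_lt j hlt]
      exact hW.sq_card_add_le (sdiff_subset_sdiff (increasingBlocks_subset _ W) subset_rfl)
        (hW.card_image_block_le_four sdiff_subset)
    · rw [hlayer_top]
      refine hW.sq_card_add_le subset_rfl ((card_le_card (t := {0}) ?_).trans (by simp))
      exact image_subset_iff.2 fun w hw =>
        mem_singleton.2 (block_eq_zero (hJ (sdiff_subset hw)))
  have hcauchy : #W ^ 2 ≤ (J + 1) * ∑ j ∈ range (J + 1), #(layer j) ^ 2 := by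
    have := sq_sum_le_card_mul_sum_sq (s := range (J + 1)) (f := fun j => #(layer j))
    rwa [← hcard, card_range] at this
  calc _ ≤ (J + 1) * ∑ j ∈ range (J + 1),
          (#(layer j) ^ 2 + 8 * #(blockIncreasingPairs (2 ^ j) W)) := by
        rw [sum_add_distrib, mul_add]
        exact Nat.add_le_add_right hcauchy _
    _ ≤ _ := Nat.mul_le_mul_left _ (sum_le_sum hlayer_sq)

end IsReverseMatching

end IntersectionReverse

section MarcusTardos

variable {ι β : Type*} [DecidableEq β]

/-- The pairs of positions below `d` at which the sequences `s i` and `s j` have a common entry. -/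
def commonPositions (s : ι → ℕ → β) (d : ℕ) (i j : ι) : Finset (ℕ × ℕ) :=
  {w ∈ range d ×ˢ range d | s i w.1 = s j w.2}

/-- The pairs `x < y` of positions below `d` in a common interval of length `k`. -/
def blockPositions (d k : ℕ) : Finset (ℕ × ℕ) :=
  {p ∈ range d ×ˢ range d | p.1 < p.2 ∧ p.1 / k = p.2 / k}

/-- A family of sequences of length `d` with distinct entries, any two of which are
intersection-reverse. -/
structure IsIntersectionReverse (I : Finset ι) (s : ι → ℕ → β) (d : ℕ) : Prop where
  injOn : ∀ i ∈ I, Set.InjOn (s i) (range d)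
  reverses : ∀ i ∈ I, ∀ j ∈ I, i ≠ j → ReversesCyclicOrder (commonPositions s d i j)

variable {I : Finset ι} {s : ι → ℕ → β} {d : ℕ}

lemma mem_commonPositions {i j : ι} {w : ℕ × ℕ} : w ∈ commonPositions s d i j ↔
    (w.1 ∈ range d ∧ w.2 ∈ range d) ∧ s i w.1 = s j w.2 := by
  rw [commonPositions, mem_filter, mem_product]

lemma mem_blockPositions {d k : ℕ} {p : ℕ × ℕ} : p ∈ blockPositions d k ↔
    (p.1 ∈ range d ∧ p.2 ∈ range d) ∧ p.1 < p.2 ∧ p.1 / k = p.2 / k := by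
  rw [blockPositions, mem_filter, mem_product]

lemma card_blockPositions_le (d k : ℕ) : #(blockPositions d k) ≤ d ^ 2 :=
  (card_filter_le _ _).trans (by rw [card_product, card_range, sq])

lemma card_blockDecreasingPairs_commonPositions_le (s : ι → ℕ → β) (d k : ℕ) (i j : ι) :
    #(blockDecreasingPairs k (commonPositions s d i j)) ≤
      #{w ∈ blockPositions d k ×ˢ blockPositions d k |
        (s i w.1.1, s i w.1.2) = (s j w.2.2, s j w.2.1)} := by
  refine card_le_card_of_injOn
    (fun z => ((z.1.1, z.2.1), (z.2.2, z.1.2))) (fun z hz => ?_) fun z _ z' _ h => ?_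
  · simp only [mem_coe, blockDecreasingPairs, mem_filter, mem_product, mem_commonPositions, block,
      Prod.mk.injEq] at hz
    simp only [mem_coe, mem_filter, mem_product, mem_blockPositions, Prod.mk.injEq]
    tauto
  · simp only [Prod.mk.injEq] at h
    grind

lemma card_common_blockPositions_le (s : ι → ℕ → β) (d k : ℕ) (i j : ι) :
    #{w ∈ blockPositions d k ×ˢ blockPositions d k |
        (s i w.1.1, s i w.1.2) = (s j w.2.1, s j w.2.2)} ≤
      #(blockIncreasingPairs k (commonPositions s d i j)) := by
  refine card_le_card_of_injOn
    (fun w => ((w.1.1, w.2.1), (w.1.2, w.2.2))) (fun w hw => ?_) fun w _ w' _ h => ?_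
  · simp only [mem_coe, mem_filter, mem_product, mem_blockPositions, Prod.mk.injEq] at hw
    simp only [mem_coe, blockIncreasingPairs, mem_filter, mem_product, mem_commonPositions, block,
      Prod.mk.injEq]
    tauto
  · simp only [Prod.mk.injEq] at h
    grind

lemma collisions_swap_comp {α : Type*} (f : α → β × β) (S : Finset α) :
    collisions (fun x => (f x).swap) S = collisions f S := by
  simp only [collisions, Prod.swap_inj]

-- An increasing pair is a repetition of an ordered pair of entries, a decreasing one a pair of
-- entries occurring in both orders.
lemma sum_card_blockDecreasingPairs_le (hs : ∀ i ∈ I, Set.InjOn (s i) (range d)) (k : ℕ) :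
    ∑ p ∈ I.offDiag, #(blockDecreasingPairs k (commonPositions s d p.1 p.2)) ≤
      ∑ p ∈ I.offDiag, #(blockIncreasingPairs k (commonPositions s d p.1 p.2)) + #I * d ^ 2 := by
  set K := blockPositions d k
  set entries : ι → ℕ × ℕ → β × β := fun i p => (s i p.1, s i p.2)
  have hinj : ∀ i ∈ I, Set.InjOn (entries i) K := by
    rintro i hi p hp q hq hpq
    obtain ⟨hp₁, hp₂⟩ := (mem_blockPositions.1 hp).1
    obtain ⟨hq₁, hq₂⟩ := (mem_blockPositions.1 hq).1
    obtain ⟨h₁, h₂⟩ := Prod.mk.inj hpq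
    exact Prod.ext (hs i hi hp₁ hq₁ h₁) (hs i hi hp₂ hq₂ h₂)
  have hswap := two_mul_card_filter_eq_le (fun x : ι × ℕ × ℕ => entries x.1 x.2)
    (fun x => (entries x.1 x.2).swap) (I ×ˢ K) (I ×ˢ K)
  rw [collisions_swap_comp, ← two_mul] at hswap
  calc ∑ p ∈ I.offDiag, #(blockDecreasingPairs k (commonPositions s d p.1 p.2))
      ≤ ∑ p ∈ I.offDiag, #{w ∈ K ×ˢ K | entries p.1 w.1 = (entries p.2 w.2).swap} :=
        sum_le_sum fun p _ => card_blockDecreasingPairs_commonPositions_le s d k p.1 p.2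
    _ ≤ ∑ p ∈ I ×ˢ I, #{w ∈ K ×ˢ K | entries p.1 w.1 = (entries p.2 w.2).swap} :=
        sum_le_sum_of_subset fun p hp => by grind
    _ = #{z ∈ (I ×ˢ K) ×ˢ (I ×ˢ K) | entries z.1.1 z.1.2 = (entries z.2.1 z.2.2).swap} :=
        (card_filter_product_product I K I K
          fun x y => entries x.1 x.2 = (entries y.1 y.2).swap).symm
    _ ≤ #(collisions (fun x : ι × ℕ × ℕ => entries x.1 x.2) (I ×ˢ K)) :=
        Nat.le_of_mul_le_mul_left hswap two_pos
    _ ≤ ∑ p ∈ I.offDiag, #{w ∈ K ×ˢ K | entries p.1 w.1 = entries p.2 w.2} + #I * #K :=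
        card_collisions_product_le I K entries hinj
    _ ≤ _ := Nat.add_le_add
        (sum_le_sum fun p _ => card_common_blockPositions_le s d k p.1 p.2)
        (Nat.mul_le_mul_left _ (card_blockPositions_le d k))

lemma card_mul_sq_le_sum_card_commonPositions (hs : ∀ i ∈ I, Set.InjOn (s i) (range d))
    {B : Finset β} (hB : ∀ i ∈ I, ∀ x ∈ range d, s i x ∈ B) (hBI : #B ≤ #I) (hI : I.Nonempty) :
    #I * d ^ 2 ≤ ∑ p ∈ I.offDiag, #(commonPositions s d p.1 p.2) + #I * d := by
  have hle := card_collisions_product_le I (range d) s hs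
  have hsq := sq_card_le_card_mul_card_collisions (f := fun x : ι × ℕ => s x.1 x.2)
    (S := I ×ˢ range d) (U := B) fun x hx => hB _ (mem_product.1 hx).1 _ (mem_product.1 hx).2
  rw [card_product, card_range] at hsq
  rw [card_range] at hle
  refine Nat.le_of_mul_le_mul_left ?_ hI.card_pos
  calc #I * (#I * d ^ 2) = (#I * d) ^ 2 := by ring
    _ ≤ _ := hsq.trans (Nat.mul_le_mul hBI hle)

lemma IsIntersectionReverse.isReverseMatching (hs : IsIntersectionReverse I s d) {i j : ι}
    (hi : i ∈ I) (hj : j ∈ I) (hij : i ≠ j) : IsReverseMatching (commonPositions s d i j) where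
  fst_injOn v hv w hw h := by
    have hv := mem_commonPositions.1 hv
    have hw := mem_commonPositions.1 hw
    exact Prod.ext h (hs.injOn j hj hv.1.2 hw.1.2 (by rw [← hv.2, ← hw.2, h]))
  snd_injOn v hv w hw h := by
    have hv := mem_commonPositions.1 hv
    have hw := mem_commonPositions.1 hw
    exact Prod.ext (hs.injOn i hi hv.1.1 hw.1.1 (by rw [hv.2, hw.2, h])) h
  reverses := hs.reverses i hi j hj hij

lemma IsIntersectionReverse.sum_sq_card_commonPositions_le {J : ℕ}
    (hs : IsIntersectionReverse I s (2 ^ J)) :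
    ∑ p ∈ I.offDiag, #(commonPositions s (2 ^ J) p.1 p.2) ^ 2 ≤
      4 * (J + 1) ^ 2 *
        (∑ p ∈ I.offDiag, #(commonPositions s (2 ^ J) p.1 p.2) + 2 * #I * (2 ^ J) ^ 2) := by
  set W : ι × ι → Finset (ℕ × ℕ) := fun p => commonPositions s (2 ^ J) p.1 p.2
  have hpair : ∀ p ∈ I.offDiag, #(W p) ^ 2 +
      (J + 1) * ∑ j ∈ range (J + 1), 8 * #(blockIncreasingPairs (2 ^ j) (W p)) ≤
      (J + 1) * ∑ j ∈ range (J + 1), 4 * (#(W p) + 2 * #(blockDecreasingPairs (2 ^ j) (W p))) :=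
    fun p hp => by
      obtain ⟨hi, hj, hij⟩ := mem_offDiag.1 hp
      exact (hs.isReverseMatching hi hj hij).sq_card_add_sum_le (filter_subset _ _)
  have hscale : ∀ j ∈ range (J + 1),
      ∑ p ∈ I.offDiag, 4 * (#(W p) + 2 * #(blockDecreasingPairs (2 ^ j) (W p))) ≤
        ∑ p ∈ I.offDiag, 8 * #(blockIncreasingPairs (2 ^ j) (W p)) +
          4 * (∑ p ∈ I.offDiag, #(W p) + 2 * #I * (2 ^ J) ^ 2) := fun j _ => by
    have := sum_card_blockDecreasingPairs_le hs.injOn (2 ^ j)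
    simp only [← mul_sum, sum_add_distrib]
    linarith
  have hsum := sum_le_sum hpair
  rw [sum_add_distrib, ← mul_sum, ← mul_sum, sum_comm, sum_comm (s := I.offDiag)] at hsum
  have hscales := Nat.mul_le_mul_left (J + 1) (sum_le_sum hscale)
  rw [sum_add_distrib, sum_const, card_range, smul_eq_mul, mul_add] at hscales
  linarith

/-- The Marcus–Tardos theorem. -/
theorem IsIntersectionReverse.sq_two_pow_le {J : ℕ} (hJ : 1 ≤ J)
    (hs : IsIntersectionReverse I s (2 ^ J)) {B : Finset β}
    (hB : ∀ i ∈ I, ∀ x ∈ range (2 ^ J), s i x ∈ B) (hBI : #B ≤ #I) (hI : I.Nonempty) :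
    (2 ^ J) ^ 2 ≤ 40 * (J + 1) ^ 2 * #I := by
  have hsq := hs.sum_sq_card_commonPositions_le
  have hlower := card_mul_sq_le_sum_card_commonPositions hs.injOn hB hBI hI
  set d := 2 ^ J
  set N := #I
  set M := ∑ p ∈ I.offDiag, #(commonPositions s d p.1 p.2)
  have hd : 2 ≤ d := Nat.le_self_pow (by omega) 2
  have hN : 0 < N := hI.card_pos
  have hNM : N * d ^ 2 ≤ 2 * M := by nlinarith [Nat.mul_le_mul_left (N * d) hd]
  have hM : 0 < M := by
    have : 0 < N * d ^ 2 := by positivity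
    omega
  have hMle : M ≤ 20 * N ^ 2 * (J + 1) ^ 2 := by
    refine Nat.le_of_mul_le_mul_left ?_ hM
    calc M * M = M ^ 2 := (sq M).symm
      _ ≤ #I.offDiag * ∑ p ∈ I.offDiag, #(commonPositions s d p.1 p.2) ^ 2 :=
          sq_sum_le_card_mul_sum_sq
      _ ≤ N ^ 2 * (4 * (J + 1) ^ 2 * (M + 2 * N * d ^ 2)) :=
          Nat.mul_le_mul (by rw [offDiag_card, sq]; exact Nat.sub_le _ _) hsq
      _ ≤ N ^ 2 * (4 * (J + 1) ^ 2 * (5 * M)) := by gcongr; linarith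
      _ = M * (20 * N ^ 2 * (J + 1) ^ 2) := by ring
  refine Nat.le_of_mul_le_mul_left ?_ hN
  calc N * d ^ 2 ≤ 2 * M := hNM
    _ ≤ 2 * (20 * N ^ 2 * (J + 1) ^ 2) := Nat.mul_le_mul_left 2 hMle
    _ = N * (40 * (J + 1) ^ 2 * N) := by ring

end MarcusTardos

/-! ### Lenses -/

section Quadratics

/-- The quadratic polynomials `f 0 * t ^ 2 + f 1 * t + f 2`, carrying the Euclidean norm of their
coefficient vectors. -/
abbrev Quad := EuclideanSpace ℝ (Fin 3)

/-- The value of a quadratic polynomial at a point. -/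
def eval (f : Quad) (t : ℝ) : ℝ := f 0 * t ^ 2 + f 1 * t + f 2

instance : DecidableEq Quad := Classical.decEq _

lemma eval_add (f g : Quad) (t : ℝ) : eval (f + g) t = eval f t + eval g t := by
  simp [eval]; ring

lemma eval_sub (f g : Quad) (t : ℝ) : eval (f - g) t = eval f t - eval g t := by
  simp [eval]; ring

lemma eval_neg (f : Quad) (t : ℝ) : eval (-f) t = -eval f t := by
  simp [eval]; ring

lemma eval_smul (c : ℝ) (f : Quad) (t : ℝ) : eval (c • f) t = c * eval f t := by
  simp [eval]; ring

lemma continuous_eval (f : Quad) : Continuous (eval f) := by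
  unfold eval; fun_prop

lemma Quad.ext {f g : Quad} (h₀ : f 0 = g 0) (h₁ : f 1 = g 1) (h₂ : f 2 = g 2) : f = g := by
  ext i; fin_cases i <;> assumption

variable {D : Quad} {x₁ x₂ x₃ x₄ : ℝ}

lemma not_eval_pos_neg_pos_neg (h₁₂ : x₁ < x₂) (h₂₃ : x₂ < x₃) (h₃₄ : x₃ < x₄)
    (h₁ : 0 < eval D x₁) (h₂ : eval D x₂ < 0) (h₃ : 0 < eval D x₃) : ¬ eval D x₄ < 0 := by
  intro h₄
  rw [← sub_pos] at h₁₂ h₂₃ h₃₄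
  have h₁₃ : 0 < x₃ - x₁ := by linarith
  have h₁₄ : 0 < x₄ - x₁ := by linarith
  have h₂₄ : 0 < x₄ - x₂ := by linarith
  -- The third divided difference of a quadratic vanishes.
  have divided_difference : eval D x₁ * ((x₃ - x₂) * (x₄ - x₂) * (x₄ - x₃))
      + -eval D x₂ * ((x₃ - x₁) * (x₄ - x₁) * (x₄ - x₃))
      + eval D x₃ * ((x₂ - x₁) * (x₄ - x₁) * (x₄ - x₂))
      + -eval D x₄ * ((x₂ - x₁) * (x₃ - x₁) * (x₃ - x₂)) = 0 := by
    unfold eval; ring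
  rw [← neg_pos] at h₂ h₄
  refine divided_difference.not_gt ?_
  positivity

lemma not_eval_neg_pos_neg_pos (h₁₂ : x₁ < x₂) (h₂₃ : x₂ < x₃) (h₃₄ : x₃ < x₄)
    (h₁ : eval D x₁ < 0) (h₂ : 0 < eval D x₂) (h₃ : eval D x₃ < 0) : ¬ 0 < eval D x₄ := by
  intro h₄
  refine not_eval_pos_neg_pos_neg (D := -D) h₁₂ h₂₃ h₃₄ ?_ ?_ ?_ ?_ <;> rw [eval_neg] <;> linarith

lemma eval_eq_mul_of_eval_eq_zero (h₁₂ : x₁ ≠ x₂) (h₁ : eval D x₁ = 0) (h₂ : eval D x₂ = 0)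
    (x : ℝ) : eval D x = D 0 * ((x - x₁) * (x - x₂)) := by
  have slope : D 0 * (x₁ + x₂) + D 1 = 0 := by
    apply mul_left_cancel₀ (sub_ne_zero.2 h₁₂)
    unfold eval at h₁ h₂
    linear_combination h₁ - h₂
  unfold eval at *
  linear_combination h₁ + (x - x₁) * slope

lemma eq_zero_of_eval_eq_zero (h₁₂ : x₁ ≠ x₂) (h₁₃ : x₁ ≠ x₃) (h₂₃ : x₂ ≠ x₃)
    (h₁ : eval D x₁ = 0) (h₂ : eval D x₂ = 0) (h₃ : eval D x₃ = 0) : D = 0 := by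
  have factor := eval_eq_mul_of_eval_eq_zero h₁₂ h₁ h₂
  have leading : D 0 = 0 := by
    have := (factor x₃).symm.trans h₃
    simpa [sub_eq_zero, h₁₃.symm, h₂₃.symm] using this
  have eval_zero (x : ℝ) : eval D x = 0 := by rw [factor, leading, zero_mul]
  have h0 := eval_zero 0
  have h1 := eval_zero 1
  simp only [eval, leading] at h0 h1
  exact Quad.ext (by simpa using leading) (by simp; linarith) (by simp; linarith)

lemma eq_of_eval_eq {f g : Quad} (h₁₂ : x₁ ≠ x₂) (h₁₃ : x₁ ≠ x₃) (h₂₃ : x₂ ≠ x₃)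
    (h₁ : eval f x₁ = eval g x₁) (h₂ : eval f x₂ = eval g x₂) (h₃ : eval f x₃ = eval g x₃) :
    f = g := by
  apply sub_eq_zero.1
  apply eq_zero_of_eval_eq_zero h₁₂ h₁₃ h₂₃ <;> rw [eval_sub] <;> linarith

variable {E : Quad} {a b a' b' : ℝ}

lemma nested_of_eval (hDa : 0 < eval D a) (hDb : 0 < eval D b) (hDa' : eval D a' < 0)
    (hDb' : eval D b' < 0) (hEa : eval E a < 0) (hEb : 0 < eval E b) (hEa' : eval E a' < 0)
    (hEb' : 0 < eval E b') (hab : a < b) (hab' : a' < b') :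
    (a < a' ∧ b' < b) ∨ (a' < a ∧ b < b') := by
  have ne_of_sign {x y : ℝ} (hx : 0 < eval D x) (hy : eval D y < 0) : x ≠ y := by grind
  rcases (ne_of_sign hDa hDa').lt_or_gt with haa | haa <;>
    rcases (ne_of_sign hDb hDb').lt_or_gt with hbb | hbb
  · rcases (ne_of_sign hDb hDa').lt_or_gt with hba | hba
    · exact absurd hEb' (not_eval_neg_pos_neg_pos hab hba hab' hEa hEb hEa')
    · exact absurd hDb' (not_eval_pos_neg_pos_neg haa hba hbb hDa hDa' hDb)
  · exact .inl ⟨haa, hbb⟩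
  · exact .inr ⟨haa, hbb⟩
  · rcases (ne_of_sign hDa hDb').lt_or_gt with hab'' | hab''
    · exact absurd hDb (not_eval_neg_pos_neg_pos haa hab'' hbb hDa' hDa hDb')
    · exact absurd hEb (not_eval_neg_pos_neg_pos hab' hab'' hab hEa' hEb' hEa)

lemma lt_or_lt_of_eval (hDa : 0 < eval D a) (hDb : 0 < eval D b) (hDa' : eval D a' < 0)
    (hDb' : eval D b' < 0) (hEa : eval E a < 0) (hEb : 0 < eval E b) (hEa' : eval E a' < 0)
    (hEb' : 0 < eval E b') (hab : a < b) (hab' : b' < a') : b < b' ∨ a' < a := by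
  have ne_of_sign {x y : ℝ} (hx : 0 < eval D x) (hy : eval D y < 0) : x ≠ y := by grind
  by_contra! h
  have hbb : b' < b := h.1.lt_of_ne (ne_of_sign hDb hDb').symm
  have haa : a < a' := h.2.lt_of_ne (ne_of_sign hDa hDa')
  rcases (ne_of_sign hDa hDb').lt_or_gt with hab'' | hab'' <;>
    rcases (ne_of_sign hDb hDa').lt_or_gt with hba | hba
  · exact not_eval_pos_neg_pos_neg hab'' hbb hba hDa hDb' hDb hDa'
  · exact not_eval_neg_pos_neg_pos hab'' hab' hba hEa hEb' hEa' hEb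
  · exact not_eval_pos_neg_pos_neg hab'' hab hba hEb' hEa hEb hEa'
  · exact not_eval_neg_pos_neg_pos hab'' haa hba hDb' hDa hDa' hDb

end Quadratics

section Lenses

/-- A lens: an interval between two crossing points of an upper and a lower quadratic. -/
structure Lens where
  upper : Quad
  lower : Quad
  left : ℝ
  right : ℝ
  left_lt_right : left < right
  eval_left : eval upper left = eval lower left
  eval_right : eval upper right = eval lower right
  exists_lt : ∃ x, left < x ∧ x < right ∧ eval lower x < eval upper x

namespace Lens

instance : DecidableEq Lens := Classical.decEq _

variable {A B : Lens} {x : ℝ}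

/-- The midpoint of the interval of a lens. -/
def center (A : Lens) : ℝ := (A.left + A.right) / 2

lemma left_lt_center (A : Lens) : A.left < A.center := left_lt_add_div_two.2 A.left_lt_right

lemma center_lt_right (A : Lens) : A.center < A.right := add_div_two_lt_right.2 A.left_lt_right

lemma exists_eval_sub_eq_mul (A : Lens) :
    ∃ c > 0, ∀ x, eval A.upper x - eval A.lower x = c * ((x - A.left) * (A.right - x)) := by
  have factor := eval_eq_mul_of_eval_eq_zero (D := A.upper - A.lower) A.left_lt_right.ne
    (by rw [eval_sub, A.eval_left, sub_self]) (by rw [eval_sub, A.eval_right, sub_self])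
  obtain ⟨x, hleft, hright, hx⟩ := A.exists_lt
  have key (x : ℝ) : eval A.upper x - eval A.lower x =
      -(A.upper - A.lower) 0 * ((x - A.left) * (A.right - x)) := by
    rw [← eval_sub, factor]; ring
  refine ⟨-(A.upper - A.lower) 0, ?_, key⟩
  refine pos_of_mul_pos_left ((sub_pos.2 hx).trans_eq (key x)) ?_
  exact (mul_pos (sub_pos.2 hleft) (sub_pos.2 hright)).le

lemma lower_lt_upper (hleft : A.left < x) (hright : x < A.right) :
    eval A.lower x < eval A.upper x := by
  obtain ⟨c, hc, factor⟩ := A.exists_eval_sub_eq_mul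
  rw [← sub_pos, factor]
  exact mul_pos hc (mul_pos (sub_pos.2 hleft) (sub_pos.2 hright))

lemma upper_lt_lower (h : x < A.left ∨ A.right < x) : eval A.upper x < eval A.lower x := by
  obtain ⟨c, hc, factor⟩ := A.exists_eval_sub_eq_mul
  have := A.left_lt_right
  rw [← sub_neg, factor]
  refine mul_neg_of_pos_of_neg hc ?_
  rcases h with h | h
  · exact mul_neg_of_neg_of_pos (by linarith) (by linarith)
  · exact mul_neg_of_pos_of_neg (by linarith) (by linarith)

lemma lower_lt_upper_center (A : Lens) : eval A.lower A.center < eval A.upper A.center :=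
  lower_lt_upper A.left_lt_center A.center_lt_right

/-- The lenses `A` and `B` have a bounding curve in common. -/
def SharesCurve (A B : Lens) : Prop :=
  A.upper = B.upper ∨ A.upper = B.lower ∨ A.lower = B.upper ∨ A.lower = B.lower

end Lens

/-- A family of lenses in which any two lenses with a common curve have disjoint interiors. -/
def IsNonoverlapping (Λ : Finset Lens) : Prop :=
  ∀ A ∈ Λ, ∀ B ∈ Λ, A ≠ B → A.SharesCurve B → A.right ≤ B.left ∨ B.right ≤ A.left

namespace IsNonoverlapping

variable {Λ : Finset Lens} {A B C A' B' C' : Lens}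

lemma upper_lt_lower_center (hΛ : IsNonoverlapping Λ) (hA : A ∈ Λ) (hB : B ∈ Λ) (hAB : A ≠ B)
    (h : A.SharesCurve B) : eval B.upper A.center < eval B.lower A.center :=
  Lens.upper_lt_lower <| (hΛ A hA B hB hAB h).imp A.center_lt_right.trans_le fun h =>
    h.trans_lt A.left_lt_center

lemma eq_of_upper_eq_of_lower_eq (hΛ : IsNonoverlapping Λ) (hA : A ∈ Λ) (hB : B ∈ Λ)
    (hupper : A.upper = B.upper) (hlower : A.lower = B.lower) : A = B := by
  by_contra hAB
  have := hΛ.upper_lt_lower_center hA hB hAB (.inl hupper)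
  rw [← hupper, ← hlower] at this
  exact this.not_gt A.lower_lt_upper_center

lemma eq_of_upper_eq_of_center_eq (hΛ : IsNonoverlapping Λ) (hA : A ∈ Λ) (hB : B ∈ Λ)
    (hupper : A.upper = B.upper) (hcenter : A.center = B.center) : A = B := by
  by_contra hAB
  have := hΛ.upper_lt_lower_center hA hB hAB (.inl hupper)
  rw [hcenter] at this
  exact this.not_gt B.lower_lt_upper_center

lemma eval_center_signs (hΛ : IsNonoverlapping Λ) (hA : A ∈ Λ) (hB : B ∈ Λ) (hA' : A' ∈ Λ)
    (hAB : A.upper = B.upper) (hAA' : A.lower = A'.lower) (hupper : A.upper ≠ A'.upper)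
    (hlower : A.lower ≠ B.lower) :
    0 < eval (A.upper - A'.upper) A.center ∧ eval (A.lower - B.lower) A.center < 0 := by
  have hA_ne_B : A ≠ B := fun h => hlower (by rw [h])
  have hA_ne_A' : A ≠ A' := fun h => hupper (by rw [h])
  have inside := A.lower_lt_upper_center
  have outside_B := hΛ.upper_lt_lower_center hA hB hA_ne_B (.inl hAB)
  have outside_A' := hΛ.upper_lt_lower_center hA hA' hA_ne_A' (.inr (.inr (.inr hAA')))
  rw [eval_sub, eval_sub]
  rw [← hAB] at outside_B
  rw [← hAA'] at outside_A'
  constructor <;> linarith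

lemma centers_order (hΛ : IsNonoverlapping Λ) (hA : A ∈ Λ) (hB : B ∈ Λ) (hA' : A' ∈ Λ)
    (hB' : B' ∈ Λ) (hAB : A.upper = B.upper) (hAB' : A'.upper = B'.upper)
    (hAA' : A.lower = A'.lower) (hBB' : B.lower = B'.lower) (hupper : A.upper ≠ A'.upper)
    (hlower : A.lower ≠ B.lower) (hlt : A.center < B.center) :
    (A'.center < B'.center → (A.center < A'.center ∧ B'.center < B.center) ∨
      (A'.center < A.center ∧ B.center < B'.center)) ∧
    (B'.center < A'.center → B.center < B'.center ∨ A'.center < A.center) := by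
  obtain ⟨hDa, hEa⟩ := hΛ.eval_center_signs hA hB hA' hAB hAA' hupper hlower
  obtain ⟨hDb, hEb⟩ := hΛ.eval_center_signs hB hA hB' hAB.symm hBB'
    (by rwa [← hAB, ← hAB']) hlower.symm
  obtain ⟨hDa', hEa'⟩ := hΛ.eval_center_signs hA' hB' hA hAB' hAA'.symm hupper.symm
    (by rwa [← hAA', ← hBB'])
  obtain ⟨hDb', hEb'⟩ := hΛ.eval_center_signs hB' hA' hB hAB'.symm hBB'.symm
    (by rw [← hAB, ← hAB']; exact hupper.symm) (by rw [← hAA', ← hBB']; exact hlower.symm)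
  simp only [← hAB, ← hAB', ← hAA', ← hBB', eval_sub] at *
  have signs : 0 < eval (A.upper - A'.upper) A.center ∧ 0 < eval (A.upper - A'.upper) B.center ∧
      eval (A.upper - A'.upper) A'.center < 0 ∧ eval (A.upper - A'.upper) B'.center < 0 ∧
      eval (A.lower - B.lower) A.center < 0 ∧ 0 < eval (A.lower - B.lower) B.center ∧
      eval (A.lower - B.lower) A'.center < 0 ∧ 0 < eval (A.lower - B.lower) B'.center := by
    simp only [eval_sub]; grind
  obtain ⟨hDa, hDb, hDa', hDb', hEa, hEb, hEa', hEb'⟩ := signs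
  exact ⟨nested_of_eval hDa hDb hDa' hDb' hEa hEb hEa' hEb' hlt,
    lt_or_lt_of_eval hDa hDb hDa' hDb' hEa hEb hEa' hEb' hlt⟩

lemma not_same_cyclic_order (hΛ : IsNonoverlapping Λ) (hA : A ∈ Λ) (hB : B ∈ Λ) (hC : C ∈ Λ)
    (hA' : A' ∈ Λ) (hB' : B' ∈ Λ) (hC' : C' ∈ Λ) (hAB : A.upper = B.upper)
    (hBC : B.upper = C.upper) (hAB' : A'.upper = B'.upper) (hBC' : B'.upper = C'.upper)
    (hAA' : A.lower = A'.lower) (hBB' : B.lower = B'.lower) (hCC' : C.lower = C'.lower)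
    (hupper : A.upper ≠ A'.upper) (hlowerAB : A.lower ≠ B.lower) (hlowerBC : B.lower ≠ C.lower)
    (hlowerAC : A.lower ≠ C.lower) (hltAB : A.center < B.center) (hltBC : B.center < C.center) :
    ¬ (A'.center < B'.center ∧ B'.center < C'.center) ∧
      ¬ (B'.center < C'.center ∧ C'.center < A'.center) ∧
      ¬ (C'.center < A'.center ∧ A'.center < B'.center) := by
  have orderAB := hΛ.centers_order hA hB hA' hB' hAB hAB' hAA' hBB' hupper hlowerAB hltAB
  have orderBC := hΛ.centers_order hB hC hB' hC' hBC hBC' hBB' hCC' (by rwa [← hAB, ← hAB'])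
    hlowerBC hltBC
  have orderAC := hΛ.centers_order hA hC hA' hC' (hAB.trans hBC) (hAB'.trans hBC') hAA' hCC'
    hupper hlowerAC (hltAB.trans hltBC)
  refine ⟨?_, ?_, ?_⟩ <;> grind

end IsNonoverlapping

end Lenses

section SortedPieces

lemma exists_strictMono_enumeration {α : Type*} [Nonempty α] (S : Finset α) {g : α → ℝ}
    (hg : Set.InjOn g S) :
    ∃ e : ℕ → α, (∀ i < #S, e i ∈ S) ∧ ∀ i j, i < j → j < #S → g (e i) < g (e j) := by
  have hcard : #(S.image g) = #S := card_image_of_injOn hg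
  set values := (S.image g).orderEmbOfFin hcard
  have hvalues i : ∃ a ∈ S, g a = values i := mem_image.1 (orderEmbOfFin_mem _ hcard i)
  choose q hqS hq using hvalues
  refine ⟨fun i => if h : i < #S then q ⟨i, h⟩ else Classical.arbitrary α, fun i hi => ?_,
    fun i j hij hj => ?_⟩
  · simp only [hi, dif_pos, hqS]
  · simp only [hij.trans hj, hj, dif_pos, hq]
    exact values.strictMono hij

variable {α κ : Type*}

lemma card_le_card_sigma_range_div [DecidableEq κ] {Λ : Finset α} {F : Finset κ}
    {u : α → κ} {d : ℕ} (hu : ∀ A ∈ Λ, u A ∈ F) (hd : 0 < d) (h : 2 * #F * d ≤ #Λ) :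
    #F ≤ #(F.sigma fun a => range (#{A ∈ Λ | u A = a} / d)) := by
  simp only [card_sigma, card_range]
  have hΛ : #Λ ≤ (∑ a ∈ F, #{A ∈ Λ | u A = a} / d) * d + #F * d := by
    rw [card_eq_sum_card_fiberwise hu, sum_mul, ← smul_eq_mul (#F), ← sum_const,
      ← sum_add_distrib]
    exact sum_le_sum fun a _ => (Nat.lt_div_mul_add hd).le
  refine Nat.le_of_mul_le_mul_right (?_ : _ * d ≤ _ * d) hd
  linarith

lemma exists_increasing_pieces {Λ : Finset α} {F : Finset κ} {u : α → κ} {c : α → ℝ} {d : ℕ}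
    (hu : ∀ A ∈ Λ, u A ∈ F) (hc : ∀ A ∈ Λ, ∀ B ∈ Λ, u A = u B → c A = c B → A = B)
    (hΛ : Λ.Nonempty) (hd : 0 < d) (h : 2 * #F * d ≤ #Λ) :
    ∃ (I : Finset (Σ _ : κ, ℕ)) (e : (Σ _ : κ, ℕ) → ℕ → α), #I = #F ∧
      (∀ p ∈ I, ∀ x < d, e p x ∈ Λ ∧ u (e p x) = p.1) ∧
      (∀ p ∈ I, ∀ x < d, ∀ y < d, x < y → c (e p x) < c (e p y)) ∧
      (∀ p ∈ I, ∀ q ∈ I, ∀ x < d, ∀ y < d, e p x = e q y → p = q ∧ x = y) := by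
  classical
  have : Nonempty α := ⟨hΛ.choose⟩
  obtain ⟨I, hI, hcard⟩ := exists_subset_card_eq (card_le_card_sigma_range_div hu hd h)
  have hinj (a : κ) : Set.InjOn c ({A ∈ Λ | u A = a} : Finset α) := by
    intro A hA B hB
    rw [mem_coe, mem_filter] at hA hB
    exact hc A hA.1 B hB.1 (hA.2.trans hB.2.symm)
  choose enum hmem hlt using fun a => exists_strictMono_enumeration _ (hinj a)
  have hindex {p : Σ _ : κ, ℕ} (hp : p ∈ I) {x : ℕ} (hx : x < d) :
      p.2 * d + x < #{A ∈ Λ | u A = p.1} := by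
    have hp' := (Nat.le_div_iff_mul_le hd).1 (mem_range.1 (mem_sigma.1 (hI hp)).2)
    linarith [Nat.succ_mul p.2 d]
  have henum {p : Σ _ : κ, ℕ} (hp : p ∈ I) {x : ℕ} (hx : x < d) :
      enum p.1 (p.2 * d + x) ∈ Λ ∧ u (enum p.1 (p.2 * d + x)) = p.1 :=
    mem_filter.1 (hmem _ _ (hindex hp hx))
  refine ⟨I, fun p x => enum p.1 (p.2 * d + x), hcard, fun p hp x hx => henum hp hx,
    fun p hp x _ y hy hxy => hlt _ _ _ (by omega) (hindex hp hy),
    fun p hp q hq x hx y hy (hpq : enum p.1 _ = enum q.1 _) => ?_⟩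
  have hfst : p.1 = q.1 := by rw [← (henum hp hx).2, ← (henum hq hy).2, hpq]
  obtain ⟨a, m⟩ := p
  obtain ⟨b, n⟩ := q
  obtain rfl : a = b := hfst
  have hposition : m * d + x = n * d + y := by
    by_contra hne
    rcases lt_or_gt_of_ne hne with hlt' | hlt'
    · exact (hlt _ _ _ hlt' (hindex hq hy)).ne (congrArg c hpq)
    · exact (hlt _ _ _ hlt' (hindex hp hx)).ne (congrArg c hpq.symm)
  have hmn : m = n := by
    have := congrArg (· / d) hposition
    simpa [Nat.mul_add_div, mul_comm _ d, hd, Nat.div_eq_of_lt hx, Nat.div_eq_of_lt hy] using this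
  subst hmn
  exact ⟨rfl, by omega⟩

end SortedPieces

namespace IsNonoverlapping

variable {F : Finset Quad} {Λ : Finset Lens} {J : ℕ}

lemma isIntersectionReverse_lower {κ : Type*} {I : Finset κ} {e : κ → ℕ → Lens} {d : ℕ}
    (hΛ : IsNonoverlapping Λ) {upper : κ → Quad}
    (he : ∀ p ∈ I, ∀ x < d, e p x ∈ Λ ∧ (e p x).upper = upper p)
    (hlt : ∀ p ∈ I, ∀ x < d, ∀ y < d, x < y → (e p x).center < (e p y).center)
    (hinj : ∀ p ∈ I, ∀ q ∈ I, ∀ x < d, ∀ y < d, e p x = e q y → p = q ∧ x = y) :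
    IsIntersectionReverse I (fun p x => (e p x).lower) d := by
  have eq_of_lower {p q : κ} (hp : p ∈ I) (hq : q ∈ I) (hpq : upper p = upper q) {x y : ℕ}
      (hx : x < d) (hy : y < d) (h : (e p x).lower = (e q y).lower) : p = q ∧ x = y := by
    refine hinj p hp q hq x hx y hy (hΛ.eq_of_upper_eq_of_lower_eq (he p hp x hx).1
      (he q hq y hy).1 ?_ h)
    rw [(he p hp x hx).2, (he q hq y hy).2, hpq]
  refine ⟨fun p hp x hx y hy h => ?_, fun p hp q hq hpq => ?_⟩
  · rw [coe_range, Set.mem_Iio] at hx hy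
    exact (eq_of_lower hp hp rfl hx hy h).2
  rintro ⟨x₁, y₁⟩ h₁ ⟨x₂, y₂⟩ h₂ ⟨x₃, y₃⟩ h₃ (h₁₂ : x₁ < x₂) (h₂₃ : x₂ < x₃)
  simp only [mem_commonPositions, mem_range] at h₁ h₂ h₃
  obtain ⟨⟨hx₁, hy₁⟩, e₁⟩ := h₁
  obtain ⟨⟨hx₂, hy₂⟩, e₂⟩ := h₂
  obtain ⟨⟨hx₃, hy₃⟩, e₃⟩ := h₃
  have hupper : upper p ≠ upper q := fun h => hpq (eq_of_lower hp hq h hx₁ hy₁ e₁).1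
  have lower_ne {x y : ℕ} (hx : x < d) (hy : y < d) (hxy : x ≠ y) :
      (e p x).lower ≠ (e p y).lower := fun h => hxy (eq_of_lower hp hp rfl hx hy h).2
  obtain ⟨m₁, u₁⟩ := he p hp x₁ hx₁
  obtain ⟨m₂, u₂⟩ := he p hp x₂ hx₂
  obtain ⟨m₃, u₃⟩ := he p hp x₃ hx₃
  obtain ⟨m₁', u₁'⟩ := he q hq y₁ hy₁
  obtain ⟨m₂', u₂'⟩ := he q hq y₂ hy₂
  obtain ⟨m₃', u₃'⟩ := he q hq y₃ hy₃
  have order := hΛ.not_same_cyclic_order m₁ m₂ m₃ m₁' m₂' m₃' (u₁.trans u₂.symm)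
    (u₂.trans u₃.symm) (u₁'.trans u₂'.symm) (u₂'.trans u₃'.symm) e₁ e₂ e₃
    (by rwa [u₁, u₁']) (lower_ne hx₁ hx₂ h₁₂.ne) (lower_ne hx₂ hx₃ h₂₃.ne)
    (lower_ne hx₁ hx₃ (h₁₂.trans h₂₃).ne) (hlt p hp _ hx₁ _ hx₂ h₁₂) (hlt p hp _ hx₂ _ hx₃ h₂₃)
  have hlt' {y z : ℕ} (hy : y < d) (hz : z < d) : y < z → (e q y).center < (e q z).center :=
    hlt q hq y hy z hz
  exact ⟨fun h => order.1 (h.imp (hlt' hy₁ hy₂) (hlt' hy₂ hy₃)),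
    fun h => order.2.1 (h.imp (hlt' hy₂ hy₃) (hlt' hy₃ hy₁)),
    fun h => order.2.2 (h.imp (hlt' hy₃ hy₁) (hlt' hy₁ hy₂))⟩

lemma sq_two_pow_le (hΛ : IsNonoverlapping Λ) (hupper : ∀ A ∈ Λ, A.upper ∈ F)
    (hlower : ∀ A ∈ Λ, A.lower ∈ F) (hF : F.Nonempty) (hJ : 1 ≤ J)
    (hcard : 2 * #F * 2 ^ J ≤ #Λ) : (2 ^ J) ^ 2 ≤ 40 * (J + 1) ^ 2 * #F ∧ 2 ^ J ≤ #F := by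
  have hFpos := hF.card_pos
  have hΛ_nonempty : Λ.Nonempty := card_pos.1 (lt_of_lt_of_le (by positivity) hcard)
  obtain ⟨I, e, hIF, he, hlt, hinj⟩ := exists_increasing_pieces (c := Lens.center) hupper
    (fun _ hA _ hB => hΛ.eq_of_upper_eq_of_center_eq hA hB) hΛ_nonempty (by positivity) hcard
  have hs := hΛ.isIntersectionReverse_lower he hlt hinj
  have hIne : I.Nonempty := card_pos.1 (by rwa [hIF])
  have hB : ∀ p ∈ I, ∀ x ∈ range (2 ^ J), (e p x).lower ∈ F := fun p hp x hx =>
    hlower _ (he p hp x (mem_range.1 hx)).1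
  constructor
  · simpa only [hIF] using hs.sq_two_pow_le hJ hB hIF.ge hIne
  · obtain ⟨p, hp⟩ := hIne
    simpa only [card_range] using card_le_card_of_injOn _ (hB p hp) (hs.injOn p hp)

lemma card_le (hΛ : IsNonoverlapping Λ) (hupper : ∀ A ∈ Λ, A.upper ∈ F)
    (hlower : ∀ A ∈ Λ, A.lower ∈ F) :
    (#Λ : ℝ) ≤ 60 * (#F * √(#F) * (1 + Real.log #F)) := by
  rcases F.eq_empty_or_nonempty with rfl | hF
  · have : Λ = ∅ := eq_empty_of_forall_notMem fun A hA => notMem_empty _ (hupper A hA)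
    simp [this]
  set n := #F
  have hn : 1 ≤ n := hF.card_pos
  have hn' : (1 : ℝ) ≤ n := mod_cast hn
  have hlog : 0 ≤ Real.log n := Real.log_nonneg hn'
  rcases lt_or_ge #Λ (4 * n) with hfew | hmany
  · have hfew' : (#Λ : ℝ) ≤ 4 * n := mod_cast hfew.le
    have : (n : ℝ) * 1 * 1 ≤ n * √n * (1 + Real.log n) := by
      gcongr
      · exact Real.one_le_sqrt.2 hn'
      · linarith
    linarith
  -- The largest `J` for which the lenses can be cut into `n` pieces of length `2 ^ J`.
  set q := #Λ / (2 * n)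
  set J := Nat.log 2 q
  have hq : 2 ≤ q := (Nat.le_div_iff_mul_le (by omega)).2 (by omega)
  have hJ : 1 ≤ J := Nat.log_pos one_lt_two hq
  obtain ⟨hsq, hle⟩ := hΛ.sq_two_pow_le hupper hlower hF hJ <|
    (Nat.mul_le_mul_left _ (Nat.pow_log_le_self 2 (by omega))).trans (Nat.mul_div_le _ _)
  have hΛJ : #Λ ≤ 2 * n * 2 ^ (J + 1) :=
    (Nat.lt_mul_div_succ _ (by omega)).le.trans
      (Nat.mul_le_mul_left _ (Nat.lt_pow_succ_log_self one_lt_two q))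
  have hJlog : (J : ℝ) * Real.log 2 ≤ Real.log n := by
    rw [← Real.log_pow]
    exact Real.log_le_log (by positivity) (mod_cast hle)
  have hJ_le : (J : ℝ) + 1 ≤ 2 * (1 + Real.log n) := by nlinarith [Real.log_two_gt_d9]
  have hpow : (2 : ℝ) ^ J ≤ 7 * (J + 1) * √n := by
    have hsq' : ((2 : ℝ) ^ J) ^ 2 ≤ 40 * (J + 1) ^ 2 * n := mod_cast hsq
    apply le_of_sq_le_sq _ (by positivity)
    rw [mul_pow, mul_pow, Real.sq_sqrt (by positivity)]
    nlinarith [show 0 ≤ ((J : ℝ) + 1) ^ 2 * n by positivity]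
  calc (#Λ : ℝ) ≤ 2 * n * 2 ^ (J + 1) := mod_cast hΛJ
    _ = 4 * n * 2 ^ J := by ring
    _ ≤ 4 * n * (7 * (2 * (1 + Real.log n)) * √n) := by
      gcongr
      exact hpow.trans (by gcongr)
    _ = 56 * (n * √n * (1 + Real.log n)) := by ring
    _ ≤ 60 * (n * √n * (1 + Real.log n)) := by gcongr; norm_num

end IsNonoverlapping

/-! ### Planar drawings by arcs of graphs -/

section PlanarArcs

/-- An arc of a drawing: the part of the graph of a curve between two vertices. -/
structure Arc (κ : Type*) where
  curve : κ
  source : ℝ × ℝ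
  target : ℝ × ℝ

variable {κ : Type*}

instance : DecidableEq (Arc κ) := Classical.decEq _

/-- The open interval over which an arc lies. -/
def Arc.span (e : Arc κ) : Set ℝ := Set.Ioo e.source.1 e.target.1

/-- The arcs `E` are pieces of the graphs of the functions `φ f` that join vertices in `V` and pass
through no vertex in between. The height `η v` is `v.2`, or `-v.2` for the reflected drawing. -/
structure IsArcSystem (φ : κ → ℝ → ℝ) (η : ℝ × ℝ → ℝ) (V : Finset (ℝ × ℝ))
    (E : Finset (Arc κ)) : Prop where
  eq_of_height_eq : ∀ v w : ℝ × ℝ, v.1 = w.1 → η v = η w → v = w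
  source_mem : ∀ e ∈ E, e.source ∈ V
  target_mem : ∀ e ∈ E, e.target ∈ V
  source_lt_target : ∀ e ∈ E, e.source.1 < e.target.1
  apply_source : ∀ e ∈ E, φ e.curve e.source.1 = η e.source
  apply_target : ∀ e ∈ E, φ e.curve e.target.1 = η e.target
  avoids : ∀ e ∈ E, ∀ v ∈ V, v.1 ∈ e.span → φ e.curve v.1 ≠ η v

/-- Two arcs of different curves meet above a common interior point of their spans. -/
def Arc.Crosses (φ : κ → ℝ → ℝ) (e e' : Arc κ) : Prop :=
  e.curve ≠ e'.curve ∧ ∃ x, x ∈ e.span ∧ x ∈ e'.span ∧ φ e.curve x = φ e'.curve x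

/-- An arc system without crossings in which two arcs with the same source do not meet again. -/
structure IsPlanarArcSystem (φ : κ → ℝ → ℝ) (η : ℝ × ℝ → ℝ) (V : Finset (ℝ × ℝ))
    (E : Finset (Arc κ)) : Prop extends IsArcSystem φ η V E where
  continuous : ∀ f, Continuous (φ f)
  not_crosses : ∀ e ∈ E, ∀ e' ∈ E, ¬ e.Crosses φ e'
  ne_of_source_eq : ∀ e ∈ E, ∀ e' ∈ E, e.curve ≠ e'.curve → e.source = e'.source →
    ∀ x, e.source.1 < x → x ≤ e.target.1 → x ≤ e'.target.1 → φ e.curve x ≠ φ e'.curve x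

variable {φ : κ → ℝ → ℝ} {η : ℝ × ℝ → ℝ} {V : Finset (ℝ × ℝ)} {E : Finset (Arc κ)} {e e' g : Arc κ}
  {x : ℝ}

lemma IsArcSystem.eq_of_mem_span (hE : IsArcSystem φ η V E) (he : e ∈ E) (he' : e' ∈ E)
    (hcurve : e.curve = e'.curve) (hx : x ∈ e.span) (hx' : x ∈ e'.span) : e = e' := by
  have source_eq : e.source.1 = e'.source.1 := by
    rcases lt_trichotomy e.source.1 e'.source.1 with h | h | h
    · exact absurd (by rw [hcurve, hE.apply_source e' he'])
        (hE.avoids e he _ (hE.source_mem e' he') ⟨h, hx'.1.trans hx.2⟩)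
    · exact h
    · exact absurd (by rw [← hcurve, hE.apply_source e he])
        (hE.avoids e' he' _ (hE.source_mem e he) ⟨h, hx.1.trans hx'.2⟩)
  have target_eq : e.target.1 = e'.target.1 := by
    rcases lt_trichotomy e.target.1 e'.target.1 with h | h | h
    · exact absurd (by rw [← hcurve, hE.apply_target e he])
        (hE.avoids e' he' _ (hE.target_mem e he) ⟨hx'.1.trans hx.2, h⟩)
    · exact h
    · exact absurd (by rw [hcurve, hE.apply_target e' he'])
        (hE.avoids e he _ (hE.target_mem e' he') ⟨hx.1.trans hx'.2, h⟩)
  have hsource := hE.eq_of_height_eq _ _ source_eq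
    (by rw [← hE.apply_source e he, ← hE.apply_source e' he', hcurve, source_eq])
  have htarget := hE.eq_of_height_eq _ _ target_eq
    (by rw [← hE.apply_target e he, ← hE.apply_target e' he', hcurve, target_eq])
  cases e; cases e'; simp_all

lemma IsArcSystem.mono (hE : IsArcSystem φ η V E) {V' : Finset (ℝ × ℝ)} {E' : Finset (Arc κ)}
    (hV : V' ⊆ V) (hE' : E' ⊆ E) (hmem : ∀ e ∈ E', e.source ∈ V' ∧ e.target ∈ V') :
    IsArcSystem φ η V' E' where
  eq_of_height_eq := hE.eq_of_height_eq
  source_mem e he := (hmem e he).1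
  target_mem e he := (hmem e he).2
  source_lt_target e he := hE.source_lt_target e (hE' he)
  apply_source e he := hE.apply_source e (hE' he)
  apply_target e he := hE.apply_target e (hE' he)
  avoids e he v hv := hE.avoids e (hE' he) v (hV hv)

namespace IsPlanarArcSystem

lemma neg (hE : IsPlanarArcSystem φ η V E) :
    IsPlanarArcSystem (fun f x => -φ f x) (fun v => -η v) V E where
  eq_of_height_eq v w h h' := hE.eq_of_height_eq v w h (neg_injective h')
  source_mem := hE.source_mem
  target_mem := hE.target_mem
  source_lt_target := hE.source_lt_target
  apply_source e he := congrArg _ (hE.apply_source e he)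
  apply_target e he := congrArg _ (hE.apply_target e he)
  avoids e he v hv hx h := hE.avoids e he v hv hx (neg_injective h)
  continuous f := (hE.continuous f).neg
  not_crosses e he e' he' := fun ⟨hne, x, hx, hx', h⟩ =>
    hE.not_crosses e he e' he' ⟨hne, x, hx, hx', neg_injective h⟩
  ne_of_source_eq e he e' he' hne hs x h h' h'' heq :=
    hE.ne_of_source_eq e he e' he' hne hs x h h' h'' (neg_injective heq)

lemma eq_of_apply_eq (hE : IsPlanarArcSystem φ η V E) (he : e ∈ E) (he' : e' ∈ E)
    (hx : x ∈ e.span) (hx' : x ∈ e'.span) (h : φ e.curve x = φ e'.curve x) : e = e' := by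
  by_cases hcurve : e.curve = e'.curve
  · exact hE.eq_of_mem_span he he' hcurve hx hx'
  · exact absurd ⟨hcurve, x, hx, hx', h⟩ (hE.not_crosses e he e' he')

end IsPlanarArcSystem

lemma lt_of_forall_ne {u v : ℝ → ℝ} (hu : Continuous u) (hv : Continuous v) {s : Set ℝ}
    (hs : s.OrdConnected) (hne : ∀ t ∈ s, u t ≠ v t) {x y : ℝ} (hx : x ∈ s) (hy : y ∈ s)
    (h : u x < v x) : u y < v y := by
  by_contra! hle
  obtain ⟨t, ht, heq⟩ :=
    hs.isPreconnected.intermediate_value₂ hx hy hu.continuousOn hv.continuousOn h.le hle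
  exact hne t ht heq

lemma le_left_of_forall_ne {u v : ℝ → ℝ} (hu : Continuous u) (hv : Continuous v) {x y : ℝ}
    (hxy : x ≤ y) (hne : ∀ t ∈ Set.Ioo x y, u t ≠ v t) (h : u y < v y) : u x ≤ v x := by
  by_contra! hlt
  refine hlt.not_gt (lt_of_forall_ne hu hv Set.ordConnected_Icc (fun t ht => ?_)
    (Set.right_mem_Icc.2 hxy) (Set.left_mem_Icc.2 hxy) h)
  rcases ht.1.eq_or_lt with rfl | hxt
  · exact hlt.ne'
  rcases ht.2.eq_or_lt with rfl | hty
  · exact h.ne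
  exact hne t ⟨hxt, hty⟩

/-- The arc `g` passes above the vertex `z` or ends above it. -/
def PassesAbove (φ : κ → ℝ → ℝ) (η : ℝ × ℝ → ℝ) (E : Finset (Arc κ)) (z : ℝ × ℝ) (g : Arc κ) :
    Prop :=
  g ∈ E ∧ g.source.1 < z.1 ∧ z.1 ≤ g.target.1 ∧ η z < φ g.curve z.1

/-- Among the arcs above `z`, the arc `e` is the lowest one at distance `h` to the left of `z`. -/
def IsLowestAbove (φ : κ → ℝ → ℝ) (η : ℝ × ℝ → ℝ) (E : Finset (Arc κ)) (h : ℝ) (z : ℝ × ℝ)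
    (e : Arc κ) : Prop :=
  PassesAbove φ η E z e ∧ ∀ g, PassesAbove φ η E z g → φ e.curve (z.1 - h) ≤ φ g.curve (z.1 - h)

/-- The height at which an arc leaves its source, measured at distance `h` to the right. -/
def Arc.exitHeight (φ : κ → ℝ → ℝ) (h : ℝ) (e : Arc κ) : ℝ := φ e.curve (e.source.1 + h)

/-- The arc `e'` is the next one above `e` among those leaving the source of `e`. -/
def IsNextAbove (φ : κ → ℝ → ℝ) (E : Finset (Arc κ)) (h : ℝ) (e e' : Arc κ) : Prop :=
  e' ∈ E ∧ e'.source = e.source ∧ e.exitHeight φ h < e'.exitHeight φ h ∧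
    ∀ g ∈ E, g.source = e.source → e.exitHeight φ h < g.exitHeight φ h →
      e'.exitHeight φ h ≤ g.exitHeight φ h

/-- The abscissas of `V` are at distance at least `2 * h` from each other. -/
def IsSeparated (V : Finset (ℝ × ℝ)) (h : ℝ) : Prop :=
  0 < h ∧ ∀ v ∈ V, ∀ w ∈ V, v.1 < w.1 → v.1 + 2 * h ≤ w.1

lemma exists_isSeparated (V : Finset (ℝ × ℝ)) : ∃ h, IsSeparated V h := by
  set S := {z ∈ V ×ˢ V | z.1.1 < z.2.1}
  rcases S.eq_empty_or_nonempty with hS | hS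
  · exact ⟨1, one_pos, fun v hv w hw hvw =>
      absurd (mem_filter.2 ⟨mk_mem_product hv hw, hvw⟩) (eq_empty_iff_forall_notMem.1 hS (v, w))⟩
  · obtain ⟨z, hz, hmin⟩ := exists_min_image S (fun z => z.2.1 - z.1.1) hS
    have hz' := (mem_filter.1 hz).2
    refine ⟨(z.2.1 - z.1.1) / 2, by linarith, fun v hv w hw hvw => ?_⟩
    have : z.2.1 - z.1.1 ≤ w.1 - v.1 :=
      hmin (v, w) (mem_filter.2 ⟨mk_mem_product hv hw, hvw⟩)
    linarith

namespace IsPlanarArcSystem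

variable {h : ℝ} {z : ℝ × ℝ}

lemma lt_of_exitHeight_lt (hE : IsPlanarArcSystem φ η V E) (hV : IsSeparated V h) (he : e ∈ E)
    (he' : e' ∈ E) (hsource : e'.source = e.source) (hexit : e.exitHeight φ h < e'.exitHeight φ h)
    (htarget : e.target.1 ≤ e'.target.1) (hx : e.source.1 < x) (hx' : x ≤ e.target.1) :
    φ e.curve x < φ e'.curve x := by
  obtain ⟨hh, hV⟩ := hV
  simp only [Arc.exitHeight, hsource] at hexit
  have hspan := hV _ (hE.source_mem e he) _ (hE.target_mem e he) (hE.source_lt_target e he)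
  have hcurve : e.curve ≠ e'.curve := fun h => by simp [h] at hexit
  exact lt_of_forall_ne (s := Set.Ioc e.source.1 e.target.1) (hE.continuous _) (hE.continuous _)
    Set.ordConnected_Ioc
    (fun t ht => hE.ne_of_source_eq e he e' he' hcurve hsource.symm t ht.1 ht.2
      (ht.2.trans htarget)) ⟨by linarith, by linarith⟩ ⟨hx, hx'⟩ hexit

/-- An arc `g` that separates `z` from `e'` stays between `e` and `e'` as it is followed to the
left. -/
lemma between (hE : IsPlanarArcSystem φ η V E) (he : e ∈ E) (he' : e' ∈ E) (hg : g ∈ E)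
    (hsource : e'.source = e.source) (hgz : g.source.1 < z.1 ∧ z.1 ≤ g.target.1)
    (hez : z.1 ≤ e.target.1) (hez' : z.1 ≤ e'.target.1) (heg : φ e.curve z.1 < φ g.curve z.1)
    (hh : 0 < h) (hge : φ g.curve (z.1 - h) < φ e'.curve (z.1 - h)) (hgx : g.source.1 ≤ x)
    (hex : e.source.1 ≤ x) (hxz : x ≤ z.1 - h) :
    φ e.curve x ≤ φ g.curve x ∧ φ g.curve x ≤ φ e'.curve x := by
  have hcurve : e.curve ≠ g.curve := fun h => by simp [h] at heg
  constructor
  · refine le_left_of_forall_ne (y := z.1) (hE.continuous _) (hE.continuous _) (by linarith)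
      (fun t ht heq => hE.not_crosses e he g hg ⟨hcurve, t, ?_, ?_, heq⟩) heg
    · exact ⟨hex.trans_lt ht.1, ht.2.trans_le hez⟩
    · exact ⟨hgx.trans_lt ht.1, ht.2.trans_le hgz.2⟩
  · refine le_left_of_forall_ne (hE.continuous _) (hE.continuous _) hxz (fun t ht heq => ?_) hge
    have htz : t < z.1 := by linarith [ht.2]
    obtain rfl := hE.eq_of_apply_eq hg he' ⟨hgx.trans_lt ht.1, htz.trans_le hgz.2⟩
      ⟨by rw [hsource]; exact hex.trans_lt ht.1, htz.trans_le hez'⟩ heq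
    exact hge.false

lemma eq_or_eq_of_isNextAbove (hE : IsPlanarArcSystem φ η V E) (he : e ∈ E)
    (hnext : IsNextAbove φ E h e e') (hg : g ∈ E) (hsource : g.source = e.source)
    (hspan : e.source.1 + h ∈ e.span) (hspan' : e.source.1 + h ∈ e'.span)
    (hgspan : e.source.1 + h ∈ g.span)
    (hbetween : φ e.curve (e.source.1 + h) ≤ φ g.curve (e.source.1 + h) ∧
      φ g.curve (e.source.1 + h) ≤ φ e'.curve (e.source.1 + h)) : g = e ∨ g = e' := by
  obtain ⟨he', hsource', -, hmin⟩ := hnext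
  by_contra! hne
  have hlt : e.exitHeight φ h < g.exitHeight φ h := by
    rw [Arc.exitHeight, Arc.exitHeight, hsource]
    exact hbetween.1.lt_of_ne fun heq => hne.1 (hE.eq_of_apply_eq hg he hgspan hspan heq.symm)
  have hle := hmin g hg hsource hlt
  rw [Arc.exitHeight, Arc.exitHeight, hsource, hsource'] at hle
  exact hne.2 (hE.eq_of_apply_eq hg he' hgspan hspan' (hbetween.2.antisymm hle))

lemma exists_isLowestAbove (hE : IsPlanarArcSystem φ η V E) (hV : IsSeparated V h) (he : e ∈ E)
    (hnext : IsNextAbove φ E h e e') (htarget : e.target.1 ≤ e'.target.1) :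
    ∃ z ∈ V, IsLowestAbove φ η E h z e' := by
  obtain ⟨he', hsource, hexit, -⟩ := id hnext
  have hlt (x : ℝ) := hE.lt_of_exitHeight_lt (x := x) hV he he' hsource hexit htarget
  obtain ⟨hh, hV⟩ := hV
  have hsource_mem := hE.source_mem e he
  -- The leftmost vertex of the wedge between `e` and `e'`.
  obtain ⟨z, hz, hleft⟩ := exists_min_image {v ∈ V | e.source.1 < v.1 ∧ v.1 ≤ e.target.1 ∧
    φ e.curve v.1 ≤ η v ∧ η v < φ e'.curve v.1} Prod.fst ⟨e.target, mem_filter.2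
      ⟨hE.target_mem e he, hE.source_lt_target e he, le_rfl, (hE.apply_target e he).le,
        (hE.apply_target e he).symm.trans_lt (hlt _ (hE.source_lt_target e he) le_rfl)⟩⟩
  obtain ⟨hzV, hz_left, hz_right, hze, hze'⟩ := mem_filter.1 hz
  refine ⟨z, hzV, ⟨he', by rwa [hsource], hz_right.trans htarget, hze'⟩, ?_⟩
  rintro g ⟨hg, hgz⟩
  by_contra! hge
  have hsep := hV _ hsource_mem _ hzV hz_left
  have hsep' := hV _ (hE.source_mem g hg) _ hzV hgz.1
  have hbetween (x : ℝ) := hE.between (x := x) he he' hg hsource ⟨hgz.1, hgz.2.1⟩ hz_right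
    (hz_right.trans htarget) (hze.trans_lt hgz.2.2) hh hge
  have eq_at_source (h : g.source.1 ≤ e.source.1) : φ g.curve e.source.1 = η e.source := by
    have := hbetween e.source.1 h le_rfl (by linarith)
    rw [hE.apply_source e he, ← hsource, hE.apply_source e' he'] at this
    rw [← hsource]
    exact this.2.antisymm this.1
  have hgz' : z.1 ≤ g.target.1 := hgz.2.1
  rcases lt_trichotomy g.source.1 e.source.1 with hlt_source | heq_source | hgt_source
  · exact hE.avoids g hg _ hsource_mem ⟨hlt_source, by linarith⟩ (eq_at_source hlt_source.le)
  · have hgsource : g.source = e.source := hE.eq_of_height_eq _ _ heq_source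
      (by rw [← hE.apply_source g hg, heq_source, eq_at_source heq_source.le])
    have hspan {a : Arc κ} (ha : a.source = e.source) (haz : z.1 ≤ a.target.1) :
        e.source.1 + h ∈ a.span := ⟨by rw [ha]; linarith, by linarith⟩
    rcases hE.eq_or_eq_of_isNextAbove he hnext hg hgsource (hspan rfl hz_right)
      (hspan hsource (hz_right.trans htarget)) (hspan hgsource hgz')
      (hbetween (e.source.1 + h) (by linarith) (by linarith) (by linarith)) with rfl | rfl
    · exact hgz.2.2.not_ge hze
    · exact hge.false
  · have hmid := hbetween g.source.1 le_rfl hgt_source.le (by linarith)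
    have hne : φ e'.curve g.source.1 ≠ η g.source := hE.avoids e' he' _ (hE.source_mem g hg)
      ⟨by rwa [hsource], by linarith⟩
    rw [hE.apply_source g hg] at hmid
    have : z.1 ≤ g.source.1 := hleft g.source (mem_filter.2 ⟨hE.source_mem g hg, hgt_source,
      by linarith, hmid.1, hmid.2.lt_of_ne hne.symm⟩)
    exact hgz.1.not_ge this

lemma eq_of_exitHeight_eq (hE : IsPlanarArcSystem φ η V E) (hV : IsSeparated V h) (he : e ∈ E)
    (he' : e' ∈ E) (hsource : e.source = e'.source)
    (hexit : e.exitHeight φ h = e'.exitHeight φ h) : e = e' := by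
  obtain ⟨hh, hV⟩ := hV
  have hspan {a : Arc κ} (ha : a ∈ E) : a.source.1 + h ∈ a.span := by
    have := hV _ (hE.source_mem a ha) _ (hE.target_mem a ha) (hE.source_lt_target a ha)
    exact ⟨by linarith, by linarith⟩
  rw [Arc.exitHeight, Arc.exitHeight, ← hsource] at hexit
  exact hE.eq_of_apply_eq he he' (hspan he) (hsource ▸ hspan he') hexit

lemma eq_of_isNextAbove (hE : IsPlanarArcSystem φ η V E) (hV : IsSeparated V h) (he : e ∈ E)
    (hg : g ∈ E) (h₁ : IsNextAbove φ E h e e') (h₂ : IsNextAbove φ E h g e') : e = g := by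
  obtain ⟨-, hsource, hlt, hmin⟩ := h₁
  obtain ⟨-, hsource', hlt', hmin'⟩ := h₂
  have heg : e.source = g.source := hsource.symm.trans hsource'
  refine hE.eq_of_exitHeight_eq hV he hg heg ?_
  by_contra hne
  rcases lt_or_gt_of_ne hne with hlt_eg | hlt_ge
  · exact hlt'.not_ge (hmin g hg heg.symm hlt_eg)
  · exact hlt.not_ge (hmin' e he heg hlt_ge)

lemma eq_of_isLowestAbove (hE : IsPlanarArcSystem φ η V E) (hV : IsSeparated V h) (hz : z ∈ V)
    (h₁ : IsLowestAbove φ η E h z e) (h₂ : IsLowestAbove φ η E h z e') : e = e' := by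
  have hspan {a : Arc κ} (ha : PassesAbove φ η E z a) : z.1 - h ∈ a.span := by
    have := hV.2 _ (hE.source_mem a ha.1) _ hz ha.2.1
    exact ⟨by linarith [hV.1], by linarith [hV.1, ha.2.2.1]⟩
  exact hE.eq_of_apply_eq h₁.1.1 h₂.1.1 (hspan h₁.1) (hspan h₂.1)
    ((h₁.2 _ h₂.1).antisymm (h₂.2 _ h₁.1))

lemma exists_isNextAbove (hg : g ∈ E) (hsource : g.source = e.source)
    (hexit : e.exitHeight φ h < g.exitHeight φ h) : ∃ e', IsNextAbove φ E h e e' := by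
  obtain ⟨e', he', hmin⟩ := exists_min_image
    {a ∈ E | a.source = e.source ∧ e.exitHeight φ h < a.exitHeight φ h} (Arc.exitHeight φ h)
    ⟨g, mem_filter.2 ⟨hg, hsource, hexit⟩⟩
  obtain ⟨hE', hs, hlt⟩ := mem_filter.1 he'
  exact ⟨e', hE', hs, hlt, fun a ha has hea => hmin a (mem_filter.2 ⟨ha, has, hea⟩)⟩

open scoped Classical in
lemma card_filter_isNextAbove_le (hE : IsPlanarArcSystem φ η V E) (hV : IsSeparated V h) :
    #{e ∈ E | ∃ e', IsNextAbove φ E h e e' ∧ e.target.1 ≤ e'.target.1} ≤ #V := by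
  refine card_le_card_of_forall_subsingleton
    (fun e z => ∃ e', IsNextAbove φ E h e e' ∧ IsLowestAbove φ η E h z e') (fun e he => ?_) ?_
  · obtain ⟨he, e', hnext, hle⟩ := mem_filter.1 he
    obtain ⟨z, hz, hlow⟩ := hE.exists_isLowestAbove hV he hnext hle
    exact ⟨z, hz, e', hnext, hlow⟩
  · rintro z hz e ⟨he, e', hnext, hlow⟩ g ⟨hg, g', hnext', hlow'⟩
    obtain rfl := hE.eq_of_isLowestAbove hV hz hlow hlow'
    exact hE.eq_of_isNextAbove hV (mem_filter.1 he).1 (mem_filter.1 hg).1 hnext hnext'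

open scoped Classical in
/-- Charge an arc to its source if it is the topmost one there. Otherwise charge it to a vertex seen
first in the wedge between the arc and the next one above it; the shorter of the two arcs bounding
the wedge determines whether that vertex is looked at from above or from below. -/
theorem card_le (hE : IsPlanarArcSystem φ η V E) : #E ≤ 3 * #V := by
  obtain ⟨h, hV⟩ := exists_isSeparated V
  set top := {e ∈ E | ∀ g ∈ E, g.source = e.source → g.exitHeight φ h ≤ e.exitHeight φ h}
  set short := {e ∈ E | ∃ e', IsNextAbove φ E h e e' ∧ e.target.1 ≤ e'.target.1}
  set long := {e ∈ E | ∃ e', IsNextAbove φ E h e e' ∧ e'.target.1 ≤ e.target.1}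
  have hcover : E ⊆ top ∪ (short ∪ long) := by
    intro e he
    by_cases htop : e ∈ top
    · exact mem_union_left _ htop
    simp only [top, mem_filter, not_and, not_forall, not_le] at htop
    obtain ⟨g, hg, hsource, hexit⟩ := htop he
    obtain ⟨e', hnext⟩ := exists_isNextAbove hg hsource hexit
    rcases le_total e.target.1 e'.target.1 with hle | hle
    · exact mem_union_right _ (mem_union_left _ (mem_filter.2 ⟨he, e', hnext, hle⟩))
    · exact mem_union_right _ (mem_union_right _ (mem_filter.2 ⟨he, e', hnext, hle⟩))
  have htop : #top ≤ #V := by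
    refine card_le_card_of_injOn Arc.source
      (fun e he => hE.source_mem e (mem_filter.1 he).1) fun e he e' he' hsource => ?_
    obtain ⟨he, hmax⟩ := mem_filter.1 he
    obtain ⟨he', hmax'⟩ := mem_filter.1 he'
    exact hE.eq_of_exitHeight_eq hV he he' hsource
      ((hmax' e he hsource).antisymm (hmax e' he' hsource.symm))
  have hshort : #short ≤ #V := hE.card_filter_isNextAbove_le hV
  have hlong : #long ≤ #V := by
    refine card_le_card_of_forall_subsingleton
      (fun e z => IsLowestAbove (fun f x => -φ f x) (fun v => -η v) E h z e) (fun e he => ?_) ?_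
    · obtain ⟨he, e', ⟨he', hsource, hlt, hmin⟩, hle⟩ := mem_filter.1 he
      refine hE.neg.exists_isLowestAbove hV he' ⟨he, hsource.symm, neg_lt_neg hlt, ?_⟩ hle
      intro g hg hgs hge
      refine neg_le_neg (not_lt.1 fun hlt' => ?_)
      exact (neg_lt_neg_iff.1 hge).not_ge (hmin g hg (hgs.trans hsource) hlt')
    · rintro z hz e ⟨-, hlow⟩ g ⟨-, hlow'⟩
      exact hE.neg.eq_of_isLowestAbove hV hz hlow hlow'
  have := card_le_card hcover
  have := card_union_le top (short ∪ long)
  have := card_union_le short long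
  omega

end IsPlanarArcSystem

end PlanarArcs

section LensFree

lemma exists_disjoint_pairs {α : Type*} [DecidableEq α] (E : Finset α) (R : α → α → Prop) :
    ∃ M : Finset (α × α), ∃ E' ⊆ E, (∀ z ∈ M, z.1 ∈ E ∧ z.2 ∈ E ∧ R z.1 z.2) ∧
      (M : Set (α × α)).PairwiseDisjoint (fun z => ({z.1, z.2} : Finset α)) ∧
      (∀ a ∈ E', ∀ b ∈ E', ¬ R a b) ∧ #E ≤ #E' + 2 * #M := by
  induction E using Finset.strongInduction with
  | H E ih =>
    by_cases hfree : ∀ a ∈ E, ∀ b ∈ E, ¬ R a b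
    · exact ⟨∅, E, Subset.rfl, by simp, by simp, hfree, by simp⟩
    push Not at hfree
    obtain ⟨a, ha, b, hb, hab⟩ := hfree
    obtain ⟨M, E', hE', hM, hdisj, hfree, hcard⟩ := ih (E \ {a, b})
      (sdiff_ssubset (by simp [insert_subset_iff, ha, hb]) ⟨a, by simp⟩)
    have fresh : ∀ z ∈ M, Disjoint ({a, b} : Finset α) {z.1, z.2} := by
      intro z hz
      refine disjoint_of_subset_right ?_ (disjoint_sdiff (s := {a, b}) (t := E))
      exact insert_subset (hM z hz).1 (singleton_subset_iff.2 (hM z hz).2.1)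
    have notMem : (a, b) ∉ M := fun h => by simpa using fresh _ h
    refine ⟨insert (a, b) M, E', hE'.trans sdiff_subset, ?_, ?_, hfree, ?_⟩
    · simp only [mem_insert, forall_eq_or_imp]
      exact ⟨⟨ha, hb, hab⟩, fun z hz =>
        ⟨(mem_sdiff.1 (hM z hz).1).1, (mem_sdiff.1 (hM z hz).2.1).1, (hM z hz).2.2⟩⟩
    · rw [coe_insert]
      exact hdisj.insert fun z hz _ => fresh z hz
    · rw [card_insert_of_notMem notMem]
      have := card_le_card_sdiff_add_card (s := E) (t := {a, b})
      have := card_le_two (a := a) (b := b)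
      omega

/-- The lens `L` lies between the arcs `a` and `b`. -/
def Lens.IsFormedBy (L : Lens) (a b : Arc Quad) : Prop :=
  ((L.upper = a.curve ∧ L.lower = b.curve) ∨ (L.upper = b.curve ∧ L.lower = a.curve)) ∧
    Set.Ioo L.left L.right ⊆ a.span ∧ Set.Ioo L.left L.right ⊆ b.span

/-- No two of the arcs form a lens. -/
def IsLensFree (E : Finset (Arc Quad)) : Prop :=
  ∀ a ∈ E, ∀ b ∈ E, ∀ L : Lens, ¬ L.IsFormedBy a b

lemma Lens.exists_isFormedBy {a b : Arc Quad} {x₁ x₂ : ℝ} (hab : a.curve ≠ b.curve)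
    (hlt : x₁ < x₂) (h₁ : eval a.curve x₁ = eval b.curve x₁)
    (h₂ : eval a.curve x₂ = eval b.curve x₂) (ha : Set.Ioo x₁ x₂ ⊆ a.span)
    (hb : Set.Ioo x₁ x₂ ⊆ b.span) : ∃ L : Lens, L.IsFormedBy a b := by
  have hleft : x₁ < (x₁ + x₂) / 2 := left_lt_add_div_two.2 hlt
  have hright : (x₁ + x₂) / 2 < x₂ := add_div_two_lt_right.2 hlt
  have middle_ne : eval a.curve ((x₁ + x₂) / 2) ≠ eval b.curve ((x₁ + x₂) / 2) := fun h =>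
    hab (eq_of_eval_eq hleft.ne hlt.ne hright.ne h₁ h h₂)
  rcases middle_ne.lt_or_gt with h | h
  · exact ⟨⟨b.curve, a.curve, x₁, x₂, hlt, h₁.symm, h₂.symm, _, hleft, hright, h⟩,
      .inr ⟨rfl, rfl⟩, ha, hb⟩
  · exact ⟨⟨a.curve, b.curve, x₁, x₂, hlt, h₁, h₂, _, hleft, hright, h⟩,
      .inl ⟨rfl, rfl⟩, ha, hb⟩

namespace IsArcSystem

variable {F : Finset Quad} {V : Finset (ℝ × ℝ)} {E : Finset (Arc Quad)}

lemma right_le_left_of_isFormedBy (hE : IsArcSystem eval Prod.snd V E) {a b a' b' : Arc Quad}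
    {L L' : Lens} (ha : a ∈ E) (hb : b ∈ E) (ha' : a' ∈ E) (hb' : b' ∈ E)
    (hL : L.IsFormedBy a b) (hL' : L'.IsFormedBy a' b')
    (hdisj : Disjoint ({a, b} : Finset (Arc Quad)) {a', b'})
    (hshare : L.SharesCurve L') : L.right ≤ L'.left ∨ L'.right ≤ L.left := by
  obtain ⟨hcurve, hspan_a, hspan_b⟩ := hL
  obtain ⟨hcurve', hspan_a', hspan_b'⟩ := hL'
  by_contra! hoverlap
  obtain ⟨x, hx, hx'⟩ : ∃ x ∈ Set.Ioo L.left L.right, x ∈ Set.Ioo L'.left L'.right := by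
    obtain ⟨x, hx, hx'⟩ := exists_between (a₁ := max L.left L'.left) (a₂ := min L.right L'.right)
      (by have := L.left_lt_right; have := L'.left_lt_right; grind)
    exact ⟨x, by grind, by grind⟩
  have eq_of_curve_eq {c c' : Arc Quad} (hc : c = a ∨ c = b) (hc' : c' = a' ∨ c' = b')
      (h : c.curve = c'.curve) : c = c' := by
    rcases hc with rfl | rfl <;> rcases hc' with rfl | rfl <;>
      apply hE.eq_of_mem_span ‹_› ‹_› h (x := x) <;> solve_by_elim
  simp only [disjoint_insert_left, disjoint_singleton_left, mem_insert, mem_singleton] at hdisj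
  unfold Lens.SharesCurve at hshare
  grind

lemma exists_isLensFree (hE : IsArcSystem eval Prod.snd V E) (hF : ∀ e ∈ E, e.curve ∈ F) :
    ∃ E' ⊆ E, IsLensFree E' ∧
      (#E : ℝ) ≤ #E' + 120 * (#F * √(#F) * (1 + Real.log #F)) := by
  obtain ⟨M, E', hE', hM, hdisj, hfree, hcard⟩ :=
    exists_disjoint_pairs E fun a b => ∃ L : Lens, L.IsFormedBy a b
  have (z : M) : ∃ L : Lens, L.IsFormedBy z.1.1 z.1.2 := (hM z z.2).2.2
  choose lens hlens using this
  have disjoint_lenses (z w : M) (hzw : z ≠ w) (hshare : (lens z).SharesCurve (lens w)) :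
      (lens z).right ≤ (lens w).left ∨ (lens w).right ≤ (lens z).left :=
    hE.right_le_left_of_isFormedBy (hM z z.2).1 (hM z z.2).2.1 (hM w w.2).1 (hM w w.2).2.1
      (hlens z) (hlens w) (hdisj z.2 w.2 (Subtype.coe_ne_coe.2 hzw)) hshare
  have lens_injective : Function.Injective lens := by
    intro z w hzw
    by_contra hne
    have := disjoint_lenses z w hne (.inl (by rw [hzw]))
    rw [hzw, or_self] at this
    exact this.not_gt (lens w).left_lt_right
  have nonoverlapping : IsNonoverlapping (univ.image lens) := by
    simp only [IsNonoverlapping, mem_image, mem_univ, true_and, forall_exists_index,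
      forall_apply_eq_imp_iff]
    exact fun z w hne => disjoint_lenses z w (ne_of_apply_ne lens hne)
  have hcurves : ∀ A ∈ univ.image lens, A.upper ∈ F ∧ A.lower ∈ F := by
    refine forall_mem_image.2 fun z _ => ?_
    have hz := hM z z.2
    rcases (hlens z).1 with h | h <;> rw [h.1, h.2]
    exacts [⟨hF _ hz.1, hF _ hz.2.1⟩, ⟨hF _ hz.2.1, hF _ hz.1⟩]
  have bound := nonoverlapping.card_le (fun A hA => (hcurves A hA).1) fun A hA => (hcurves A hA).2
  rw [card_image_of_injective _ lens_injective, card_univ, Fintype.card_coe] at bound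
  refine ⟨E', hE', fun a ha b hb L hL => hfree a ha b hb ⟨L, hL⟩, ?_⟩
  have : (#E : ℝ) ≤ #E' + 2 * #M := mod_cast hcard
  linarith

end IsArcSystem

end LensFree

/-! ### Crossings and incidences -/

section CrossingLemma

/-- The probability that a random subset of `V`, containing each element independently with
probability `p`, equals `U`. -/
def sampleWeight {α : Type*} (p : ℝ) (V U : Finset α) : ℝ := p ^ #U * (1 - p) ^ (#V - #U)

lemma sampleWeight_nonneg {α : Type*} {p : ℝ} (hp₀ : 0 ≤ p) (hp₁ : p ≤ 1) (V U : Finset α) :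
    0 ≤ sampleWeight p V U :=
  mul_nonneg (pow_nonneg hp₀ _) (pow_nonneg (sub_nonneg.2 hp₁) _)

lemma sum_sampleWeight_superset {α : Type*} [DecidableEq α] {V S : Finset α} (hS : S ⊆ V) (p : ℝ) :
    ∑ U ∈ V.powerset with S ⊆ U, sampleWeight p V U = p ^ #S := by
  calc ∑ U ∈ V.powerset with S ⊆ U, sampleWeight p V U
      = ∑ U ∈ V.powerset, (∏ _a ∈ U, p) * ∏ a ∈ V \ U, if a ∈ S then 0 else 1 - p := by
        rw [sum_filter]
        refine sum_congr rfl fun U hU => ?_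
        split_ifs with hSU
        · rw [prod_const, prod_congr rfl fun a ha => if_neg fun h => (mem_sdiff.1 ha).2 (hSU h),
            prod_const, card_sdiff_of_subset (mem_powerset.1 hU), sampleWeight]
        · obtain ⟨a, haS, haU⟩ := not_subset.1 hSU
          have : ∏ a ∈ V \ U, (if a ∈ S then 0 else 1 - p) = 0 :=
            prod_eq_zero (mem_sdiff.2 ⟨hS haS, haU⟩) (if_pos haS)
          rw [this, mul_zero]
    _ = ∏ a ∈ V, (p + if a ∈ S then 0 else 1 - p) := (prod_add _ _ _).symm
    _ = ∏ a ∈ V, if a ∈ S then p else 1 := prod_congr rfl fun a _ => by split_ifs <;> ring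
    _ = p ^ #S := by rw [prod_ite_mem, inter_eq_right.2 hS, prod_const]

lemma sum_sampleWeight_mul_card {α β : Type*} [DecidableEq α] {V : Finset α} {X : Finset β}
    {σ : β → Finset α} {k : ℕ} (hσ : ∀ b ∈ X, σ b ⊆ V) (hk : ∀ b ∈ X, #(σ b) = k) (p : ℝ) :
    ∑ U ∈ V.powerset, sampleWeight p V U * #{b ∈ X | σ b ⊆ U} = #X * p ^ k := by
  simp only [card_filter, Nat.cast_sum, Nat.cast_ite, Nat.cast_one, Nat.cast_zero, mul_sum, mul_ite,
    mul_one, mul_zero]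
  rw [sum_comm, ← nsmul_eq_mul, ← sum_const]
  refine sum_congr rfl fun b hb => ?_
  rw [← sum_filter, sum_sampleWeight_superset (hσ b hb), hk b hb]

/-- The two endpoints of an arc. -/
def Arc.endpoints {κ : Type*} (e : Arc κ) : Finset (ℝ × ℝ) := {e.source, e.target}

open scoped Classical in
/-- The ordered pairs of crossing arcs in a drawing by quadratics. -/
def crossingPairs (E : Finset (Arc Quad)) : Finset (Arc Quad × Arc Quad) :=
  {z ∈ E ×ˢ E | z.1.Crosses eval z.2}

variable {F : Finset Quad} {V : Finset (ℝ × ℝ)} {E : Finset (Arc Quad)}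

lemma mem_crossingPairs {z : Arc Quad × Arc Quad} :
    z ∈ crossingPairs E ↔ (z.1 ∈ E ∧ z.2 ∈ E) ∧ z.1.Crosses eval z.2 := by
  simp only [crossingPairs, mem_filter, mem_product]

namespace IsArcSystem

lemma card_crossingPairs_le (hE : IsArcSystem eval Prod.snd V E) (hF : ∀ e ∈ E, e.curve ∈ F) :
    #(crossingPairs E) ≤ 2 * #F ^ 2 := by
  have maps_to : ∀ z ∈ crossingPairs E, (z.1.curve, z.2.curve) ∈ F ×ˢ F := fun z hz =>
    have hz := (mem_crossingPairs.1 hz).1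
    mem_product.2 ⟨hF _ hz.1, hF _ hz.2⟩
  have fiber_le : ∀ b ∈ F ×ˢ F, #{z ∈ crossingPairs E | (z.1.curve, z.2.curve) = b} ≤ 2 := by
    rintro ⟨f, g⟩ -
    by_contra! h
    obtain ⟨u, hu, v, hv, w, hw, huv, huw, hvw⟩ := two_lt_card.1 h
    simp only [mem_filter, mem_crossingPairs, Prod.mk.injEq] at hu hv hw
    obtain ⟨⟨hu, hne, x, hx₁, hx₂, hx⟩, rfl, rfl⟩ := hu
    obtain ⟨⟨hv, -, y, hy₁, hy₂, hy⟩, hv₁, hv₂⟩ := hv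
    obtain ⟨⟨hw, -, t, ht₁, ht₂, ht⟩, hw₁, hw₂⟩ := hw
    have ne_of_ne {a b : Arc Quad × Arc Quad} {s s' : ℝ} (ha : a.1 ∈ E ∧ a.2 ∈ E)
        (hb : b.1 ∈ E ∧ b.2 ∈ E) (hab : a ≠ b) (h₁ : a.1.curve = b.1.curve)
        (h₂ : a.2.curve = b.2.curve) (hs₁ : s ∈ a.1.span) (hs₂ : s ∈ a.2.span)
        (hs'₁ : s' ∈ b.1.span) (hs'₂ : s' ∈ b.2.span) : s ≠ s' := by
      rintro rfl
      exact hab (Prod.ext (hE.eq_of_mem_span ha.1 hb.1 h₁ hs₁ hs'₁)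
        (hE.eq_of_mem_span ha.2 hb.2 h₂ hs₂ hs'₂))
    rw [hv₁, hv₂] at hy
    rw [hw₁, hw₂] at ht
    exact hne (eq_of_eval_eq (ne_of_ne hu hv huv hv₁.symm hv₂.symm hx₁ hx₂ hy₁ hy₂)
      (ne_of_ne hu hw huw hw₁.symm hw₂.symm hx₁ hx₂ ht₁ ht₂)
      (ne_of_ne hv hw hvw (hv₁.trans hw₁.symm) (hv₂.trans hw₂.symm) hy₁ hy₂ ht₁ ht₂) hx hy ht)
  rw [card_eq_sum_card_fiberwise maps_to]
  exact (sum_le_card_nsmul _ _ _ fiber_le).trans_eq (by rw [card_product, smul_eq_mul]; ring)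

lemma card_le_add_card_crossingPairs (hE : IsArcSystem eval Prod.snd V E) (hfree : IsLensFree E) :
    #E ≤ 3 * #V + #(crossingPairs E) := by
  set E' := E \ (crossingPairs E).image Prod.fst
  have hE' : E' ⊆ E := sdiff_subset
  have planar : IsPlanarArcSystem eval Prod.snd V E' := by
    refine ⟨hE.mono Subset.rfl hE' fun e he => ⟨hE.source_mem e (hE' he), hE.target_mem e (hE' he)⟩,
      continuous_eval, fun e he e' he' hcross => ?_,
      fun e he e' he' hne hsource x hx hxe hxe' h => ?_⟩
    · exact (mem_sdiff.1 he).2 (mem_image.2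
        ⟨(e, e'), mem_crossingPairs.2 ⟨⟨hE' he, hE' he'⟩, hcross⟩, rfl⟩)
    · obtain ⟨L, hL⟩ := Lens.exists_isFormedBy hne hx
        (by rw [hE.apply_source e (hE' he), hsource, hE.apply_source e' (hE' he')]) h
        (Set.Ioo_subset_Ioo le_rfl hxe) (Set.Ioo_subset_Ioo (by rw [hsource]) hxe')
      exact hfree e (hE' he) e' (hE' he') L hL
  have := planar.card_le
  have : #E ≤ #E' + _ := card_le_card_sdiff_add_card (t := (crossingPairs E).image Prod.fst)
  have := card_image_le (s := crossingPairs E) (f := Prod.fst)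
  omega

lemma card_endpoints (hE : IsArcSystem eval Prod.snd V E) {e : Arc Quad} (he : e ∈ E) :
    #e.endpoints = 2 :=
  card_pair fun h => (hE.source_lt_target e he).ne (by rw [h])

lemma endpoints_subset (hE : IsArcSystem eval Prod.snd V E) {e : Arc Quad} (he : e ∈ E) :
    e.endpoints ⊆ V :=
  insert_subset (hE.source_mem e he) (singleton_subset_iff.2 (hE.target_mem e he))

lemma disjoint_endpoints (hE : IsArcSystem eval Prod.snd V E) (hfree : IsLensFree E)
    {e e' : Arc Quad} (he : e ∈ E) (he' : e' ∈ E) (hcross : e.Crosses eval e') :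
    Disjoint e.endpoints e'.endpoints := by
  obtain ⟨hne, x, hx, hx', heq⟩ := hcross
  have source_ne : e.source ≠ e'.source := by
    intro h
    obtain ⟨L, hL⟩ := Lens.exists_isFormedBy hne hx.1
      (by rw [hE.apply_source e he, h, hE.apply_source e' he']) heq
      (Set.Ioo_subset_Ioo le_rfl hx.2.le) (Set.Ioo_subset_Ioo (by rw [h]) hx'.2.le)
    exact hfree e he e' he' L hL
  have target_ne : e.target ≠ e'.target := by
    intro h
    obtain ⟨L, hL⟩ := Lens.exists_isFormedBy hne hx.2 heq
      (by rw [hE.apply_target e he, h, hE.apply_target e' he'])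
      (Set.Ioo_subset_Ioo hx.1.le le_rfl) (Set.Ioo_subset_Ioo hx'.1.le (by rw [h]))
    exact hfree e he e' he' L hL
  have source_ne_target : e.source ≠ e'.target := fun h => (hx.1.trans hx'.2).ne (by rw [h])
  have target_ne_source : e.target ≠ e'.source := fun h => (hx'.1.trans hx.2).ne (by rw [h])
  simp [Arc.endpoints, source_ne.symm, target_ne.symm, source_ne_target.symm,
    target_ne_source.symm]

lemma card_induced_le (hE : IsArcSystem eval Prod.snd V E) (hfree : IsLensFree E)
    {U : Finset (ℝ × ℝ)} (hU : U ⊆ V) :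
    #{e ∈ E | e.endpoints ⊆ U} ≤ 3 * #{v ∈ V | {v} ⊆ U} +
      #{z ∈ crossingPairs E | z.1.endpoints ∪ z.2.endpoints ⊆ U} := by
  set E' := {e ∈ E | e.endpoints ⊆ U}
  have hE' : E' ⊆ E := filter_subset _ _
  have system : IsArcSystem eval Prod.snd U E' := hE.mono hU hE' fun e he => by
    simpa [Arc.endpoints, insert_subset_iff] using (mem_filter.1 he).2
  have vertices : {v ∈ V | {v} ⊆ U} = U := by
    simpa only [singleton_subset_iff, filter_mem_eq_inter] using inter_eq_right.2 hU
  have crossings : {z ∈ crossingPairs E | z.1.endpoints ∪ z.2.endpoints ⊆ U} =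
      crossingPairs E' := by
    ext z
    simp only [E', mem_filter, mem_crossingPairs, union_subset_iff]
    tauto
  rw [vertices, crossings]
  exact system.card_le_add_card_crossingPairs fun a ha b hb => hfree a (hE' ha) b (hE' hb)

lemma card_mul_sq_le (hE : IsArcSystem eval Prod.snd V E) (hfree : IsLensFree E) {p : ℝ}
    (hp₀ : 0 ≤ p) (hp₁ : p ≤ 1) : #E * p ^ 2 ≤ 3 * (#V * p) + #(crossingPairs E) * p ^ 4 := by
  have expected_arcs := sum_sampleWeight_mul_card (fun e he => hE.endpoints_subset (e := e) he)
    (fun e he => hE.card_endpoints (e := e) he) p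
  have expected_vertices := sum_sampleWeight_mul_card (V := V) (X := V) (σ := singleton) (k := 1)
    (fun v hv => singleton_subset_iff.2 hv) (fun v _ => card_singleton v) p
  have expected_crossings := sum_sampleWeight_mul_card (V := V) (X := crossingPairs E)
    (σ := fun z => z.1.endpoints ∪ z.2.endpoints) (k := 4)
    (fun z hz => by
      have hz := (mem_crossingPairs.1 hz).1
      exact union_subset (hE.endpoints_subset hz.1) (hE.endpoints_subset hz.2))
    (fun z hz => by
      obtain ⟨hz, hcross⟩ := mem_crossingPairs.1 hz
      rw [card_union_of_disjoint (hE.disjoint_endpoints hfree hz.1 hz.2 hcross),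
        hE.card_endpoints hz.1, hE.card_endpoints hz.2]) p
  have planar_bound : ∀ U ∈ V.powerset, sampleWeight p V U * #{e ∈ E | e.endpoints ⊆ U} ≤
      3 * (sampleWeight p V U * #{v ∈ V | {v} ⊆ U}) +
        sampleWeight p V U * #{z ∈ crossingPairs E | z.1.endpoints ∪ z.2.endpoints ⊆ U} := by
    intro U hU
    rw [← mul_assoc, mul_comm 3, mul_assoc, ← mul_add]
    refine mul_le_mul_of_nonneg_left ?_ (sampleWeight_nonneg hp₀ hp₁ V U)
    exact_mod_cast hE.card_induced_le hfree (mem_powerset.1 hU)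
  have := sum_le_sum planar_bound
  rwa [sum_add_distrib, ← mul_sum, expected_arcs, expected_vertices, expected_crossings,
    pow_one] at this

lemma card_le_of_isLensFree (hE : IsArcSystem eval Prod.snd V E) (hF : ∀ e ∈ E, e.curve ∈ F)
    (hfree : IsLensFree E) : (#E : ℝ) ≤ 6 * #V + 6 * ((#V : ℝ) * #F) ^ (2 / 3 : ℝ) := by
  rcases le_or_gt (#E : ℝ) (6 * #V) with h | hlt
  · exact h.trans (le_add_of_nonneg_right (by positivity))
  have hE_pos : 0 < (#E : ℝ) := hlt.trans_le' (by positivity)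
  obtain ⟨e, he⟩ : E.Nonempty := card_pos.1 (mod_cast hE_pos)
  have hV_pos : 0 < (#V : ℝ) := mod_cast card_pos.2 ⟨_, hE.source_mem e he⟩
  have hcrossings : (#(crossingPairs E) : ℝ) ≤ 2 * #F ^ 2 := mod_cast hE.card_crossingPairs_le hF
  -- This probability makes the expected number of sampled arcs twice the vertex term.
  have sampled := hE.card_mul_sq_le hfree (p := 6 * #V / #E) (by positivity)
    (by rw [div_le_one hE_pos]; exact hlt.le)
  have cube_le : (#E : ℝ) ^ 3 ≤ 144 * (#V * #F) ^ 2 := by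
    have := sampled.trans (add_le_add_right (mul_le_mul_of_nonneg_right hcrossings
      (by positivity)) _)
    field_simp at this
    nlinarith
  have : (#E : ℝ) ≤ 6 * ((#V : ℝ) * #F) ^ (2 / 3 : ℝ) := by
    refine le_of_pow_le_pow_left₀ three_ne_zero (by positivity) (cube_le.trans ?_)
    have : (((#V : ℝ) * #F) ^ (2 / 3 : ℝ)) ^ 3 = ((#V : ℝ) * #F) ^ 2 := by
      rw [← Real.rpow_mul_natCast (by positivity)]
      norm_num
    rw [mul_pow (6 : ℝ), this]
    gcongr
    norm_num
  linarith

end IsArcSystem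

end CrossingLemma

section Incidences

/-- The incidences between a set of points and the graphs of a set of quadratics. -/
def incidences (P : Finset (ℝ × ℝ)) (F : Finset Quad) : Finset ((ℝ × ℝ) × Quad) :=
  {z ∈ P ×ˢ F | eval z.2 z.1.1 = z.1.2}

variable {P : Finset (ℝ × ℝ)} {F : Finset Quad}

lemma mem_incidences {z : (ℝ × ℝ) × Quad} :
    z ∈ incidences P F ↔ (z.1 ∈ P ∧ z.2 ∈ F) ∧ eval z.2 z.1.1 = z.1.2 := by
  simp only [incidences, mem_filter, mem_product]

open scoped Classical in
/-- The arcs cut out of the graphs of the quadratics in `F` by the points of `P` on them. -/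
def consecutiveArcs (P : Finset (ℝ × ℝ)) (F : Finset Quad) : Finset (Arc Quad) :=
  {e ∈ (F ×ˢ P ×ˢ P).image fun z => ⟨z.1, z.2.1, z.2.2⟩ |
    e.source.1 < e.target.1 ∧ eval e.curve e.source.1 = e.source.2 ∧
      eval e.curve e.target.1 = e.target.2 ∧ ∀ v ∈ P, v.1 ∈ e.span → eval e.curve v.1 ≠ v.2}

lemma mem_consecutiveArcs {e : Arc Quad} : e ∈ consecutiveArcs P F ↔
    (e.curve ∈ F ∧ e.source ∈ P ∧ e.target ∈ P) ∧
      e.source.1 < e.target.1 ∧ eval e.curve e.source.1 = e.source.2 ∧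
        eval e.curve e.target.1 = e.target.2 ∧
          ∀ v ∈ P, v.1 ∈ e.span → eval e.curve v.1 ≠ v.2 := by
  simp only [consecutiveArcs, mem_filter, mem_image, mem_product, and_congr_left_iff]
  rintro -
  constructor
  · rintro ⟨z, hz, rfl⟩
    exact hz
  · exact fun h => ⟨(e.curve, e.source, e.target), h, rfl⟩

lemma isArcSystem_consecutiveArcs : IsArcSystem eval Prod.snd P (consecutiveArcs P F) where
  eq_of_height_eq _ _ := Prod.ext
  source_mem _ he := (mem_consecutiveArcs.1 he).1.2.1
  target_mem _ he := (mem_consecutiveArcs.1 he).1.2.2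
  source_lt_target _ he := (mem_consecutiveArcs.1 he).2.1
  apply_source _ he := (mem_consecutiveArcs.1 he).2.2.1
  apply_target _ he := (mem_consecutiveArcs.1 he).2.2.2.1
  avoids _ he := (mem_consecutiveArcs.1 he).2.2.2.2

lemma exists_target_eq {z : (ℝ × ℝ) × Quad} (hz : z ∈ incidences P F) {v : ℝ × ℝ} (hv : v ∈ P)
    (hvf : eval z.2 v.1 = v.2) (hlt : v.1 < z.1.1) :
    ∃ e ∈ consecutiveArcs P F, z = (e.target, e.curve) := by
  obtain ⟨⟨hzP, hzF⟩, hzf⟩ := mem_incidences.1 hz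
  obtain ⟨w, hw, hmax⟩ := exists_max_image {v ∈ P | eval z.2 v.1 = v.2 ∧ v.1 < z.1.1} Prod.fst
    ⟨v, mem_filter.2 ⟨hv, hvf, hlt⟩⟩
  obtain ⟨hwP, hwf, hwlt⟩ := mem_filter.1 hw
  refine ⟨⟨z.2, w, z.1⟩, mem_consecutiveArcs.2 ⟨⟨hzF, hwP, hzP⟩, hwlt, hwf, hzf, ?_⟩, rfl⟩
  exact fun u hu hspan huf => (hmax u (mem_filter.2 ⟨hu, huf, hspan.2⟩)).not_gt hspan.1

open scoped Classical in
lemma card_incidences_le_card_consecutiveArcs :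
    #(incidences P F) ≤ #F + #(consecutiveArcs P F) := by
  set leftmost := {z ∈ incidences P F | ∀ v ∈ P, eval z.2 v.1 = v.2 → z.1.1 ≤ v.1}
  have hcover : incidences P F ⊆
      leftmost ∪ (consecutiveArcs P F).image fun e => (e.target, e.curve) := by
    intro z hz
    by_cases hleft : z ∈ leftmost
    · exact mem_union_left _ hleft
    simp only [leftmost, mem_filter, not_and, not_forall, not_le] at hleft
    obtain ⟨v, hv, hvf, hlt⟩ := hleft hz
    obtain ⟨e, he, rfl⟩ := exists_target_eq hz hv hvf hlt
    exact mem_union_right _ (mem_image_of_mem _ he)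
  have hleftmost : #leftmost ≤ #F := by
    refine card_le_card_of_injOn Prod.snd
      (fun z hz => (mem_incidences.1 (mem_filter.1 hz).1).1.2) ?_
    rintro ⟨u, f⟩ hu ⟨v, g⟩ hv rfl
    obtain ⟨hu, hu_le⟩ := mem_filter.1 hu
    obtain ⟨hv, hv_le⟩ := mem_filter.1 hv
    rw [mem_incidences] at hu hv
    have hfst : u.1 = v.1 := (hu_le v hv.1.1 hv.2).antisymm (hv_le u hu.1.1 hu.2)
    exact Prod.ext (Prod.ext hfst (by rw [← hu.2, ← hv.2, hfst])) rfl
  have := card_le_card hcover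
  have := card_union_le leftmost ((consecutiveArcs P F).image fun e => (e.target, e.curve))
  have := card_image_le (s := consecutiveArcs P F) (f := fun e => (e.target, e.curve))
  omega

theorem card_incidences_le (P : Finset (ℝ × ℝ)) (F : Finset Quad) :
    (#(incidences P F) : ℝ) ≤ #F + 6 * #P + 6 * ((#P : ℝ) * #F) ^ (2 / 3 : ℝ) +
      120 * (#F * √(#F) * (1 + Real.log #F)) := by
  have hF : ∀ e ∈ consecutiveArcs P F, e.curve ∈ F := fun e he => (mem_consecutiveArcs.1 he).1.1
  have system : IsArcSystem eval Prod.snd P (consecutiveArcs P F) := isArcSystem_consecutiveArcs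
  obtain ⟨E', hE', hfree, hcard⟩ := system.exists_isLensFree hF
  have lensFree_bound := (system.mono Subset.rfl hE' fun e he =>
    ⟨system.source_mem e (hE' he), system.target_mem e (hE' he)⟩).card_le_of_isLensFree
    (fun e he => hF e (hE' he)) hfree
  have : (#(incidences P F) : ℝ) ≤ #F + #(consecutiveArcs P F) :=
    mod_cast card_incidences_le_card_consecutiveArcs
  linarith

end Incidences

/-! ### Cells in the space of quadratics -/

section Cells

/-- The signed vertical distance from a point to the graph of a quadratic. As a function of the
quadratic it is affine, so each point is dual to the plane in `Quad` on which it vanishes. -/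
def height (q : ℝ × ℝ) (f : Quad) : ℝ := eval f q.1 - q.2

/-- The closed cell containing `f` in the arrangement of the planes dual to the points of `S`. -/
def cell (S : Finset (ℝ × ℝ)) (f : Quad) : Set Quad := {g | ∀ q ∈ S, 0 ≤ height q f * height q g}

/-- The quadratics passing through every point of `T`: the flat in which the dual planes meet. -/
def interpolants (T : Finset (ℝ × ℝ)) : Set Quad := {g | ∀ q ∈ T, height q g = 0}

/-- The face of the cell of `f` lying on the planes dual to the points of `T`. -/
def face (S : Finset (ℝ × ℝ)) (f : Quad) (T : Finset (ℝ × ℝ)) : Set Quad :=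
  cell S f ∩ interpolants T

/-- The cell of `f` is bounded: every direction decreases one of the inequalities defining it. -/
def IsBoundedCell (S : Finset (ℝ × ℝ)) (f : Quad) : Prop :=
  ∀ d : Quad, d ≠ 0 → ∃ q ∈ S, height q f * eval d q.1 < 0

variable {S S' T : Finset (ℝ × ℝ)} {f g : Quad} {q : ℝ × ℝ}

lemma height_add_smul (q : ℝ × ℝ) (g d : Quad) (l : ℝ) :
    height q (g + l • d) = height q g + l * eval d q.1 := by
  simp only [height, eval_add, eval_smul]; ring

lemma height_convex_combination (q : ℝ × ℝ) (f g : Quad) {a b : ℝ} (hab : a + b = 1) :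
    height q (a • f + b • g) = a * height q f + b * height q g := by
  simp only [height, eval_add, eval_smul]
  linear_combination q.2 * hab

lemma continuous_height (q : ℝ × ℝ) : Continuous (height q) := by
  unfold height eval; fun_prop

lemma eval_eq_of_height_eq_zero (hf : height q f = 0) (hg : height q g = 0) :
    eval f q.1 = eval g q.1 :=
  (sub_eq_zero.1 hf).trans (sub_eq_zero.1 hg).symm

lemma convex_cell (S : Finset (ℝ × ℝ)) (f : Quad) : Convex ℝ (cell S f) := by
  intro y hy z hz a b ha hb hab q hq
  rw [height_convex_combination q y z hab]
  linarith [mul_nonneg ha (hy q hq), mul_nonneg hb (hz q hq)]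

lemma convex_interpolants (T : Finset (ℝ × ℝ)) : Convex ℝ (interpolants T) := by
  intro y hy z hz a b _ _ hab q hq
  rw [height_convex_combination q y z hab, hy q hq, hz q hq]; simp

lemma isClosed_cell (S : Finset (ℝ × ℝ)) (f : Quad) : IsClosed (cell S f) := by
  simp only [cell, Set.ofPred_forall]
  exact isClosed_biInter fun q _ => isClosed_le continuous_const ((continuous_height q).const_mul _)

lemma isClosed_interpolants (T : Finset (ℝ × ℝ)) : IsClosed (interpolants T) := by
  simp only [interpolants, Set.ofPred_forall]
  exact isClosed_biInter fun q _ => isClosed_eq (continuous_height q) continuous_const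

lemma convex_face (S : Finset (ℝ × ℝ)) (f : Quad) (T : Finset (ℝ × ℝ)) : Convex ℝ (face S f T) :=
  (convex_cell S f).inter (convex_interpolants T)

lemma isClosed_face (S : Finset (ℝ × ℝ)) (f : Quad) (T : Finset (ℝ × ℝ)) :
    IsClosed (face S f T) :=
  (isClosed_cell S f).inter (isClosed_interpolants T)

lemma face_anti (h : S ⊆ S') (f : Quad) (T : Finset (ℝ × ℝ)) : face S' f T ⊆ face S f T :=
  fun _ hg => ⟨fun q hq => hg.1 q (h hq), hg.2⟩

lemma mem_cell_self (S : Finset (ℝ × ℝ)) (f : Quad) : f ∈ cell S f := fun _ _ => mul_self_nonneg _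

lemma cell_subset_of_height_mul_pos (h : ∀ q ∈ S, 0 < height q f * height q g) :
    cell S f ⊆ cell S g := by
  intro z hz q hq
  have : 0 ≤ (height q f * height q g) * (height q g * height q z) := by
    nlinarith [mul_nonneg (hz q hq) (mul_self_nonneg (height q g))]
  exact nonneg_of_mul_nonneg_right this (h q hq)

lemma cell_congr_of_height_mul_pos (h : ∀ q ∈ S, 0 < height q f * height q g) :
    cell S f = cell S g :=
  (cell_subset_of_height_mul_pos h).antisymm
    (cell_subset_of_height_mul_pos fun q hq => by rw [mul_comm]; exact h q hq)

lemma injOn_fst_of_mem_interpolants (hf : f ∈ interpolants T) :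
    Set.InjOn Prod.fst (T : Set (ℝ × ℝ)) := by
  intro p hp q hq hpq
  have hp := sub_eq_zero.1 (hf p hp)
  have hq := sub_eq_zero.1 (hf q hq)
  exact Prod.ext hpq (by rw [← hp, ← hq, hpq])

lemma eq_of_mem_interpolants (hcard : 3 ≤ #T) (hf : f ∈ interpolants T)
    (hg : g ∈ interpolants T) : f = g := by
  obtain ⟨a, ha, b, hb, c, hc, hab, hac, hbc⟩ := two_lt_card.1 hcard
  have hinj := injOn_fst_of_mem_interpolants hf
  have heval : ∀ q ∈ T, eval f q.1 = eval g q.1 := fun q hq =>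
    eval_eq_of_height_eq_zero (hf q hq) (hg q hq)
  exact eq_of_eval_eq (hinj.ne ha hb hab) (hinj.ne ha hc hac) (hinj.ne hb hc hbc)
    (heval a ha) (heval b hb) (heval c hc)

lemma IsBoundedCell.mono (hS : IsBoundedCell S f) (h : S ⊆ S') : IsBoundedCell S' f := fun d hd =>
  let ⟨q, hq, hneg⟩ := hS d hd
  ⟨q, h hq, hneg⟩

lemma exists_eval_eq_zero (hT : #T ≤ 2) : ∃ d : Quad, d ≠ 0 ∧ ∀ p ∈ T, eval d p.1 = 0 := by
  obtain ⟨a, b, hab⟩ : ∃ a b : ℝ × ℝ, ∀ p ∈ T, p = a ∨ p = b := by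
    interval_cases h : #T
    · exact ⟨0, 0, by simp [card_eq_zero.1 h]⟩
    · obtain ⟨a, rfl⟩ := card_eq_one.1 h; exact ⟨a, a, by simp⟩
    · obtain ⟨a, b, -, rfl⟩ := card_eq_two.1 h; exact ⟨a, b, by simp⟩
  refine ⟨!₂[1, -(a.1 + b.1), a.1 * b.1], fun h0 => ?_, fun p hp => ?_⟩
  · simpa using congrArg (fun z : Quad => z 0) h0
  · rcases hab p hp with rfl | rfl <;> simp [eval] <;> ring

lemma IsBoundedCell.nonempty (hS : IsBoundedCell S f) : S.Nonempty := by
  obtain ⟨d, hd, -⟩ := exists_eval_eq_zero (T := ∅) (by simp)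
  obtain ⟨q, hq, -⟩ := hS d hd
  exact ⟨q, hq⟩

end Cells

section MinNorm

/-- `z` is a point of `A` of least norm. -/
def IsMinNorm (A : Set Quad) (z : Quad) : Prop := z ∈ A ∧ ∀ y ∈ A, ‖z‖ ≤ ‖y‖

/-- A point of `A` of least norm; an arbitrary quadratic if there is none. -/
def minNorm (A : Set Quad) : Quad := Classical.epsilon (IsMinNorm A)

variable {A : Set Quad} {y z : Quad}

lemma IsMinNorm.unique (hA : Convex ℝ A) (hy : IsMinNorm A y) (hz : IsMinNorm A z) : y = z := by
  by_contra hne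
  have hnorm : ‖y‖ = ‖z‖ := (hy.2 z hz.1).antisymm (hz.2 y hy.1)
  have hmid := hA hy.1 hz.1 (a := 1 / 2) (b := 1 / 2) (by norm_num) (by norm_num) (by norm_num)
  exact (hy.2 _ hmid).not_gt
    (norm_combo_lt_of_ne le_rfl hnorm.ge hne (by norm_num) (by norm_num) (by norm_num))

lemma isMinNorm_minNorm (hA : IsClosed A) (hne : A.Nonempty) : IsMinNorm A (minNorm A) := by
  obtain ⟨z, hz, h⟩ := hA.exists_infDist_eq_dist hne 0
  refine Classical.epsilon_spec (p := IsMinNorm A) ⟨z, hz, fun y hy => ?_⟩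
  simpa [h] using Metric.infDist_le_dist_of_mem (x := (0 : Quad)) hy

end MinNorm

section Exit

/-- The time at which the ray `g + l • d` meets the plane dual to `q`. -/
def exitTime (g d : Quad) (q : ℝ × ℝ) : ℝ := -height q g / eval d q.1

/-- The exit time with ties broken by the point itself. -/
def exitKey (g d : Quad) (q : ℝ × ℝ) : ℝ ×ₗ (ℝ ×ₗ ℝ) := toLex (exitTime g d q, toLex q)

/-- `q` is dual to the first plane bounding the cell of `f` met by the ray `g + l • d`. -/
def IsExit (S : Finset (ℝ × ℝ)) (f g d : Quad) (q : ℝ × ℝ) : Prop :=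
  (q ∈ S ∧ height q f * eval d q.1 < 0) ∧
    ∀ p ∈ S, height p f * eval d p.1 < 0 → exitKey g d q ≤ exitKey g d p

variable {S : Finset (ℝ × ℝ)} {f g d : Quad} {p q : ℝ × ℝ}

lemma exitKey_injective (g d : Quad) : Function.Injective (exitKey g d) := fun p q h => by
  simpa [exitKey] using congrArg (fun x => ofLex (ofLex x).2) h

lemma exitTime_le_of_exitKey_le (h : exitKey g d p ≤ exitKey g d q) :
    exitTime g d p ≤ exitTime g d q := by
  rcases Prod.Lex.le_iff.1 h with h | h
  exacts [h.le, h.1.le]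

lemma IsExit.unique (hp : IsExit S f g d p) (hq : IsExit S f g d q) : p = q :=
  exitKey_injective g d ((hp.2 q hq.1.1 hq.1.2).antisymm (hq.2 p hp.1.1 hp.1.2))

lemma IsBoundedCell.exists_isExit (hS : IsBoundedCell S f) (g : Quad) (hd : d ≠ 0) :
    ∃ q, IsExit S f g d q := by
  obtain ⟨q, hq, hneg⟩ := hS d hd
  obtain ⟨p, hp, hmin⟩ := exists_min_image {q ∈ S | height q f * eval d q.1 < 0} (exitKey g d)
    ⟨q, mem_filter.2 ⟨hq, hneg⟩⟩
  exact ⟨p, mem_filter.1 hp, fun q hq hneg => hmin q (mem_filter.2 ⟨hq, hneg⟩)⟩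

lemma IsExit.eval_ne_zero (hq : IsExit S f g d q) : eval d q.1 ≠ 0 := by
  intro h; simpa [h] using hq.1.2

lemma IsExit.height_eq_zero (hq : IsExit S f g d q) :
    height q (g + exitTime g d q • d) = 0 := by
  rw [height_add_smul, exitTime, div_mul_cancel₀ _ hq.eval_ne_zero, add_neg_cancel]

lemma IsExit.exitTime_nonneg (hq : IsExit S f g d q) (hg : g ∈ cell S f) :
    0 ≤ exitTime g d q := by
  have hf : height q f ≠ 0 := by intro h; simpa [h] using hq.1.2
  have : exitTime g d q = (height q f * height q g) / (-(height q f * eval d q.1)) := by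
    have := hq.eval_ne_zero
    unfold exitTime; field_simp
  rw [this]
  exact div_nonneg (hg q hq.1.1) (neg_nonneg.2 hq.1.2.le)

lemma IsExit.mem_cell (hq : IsExit S f g d q) (hg : g ∈ cell S f) :
    g + exitTime g d q • d ∈ cell S f := by
  intro p hp
  have hnonneg := hq.exitTime_nonneg hg
  rw [height_add_smul]
  by_cases hneg : height p f * eval d p.1 < 0
  · have hle := exitTime_le_of_exitKey_le (hq.2 p hp hneg)
    have hne : eval d p.1 ≠ 0 := by intro h; simp [h] at hneg
    have : height p g = -exitTime g d p * eval d p.1 := by unfold exitTime; field_simp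
    rw [this]
    nlinarith
  · nlinarith [hg p hp, mul_nonneg hnonneg (not_lt.1 hneg)]

end Exit

section Walk

/-- A stage of the walk from `f` to a vertex of its cell: the current position, and the points
whose dual planes have been reached. -/
structure Stage where
  support : Finset (ℝ × ℝ)
  pos : Quad

namespace Stage

/-- The base point of the current face. -/
def anchor (s : Stage) (S : Finset (ℝ × ℝ)) (f : Quad) : Quad := minNorm (face S f s.support)

open scoped Classical in
/-- The next direction of the walk: away from the anchor, or any direction inside the current flat
if the walk stands at the anchor. -/
def direction (s : Stage) (S : Finset (ℝ × ℝ)) (f : Quad) : Quad :=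
  if s.pos = s.anchor S f then
    Classical.epsilon fun d : Quad => d ≠ 0 ∧ ∀ p ∈ s.support, eval d p.1 = 0
  else s.pos - s.anchor S f

/-- The point dual to the plane through which the walk would leave the cell. -/
def pivot (s : Stage) (S : Finset (ℝ × ℝ)) (f : Quad) : ℝ × ℝ :=
  Classical.epsilon (IsExit S f s.pos (s.direction S f))

/-- The stage at which the walk reaches the boundary of the current face. -/
def next (s : Stage) (S : Finset (ℝ × ℝ)) (f : Quad) : Stage where
  support := insert (s.pivot S f) s.support
  pos := s.pos + exitTime s.pos (s.direction S f) (s.pivot S f) • s.direction S f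

/-- The invariant of the walk. -/
structure IsValid (s : Stage) (S : Finset (ℝ × ℝ)) (f : Quad) : Prop where
  subset : s.support ⊆ S
  mem_face : s.pos ∈ face S f s.support

/-- Finitely many points certifying that the anchor has least norm in the current face. -/
def IsCertificate (s : Stage) (S : Finset (ℝ × ℝ)) (f : Quad) (D : Finset (ℝ × ℝ)) : Prop :=
  D ⊆ S ∧ #D ≤ 4 ∧ ∀ y ∈ face D f s.support, ‖s.anchor S f‖ ≤ ‖y‖

/-- A certificate for the anchor. -/
def certificate (s : Stage) (S : Finset (ℝ × ℝ)) (f : Quad) : Finset (ℝ × ℝ) :=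
  Classical.epsilon (s.IsCertificate S f)

namespace IsValid

variable {s : Stage} {S : Finset (ℝ × ℝ)} {f : Quad}

lemma isMinNorm_anchor (h : s.IsValid S f) : IsMinNorm (face S f s.support) (s.anchor S f) :=
  isMinNorm_minNorm (isClosed_face _ _ _) ⟨_, h.mem_face⟩

lemma direction_spec (h : s.IsValid S f) (hs : #s.support ≤ 2) :
    s.direction S f ≠ 0 ∧ ∀ p ∈ s.support, eval (s.direction S f) p.1 = 0 := by
  unfold direction
  split_ifs with hpos
  · exact Classical.epsilon_spec (exists_eval_eq_zero hs)
  · refine ⟨sub_ne_zero.2 hpos, fun p hp => ?_⟩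
    rw [eval_sub, sub_eq_zero]
    exact eval_eq_of_height_eq_zero (h.mem_face.2 p hp) (h.isMinNorm_anchor.1.2 p hp)

lemma isExit_pivot (h : s.IsValid S f) (hS : IsBoundedCell S f) (hs : #s.support ≤ 2) :
    IsExit S f s.pos (s.direction S f) (s.pivot S f) :=
  Classical.epsilon_spec (hS.exists_isExit s.pos (h.direction_spec hs).1)

lemma card_support_next (h : s.IsValid S f) (hS : IsBoundedCell S f) (hs : #s.support ≤ 2) :
    #(s.next S f).support = #s.support + 1 :=
  card_insert_of_notMem fun hmem =>
    (h.isExit_pivot hS hs).eval_ne_zero ((h.direction_spec hs).2 _ hmem)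

lemma next (h : s.IsValid S f) (hS : IsBoundedCell S f) (hs : #s.support ≤ 2) :
    (s.next S f).IsValid S f := by
  have hexit := h.isExit_pivot hS hs
  refine ⟨insert_subset hexit.1.1 h.subset, hexit.mem_cell h.mem_face.1, fun p hp => ?_⟩
  rcases mem_insert.1 hp with rfl | hp
  · exact hexit.height_eq_zero
  · rw [Stage.next, height_add_smul, (h.direction_spec hs).2 p hp, h.mem_face.2 p hp]; simp

/-- The position lies between the anchor and the next position. -/
lemma height_pos_nonneg (h : s.IsValid S f) (hS : IsBoundedCell S f) (hs : #s.support ≤ 2)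
    {x : ℝ × ℝ} {c : ℝ} (hanchor : 0 ≤ c * height x (s.anchor S f))
    (hnext : 0 ≤ c * height x (s.next S f).pos) : 0 ≤ c * height x s.pos := by
  by_cases hpos : s.pos = s.anchor S f
  · rwa [hpos]
  have hl := (h.isExit_pivot hS hs).exitTime_nonneg h.mem_face.1
  have hdir : s.direction S f = s.pos - s.anchor S f := if_neg hpos
  rw [Stage.next, height_add_smul] at hnext
  set l := exitTime s.pos (s.direction S f) (s.pivot S f)
  have hslope : eval (s.direction S f) x.1 = height x s.pos - height x (s.anchor S f) := by
    rw [hdir, eval_sub]; unfold height; ring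
  rw [hslope] at hnext
  have := mul_nonneg hl hanchor
  by_contra! hneg
  nlinarith

lemma isCertificate_certificate (h : s.IsValid S f) (hS : IsBoundedCell S f) :
    s.IsCertificate S f (s.certificate S f) := by
  refine Classical.epsilon_spec ?_
  by_contra! hnone
  -- By Helly's theorem in dimension three, some point of the face has norm less than the anchor.
  obtain ⟨y, hy⟩ := Convex.helly_theorem' (𝕜 := ℝ) (s := S)
    (F := fun q => face {q} f s.support ∩ Metric.ball 0 ‖s.anchor S f‖)
    (fun q _ => (convex_face _ _ _).inter (convex_ball _ _)) (by
      intro D hD hcard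
      rw [finrank_euclideanSpace_fin] at hcard
      have hnot := hnone D
      simp only [IsCertificate, hD, hcard, true_and, not_forall, not_le] at hnot
      obtain ⟨y, hy, hlt⟩ := hnot
      refine ⟨y, Set.mem_iInter₂.2 fun q hq => ⟨?_, by simpa using hlt⟩⟩
      exact face_anti (singleton_subset_iff.2 hq) _ _ hy)
  rw [Set.mem_iInter₂] at hy
  obtain ⟨q, hq⟩ := hS.nonempty
  have hmem : y ∈ face S f s.support :=
    ⟨fun p hp => (hy p hp).1.1 p (mem_singleton_self p), (hy q hq).1.2⟩
  exact (h.isMinNorm_anchor.2 y hmem).not_gt (mem_ball_zero_iff.1 (hy q hq).2)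

section Insert

variable {x : ℝ × ℝ}

lemma anchor_insert (h : s.IsValid S f) (hx : s.IsValid (insert x S) f)
    (hS : IsBoundedCell S f) (hcert : x ∉ s.certificate (insert x S) f) :
    s.anchor (insert x S) f = s.anchor S f := by
  obtain ⟨hsub, -, hmin⟩ := hx.isCertificate_certificate (hS.mono (subset_insert x S))
  have hsub : s.certificate (insert x S) f ⊆ S := (subset_insert_iff_of_notMem hcert).1 hsub
  exact IsMinNorm.unique (convex_face S f _)
    ⟨face_anti (subset_insert x S) _ _ hx.isMinNorm_anchor.1,
      fun y hy => hmin y (face_anti hsub _ _ hy)⟩ h.isMinNorm_anchor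

lemma next_insert (h : s.IsValid S f) (hx : s.IsValid (insert x S) f) (hS : IsBoundedCell S f)
    (hs : #s.support ≤ 2) (hcert : x ∉ s.certificate (insert x S) f)
    (hpivot : x ≠ s.pivot (insert x S) f) : s.next (insert x S) f = s.next S f := by
  have hdir : s.direction (insert x S) f = s.direction S f := by
    unfold direction; rw [h.anchor_insert hx hS hcert]
  have hexit := hx.isExit_pivot (hS.mono (subset_insert x S)) hs
  have heq : s.pivot (insert x S) f = s.pivot S f := by
    rw [hdir] at hexit
    refine IsExit.unique ⟨⟨mem_of_mem_insert_of_ne hexit.1.1 hpivot.symm, hexit.1.2⟩, ?_⟩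
      (h.isExit_pivot hS hs)
    exact fun p hp => hexit.2 p (mem_insert_of_mem hp)
  unfold Stage.next
  rw [heq, hdir]

end Insert

end IsValid

end Stage

end Walk

section Simplex

/-- The walk from `f` to a vertex of its cell, which is reached after three steps. The anchors met
on the way and this vertex span a simplex containing `f`. -/
def stage (S : Finset (ℝ × ℝ)) (f : Quad) : ℕ → Stage
  | 0 => ⟨∅, f⟩
  | i + 1 => (stage S f i).next S f

/-- The `i`-th anchor of the walk from `f`. -/
def anchor (S : Finset (ℝ × ℝ)) (f : Quad) (i : ℕ) : Quad := (stage S f i).anchor S f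

/-- The `i`-th point whose dual plane is reached by the walk from `f`. -/
def pivot (S : Finset (ℝ × ℝ)) (f : Quad) (i : ℕ) : ℝ × ℝ := (stage S f i).pivot S f

/-- The vertex of the cell of `f` at which the walk ends. -/
def vertex (S : Finset (ℝ × ℝ)) (f : Quad) : Quad := (stage S f 3).pos

/-- The plane dual to `x` does not separate `f` from any vertex of its simplex. -/
def IsClear (S : Finset (ℝ × ℝ)) (f : Quad) (x : ℝ × ℝ) : Prop :=
  (∀ i < 3, 0 ≤ height x f * height x (anchor S f i)) ∧ 0 ≤ height x f * height x (vertex S f)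

/-- A bounded set of points that determines the simplex of `f`. -/
def definers (S : Finset (ℝ × ℝ)) (f : Quad) : Finset (ℝ × ℝ) :=
  (range 3).biUnion fun i => insert (pivot S f i) ((stage S f i).certificate S f)

variable {S : Finset (ℝ × ℝ)} {f g : Quad} {q x : ℝ × ℝ}

lemma stage_valid (hS : IsBoundedCell S f) {i : ℕ} (hi : i ≤ 3) :
    (stage S f i).IsValid S f ∧ #(stage S f i).support = i := by
  induction i with
  | zero => exact ⟨⟨empty_subset S, mem_cell_self S f, fun _ hq => absurd hq (notMem_empty _)⟩, rfl⟩
  | succ i ih =>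
    obtain ⟨hvalid, hcard⟩ := ih (by omega)
    refine ⟨hvalid.next hS (by omega), ?_⟩
    rw [stage, hvalid.card_support_next hS (by omega), hcard]

lemma support_stage (S : Finset (ℝ × ℝ)) (f : Quad) (i : ℕ) :
    (stage S f i).support = (range i).image (pivot S f) := by
  induction i with
  | zero => rfl
  | succ i ih => rw [range_add_one, image_insert, ← ih]; rfl

lemma pivot_mem (hS : IsBoundedCell S f) {i : ℕ} (hi : i < 3) : pivot S f i ∈ S :=
  (stage_valid hS (Nat.succ_le_of_lt hi)).1.subset (mem_insert_self _ _)

lemma card_definers_le (hS : IsBoundedCell S f) : #(definers S f) ≤ 15 := by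
  refine (card_biUnion_le_card_mul _ _ 5 fun i hi => (card_insert_le _ _).trans ?_).trans (by simp)
  have := ((stage_valid hS (mem_range.1 hi).le).1.isCertificate_certificate hS).2.1
  omega

lemma isClear_of_mem (hS : IsBoundedCell S f) (hx : x ∈ S) : IsClear S f x :=
  ⟨fun _ hi => (stage_valid hS hi.le).1.isMinNorm_anchor.1.1 x hx,
    (stage_valid hS le_rfl).1.mem_face.1 x hx⟩

lemma stage_insert (hS : IsBoundedCell S f) (hx : x ∉ definers (insert x S) f) {i : ℕ}
    (hi : i ≤ 3) : stage (insert x S) f i = stage S f i := by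
  induction i with
  | zero => rfl
  | succ i ih =>
    have ih := ih (by omega)
    have hvalid := (stage_valid (hS.mono (subset_insert x S)) (i := i) (by omega)).1
    have hnot : x ∉ insert (pivot (insert x S) f i) _ := fun h =>
      hx (mem_biUnion.2 ⟨i, mem_range.2 hi, h⟩)
    rw [mem_insert, not_or, pivot] at hnot
    rw [ih] at hvalid hnot
    obtain ⟨hvalid', hcard⟩ := stage_valid hS (i := i) (by omega)
    rw [stage, stage, ih, hvalid'.next_insert hvalid hS (by omega) hnot.2 hnot.1]

lemma anchor_insert (hS : IsBoundedCell S f) (hx : x ∉ definers (insert x S) f) {i : ℕ}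
    (hi : i < 3) : anchor (insert x S) f i = anchor S f i := by
  have hstage := stage_insert hS hx hi.le
  have hvalid := (stage_valid (hS.mono (subset_insert x S)) hi.le).1
  have hnot : x ∉ (stage (insert x S) f i).certificate (insert x S) f := fun h =>
    hx (mem_biUnion.2 ⟨i, mem_range.2 hi, mem_insert_of_mem h⟩)
  rw [anchor, anchor]
  rw [hstage] at hvalid hnot ⊢
  exact (stage_valid hS hi.le).1.anchor_insert hvalid hS hnot

lemma isClear_of_notMem_definers (hS : IsBoundedCell S f) (hx : x ∉ definers (insert x S) f) :
    IsClear S f x := by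
  have hclear := isClear_of_mem (hS.mono (subset_insert x S)) (mem_insert_self x S)
  refine ⟨fun i hi => ?_, ?_⟩
  · rw [← anchor_insert hS hx hi]; exact hclear.1 i hi
  · rw [vertex, ← stage_insert hS hx le_rfl]; exact hclear.2

lemma height_mul_nonneg_of_simplex (hS : IsBoundedCell S f) {c : ℝ}
    (hanchor : ∀ i < 3, 0 ≤ c * height x (anchor S f i))
    (hvertex : 0 ≤ c * height x (vertex S f)) : 0 ≤ c * height x f := by
  have hstep : ∀ i < 3, 0 ≤ c * height x (stage S f (i + 1)).pos →
      0 ≤ c * height x (stage S f i).pos := by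
    intro i hi
    obtain ⟨hvalid, hcard⟩ := stage_valid hS hi.le
    exact hvalid.height_pos_nonneg hS (by omega) (hanchor i hi)
  exact hstep 0 (by omega) (hstep 1 (by omega) (hstep 2 (by omega) hvertex))

end Simplex

section Labels

/-- The points of `Z` lie off the graphs in `F`, and no quadratic passes through four of them. -/
structure IsGeneric (F : Finset Quad) (Z : Finset (ℝ × ℝ)) : Prop where
  height_ne_zero : ∀ q ∈ Z, ∀ f ∈ F, height q f ≠ 0
  card_le_three : ∀ g, #{q ∈ Z | height q g = 0} ≤ 3

open scoped Classical in
/-- The combinatorial type of the simplex of `f`: its pivots, and on which side of them `f` lies. -/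
def label (S : Finset (ℝ × ℝ)) (f : Quad) (i : Fin 3) : (ℝ × ℝ) × Bool :=
  (pivot S f i, decide (0 < height (pivot S f i) f))

variable {S : Finset (ℝ × ℝ)} {F : Finset Quad} {f g : Quad} {q x : ℝ × ℝ}

lemma card_image_label_le (hF : ∀ f ∈ F, IsBoundedCell S f) :
    #(F.image (label S)) ≤ 8 * #S ^ 3 := by
  have hsub : F.image (label S) ⊆ Fintype.piFinset fun _ => S ×ˢ univ :=
    image_subset_iff.2 fun f hf => Fintype.mem_piFinset.2 fun i =>
      mem_product.2 ⟨pivot_mem (hF f hf) i.2, mem_univ _⟩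
  refine (card_le_card hsub).trans_eq ?_
  rw [Fintype.card_piFinset_const, card_product, card_univ, Fintype.card_bool]
  ring

lemma height_mul_pos_of_pos_iff_pos (hf : height q f ≠ 0) (hg : height q g ≠ 0)
    (h : 0 < height q f ↔ 0 < height q g) : 0 < height q f * height q g := by
  rcases hf.lt_or_gt with hf | hf
  · exact mul_pos_of_neg_of_neg hf (hg.lt_of_le (not_lt.1 (h.not.1 hf.not_gt)))
  · exact mul_pos hf (h.1 hf)

lemma support_eq_of_label_eq (h : label S f = label S g) {i : ℕ} (hi : i ≤ 3) :
    (stage S f i).support = (stage S g i).support := by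
  rw [support_stage, support_stage]
  refine image_congr fun j hj => ?_
  exact congrArg Prod.fst (congrFun h ⟨j, (mem_range.1 hj).trans_le hi⟩)

lemma vertex_eq_of_label_eq (hf : IsBoundedCell S f) (hg : IsBoundedCell S g)
    (h : label S f = label S g) : vertex S f = vertex S g := by
  obtain ⟨hvalid, hcard⟩ := stage_valid hf le_rfl
  refine eq_of_mem_interpolants hcard.ge hvalid.mem_face.2 ?_
  rw [support_eq_of_label_eq h le_rfl]
  exact (stage_valid hg le_rfl).1.mem_face.2

lemma height_mul_pos_of_mem_support (hF : IsGeneric F S) (hf : f ∈ F) (hg : g ∈ F)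
    (hfS : IsBoundedCell S f) (h : label S f = label S g) (hq : q ∈ (stage S f 3).support) :
    0 < height q f * height q g := by
  rw [support_stage] at hq
  obtain ⟨i, hi, rfl⟩ := mem_image.1 hq
  have hi := mem_range.1 hi
  have hmem := pivot_mem hfS hi
  obtain ⟨hpivot, hsign⟩ := Prod.mk.inj (congrFun h ⟨i, hi⟩)
  refine height_mul_pos_of_pos_iff_pos (hF.height_ne_zero _ hmem f hf)
    (hF.height_ne_zero _ hmem g hg) ?_
  rwa [← hpivot, decide_eq_decide] at hsign

lemma IsGeneric.height_vertex_ne_zero (hF : IsGeneric F S) (hS : IsBoundedCell S f) (hq : q ∈ S)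
    (hsupport : q ∉ (stage S f 3).support) : height q (vertex S f) ≠ 0 := by
  intro hzero
  obtain ⟨hvalid, hcard⟩ := stage_valid hS le_rfl
  have hsub : insert q (stage S f 3).support ⊆ {p ∈ S | height p (vertex S f) = 0} :=
    insert_subset (mem_filter.2 ⟨hq, hzero⟩) fun p hp =>
      mem_filter.2 ⟨hvalid.subset hp, hvalid.mem_face.2 p hp⟩
  have := (card_le_card hsub).trans (hF.card_le_three _)
  rw [card_insert_of_notMem hsupport, hcard] at this
  omega

lemma cell_eq_of_label_eq (hF : IsGeneric F S) (hf : f ∈ F) (hg : g ∈ F)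
    (hfS : IsBoundedCell S f) (hgS : IsBoundedCell S g) (h : label S f = label S g) :
    cell S f = cell S g := by
  refine cell_congr_of_height_mul_pos fun q hq => ?_
  by_cases hsupport : q ∈ (stage S f 3).support
  · exact height_mul_pos_of_mem_support hF hf hg hfS h hsupport
  -- Both cells have the same vertex, which lies strictly on one side of the plane dual to `q`.
  have hne := hF.height_vertex_ne_zero hfS hq hsupport
  have hf' := (stage_valid hfS le_rfl).1.mem_face.1 q hq
  have hg' := (stage_valid hgS le_rfl).1.mem_face.1 q hq
  change 0 ≤ height q f * height q (vertex S f) at hf'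
  change 0 ≤ height q g * height q (vertex S g) at hg'
  rw [← vertex_eq_of_label_eq hfS hgS h] at hg'
  have hf' := hf'.lt_of_ne' (mul_ne_zero (hF.height_ne_zero q hq f hf) hne)
  have hg' := hg'.lt_of_ne' (mul_ne_zero (hF.height_ne_zero q hq g hg) hne)
  refine pos_of_mul_pos_left (b := height q (vertex S f) * height q (vertex S f)) ?_
    (mul_self_nonneg _)
  nlinarith [mul_pos hf' hg']

lemma IsClear.height_mul_nonneg (hx : IsClear S f x) (hF : IsGeneric F S) (hf : f ∈ F)
    (hg : g ∈ F) (hfS : IsBoundedCell S f) (hgS : IsBoundedCell S g)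
    (h : label S f = label S g) : 0 ≤ height x f * height x g := by
  refine height_mul_nonneg_of_simplex hgS (fun i hi => ?_) ?_
  · have : anchor S g i = anchor S f i := by
      simp only [anchor, Stage.anchor, face, cell_eq_of_label_eq hF hf hg hfS hgS h,
        support_eq_of_label_eq h hi.le]
    rw [this]
    exact hx.1 i hi
  · rw [← vertex_eq_of_label_eq hfS hgS h]
    exact hx.2

end Labels

section GeneralPosition

variable {F : Finset Quad} {Z : Finset (ℝ × ℝ)} {f g : Quad}

lemma mem_interpolants_filter (Z : Finset (ℝ × ℝ)) (f : Quad) :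
    f ∈ interpolants {q ∈ Z | height q f = 0} := fun _ hq => (mem_filter.1 hq).2

lemma finite_quadratics_through_three (Z : Finset (ℝ × ℝ)) :
    {f : Quad | 3 ≤ #{q ∈ Z | height q f = 0}}.Finite := by
  refine Set.Finite.of_injOn (f := fun f => {q ∈ Z | height q f = 0}) (t := Z.powerset) ?_ ?_
    (finite_toSet _)
  · exact fun f _ => mem_coe.2 (mem_powerset.2 (filter_subset _ _))
  · intro f hf g _ hfg
    refine eq_of_mem_interpolants hf (mem_interpolants_filter Z f) ?_
    have := mem_interpolants_filter Z g
    rwa [← show {q ∈ Z | height q f = 0} = {q ∈ Z | height q g = 0} from hfg] at this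

lemma IsGeneric.exists_insert (h : IsGeneric F Z) (t : ℝ) {a b : ℝ} (hab : a < b) :
    ∃ y ∈ Set.Ioo a b, (t, y) ∉ Z ∧ IsGeneric F (insert (t, y) Z) := by
  let G := (finite_quadratics_through_three Z).toFinset
  obtain ⟨y, hy, hbad⟩ := (Set.Ioo_infinite hab).exists_notMem_finset
    (F.image (eval · t) ∪ Z.image Prod.snd ∪ G.image (eval · t))
  simp only [mem_union, mem_image, not_or, not_exists, not_and] at hbad
  obtain ⟨⟨hF, hZ⟩, hG⟩ := hbad
  have hnew : (t, y) ∉ Z := fun hmem => hZ _ hmem rfl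
  refine ⟨y, hy, hnew, ⟨fun q hq f hf => ?_, fun g => ?_⟩⟩
  · rcases mem_insert.1 hq with rfl | hq
    · exact sub_ne_zero.2 (hF f hf)
    · exact h.height_ne_zero q hq f hf
  · by_cases hzero : height (t, y) g = 0
    · rw [filter_insert, if_pos hzero, card_insert_of_notMem fun hmem => hnew (mem_filter.1 hmem).1]
      have : ¬ 3 ≤ #{q ∈ Z | height q g = 0} := fun hthree =>
        hG g (by simpa [G] using hthree) (sub_eq_zero.1 hzero)
      omega
    · rw [filter_insert, if_neg hzero]
      exact h.card_le_three g

lemma IsGeneric.exists_family {ι : Type*} (h : IsGeneric F Z) (I : Finset ι)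
    (t : ι → ℝ) {a b : ι → ℝ} (hab : ∀ i ∈ I, a i < b i) :
    ∃ y : ι → ℝ, (∀ i ∈ I, y i ∈ Set.Ioo (a i) (b i)) ∧
      Set.InjOn (fun i => (t i, y i)) (I : Set ι) ∧
      IsGeneric F (Z ∪ I.image fun i => (t i, y i)) := by
  classical
  induction I using Finset.induction_on with
  | empty => exact ⟨0, by simp, by simp, by simpa using h⟩
  | insert i I hi ih =>
    rw [forall_mem_insert] at hab
    obtain ⟨y, hy, hinj, hgen⟩ := ih hab.2
    obtain ⟨y₀, hy₀, hnew, hgen₀⟩ := hgen.exists_insert (t i) hab.1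
    have hold : ∀ j ∈ I, Function.update y i y₀ j = y j := fun j hj =>
      Function.update_of_ne (ne_of_mem_of_not_mem hj hi) _ _
    have himage : I.image (fun j => (t j, Function.update y i y₀ j)) =
        I.image fun j => (t j, y j) :=
      image_congr fun j hj => by simp only [hold j hj]
    refine ⟨Function.update y i y₀, ?_, ?_, ?_⟩
    · rw [forall_mem_insert, Function.update_self]
      exact ⟨hy₀, fun j hj => by rw [hold j hj]; exact hy j hj⟩
    · rw [coe_insert, Set.injOn_insert (mod_cast hi), ← coe_image, himage, Function.update_self]
      refine ⟨fun j hj k hk hjk => hinj hj hk ?_, fun hmem => hnew (mem_union_right _ hmem)⟩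
      simpa only [hold j hj, hold k hk] using hjk
    · rwa [image_insert, himage, Function.update_self, union_insert]

lemma exists_forall_isBoundedCell (F : Finset Quad) : ∃ B : Finset (ℝ × ℝ),
    #B ≤ 6 ∧ IsGeneric F B ∧ ∀ f ∈ F, IsBoundedCell B f := by
  -- One point below and one above all graphs, at each of the abscissas 0, 1 and 2.
  obtain ⟨K, hK⟩ := ((F ×ˢ (univ : Finset (Fin 3))).image fun z => |eval z.1 (z.2 : ℕ)|).exists_le
  have hK : ∀ f ∈ F, ∀ j : Fin 3, |eval f (j : ℕ)| ≤ K := fun f hf j =>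
    hK _ (mem_image.2 ⟨(f, j), by simp [hf], rfl⟩)
  obtain ⟨y, hy, -, hgen⟩ := IsGeneric.exists_family (F := F) (Z := ∅) ⟨by simp, by simp⟩
    (univ : Finset (Fin 3 × Bool)) (fun i => ((i.1 : ℕ) : ℝ))
    (a := fun i => if i.2 then K else -K - 1) (b := fun i => if i.2 then K + 1 else -K)
    (fun i _ => by rcases i with ⟨j, _ | _⟩ <;> simp)
  rw [empty_union] at hgen
  refine ⟨_, card_image_le.trans (by simp), hgen, fun f hf d hd => ?_⟩
  obtain ⟨j, hj⟩ : ∃ j : Fin 3, eval d (j : ℕ) ≠ 0 := by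
    by_contra! hzero
    exact hd (eq_zero_of_eval_eq_zero (by norm_num) (by norm_num) (by norm_num) (hzero 0) (hzero 1)
      (hzero 2))
  have hbound := abs_le.1 (hK f hf j)
  rcases hj.lt_or_gt with hj | hj
  · refine ⟨_, mem_image_of_mem _ (mem_univ (j, false)), mul_neg_of_pos_of_neg ?_ hj⟩
    have := (hy (j, false) (mem_univ _)).2
    simp only [Bool.false_eq_true, if_false] at this
    exact sub_pos.2 (by linarith)
  · refine ⟨_, mem_image_of_mem _ (mem_univ (j, true)), mul_neg_of_neg_of_pos ?_ hj⟩
    have := (hy (j, true) (mem_univ _)).1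
    simp only [if_true] at this
    exact sub_neg.2 (by linarith)

lemma exists_le_abs_height (F : Finset Quad) (p : ℝ × ℝ) :
    ∃ δ > 0, ∀ f ∈ F, height p f ≠ 0 → δ ≤ |height p f| := by
  rcases {f ∈ F | height p f ≠ 0}.eq_empty_or_nonempty with hempty | hne
  · exact ⟨1, one_pos, fun f hf hf0 => absurd hf0 (filter_eq_empty_iff.1 hempty hf)⟩
  · obtain ⟨f, hf, hmin⟩ := exists_min_image _ (fun f => |height p f|) hne
    exact ⟨_, abs_pos.2 (mem_filter.1 hf).2, fun g hg hg0 => hmin g (mem_filter.2 ⟨hg, hg0⟩)⟩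

lemma height_eq_zero_of_sandwich {p : ℝ × ℝ} {y₁ y₂ δ : ℝ} (h₁ : y₁ ∈ Set.Ioo (p.2 - δ) p.2)
    (h₂ : y₂ ∈ Set.Ioo p.2 (p.2 + δ)) (hg : height p g ≠ 0 → δ ≤ |height p g|)
    (hbelow : 0 < height (p.1, y₁) f * height (p.1, y₁) g)
    (habove : 0 < height (p.1, y₂) f * height (p.1, y₂) g) (hf : height p f = 0) :
    height p g = 0 := by
  have hshift : ∀ f y, height (p.1, y) f = height p f + (p.2 - y) := fun f y => by
    unfold height; ring
  rw [hshift f, hshift g, hf] at hbelow habove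
  by_contra! hne
  have := hg hne
  rcases hne.lt_or_gt with hneg | hpos
  · rw [abs_of_neg hneg] at this
    nlinarith [h₁.1, h₁.2]
  · rw [abs_of_pos hpos] at this
    nlinarith [h₂.1, h₂.2]

end GeneralPosition

/-! ### Cuttings -/

section RandomSampling

variable {α ι : Type*} [DecidableEq α] {m : ℕ}

/-- The Clarkson–Shor argument: a conflict of the sample `R` with `x` is charged to the sample
`insert x R` and its definer `x`. -/
lemma sum_card_conflicts_le {conflict : Finset α → α → Prop} [∀ R, DecidablePred (conflict R)]
    {definers : Finset α → Finset α}
    (hmem : ∀ R x, conflict R x → x ∉ R) (hdef : ∀ R x, conflict R x → x ∈ definers (insert x R))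
    (hcard : ∀ R, #(definers R) ≤ m) (Q : Finset α) (r : ℕ) :
    ∑ R ∈ Q.powersetCard r, #{x ∈ Q | conflict R x} ≤ m * (#Q).choose (r + 1) := by
  calc ∑ R ∈ Q.powersetCard r, #{x ∈ Q | conflict R x}
      = #((Q.powersetCard r).sigma fun R => {x ∈ Q | conflict R x}) := (card_sigma _ _).symm
    _ ≤ #((Q.powersetCard (r + 1)).sigma definers) := by
        refine card_le_card_of_injOn (fun z => ⟨insert z.2 z.1, z.2⟩) ?_ ?_
        · rintro ⟨R, x⟩ hz
          simp only [mem_coe, mem_sigma, mem_powersetCard, mem_filter] at hz ⊢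
          obtain ⟨⟨hR, rfl⟩, hx, hconflict⟩ := hz
          exact ⟨⟨insert_subset hx hR, card_insert_of_notMem (hmem R x hconflict)⟩,
            hdef R x hconflict⟩
        · rintro ⟨R, x⟩ hz ⟨R', x'⟩ hz' heq
          simp only [mem_coe, mem_sigma, mem_filter] at hz hz'
          simp only [Sigma.mk.injEq, heq_eq_eq] at heq
          obtain ⟨heq, rfl⟩ := heq
          rw [← erase_insert (hmem R x hz.2.2), heq, erase_insert (hmem R' x hz'.2.2)]
    _ = ∑ R ∈ Q.powersetCard (r + 1), #(definers R) := card_sigma _ _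
    _ ≤ m * (#Q).choose (r + 1) := by
        refine (sum_le_card_nsmul _ _ m fun R _ => hcard R).trans_eq ?_
        rw [card_powersetCard, smul_eq_mul, mul_comm]

lemma exists_sample_sum_card_conflicts_le {conflict : ι → Finset α → α → Prop}
    [∀ i R, DecidablePred (conflict i R)] {definers : ι → Finset α → Finset α} {F : Finset ι}
    (hmem : ∀ i ∈ F, ∀ R x, conflict i R x → x ∉ R)
    (hdef : ∀ i ∈ F, ∀ R x, conflict i R x → x ∈ definers i (insert x R))
    (hcard : ∀ i ∈ F, ∀ R, #(definers i R) ≤ m) (Q : Finset α) (r : ℕ) :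
    ∃ R ⊆ Q, #R ≤ r ∧ r * ∑ i ∈ F, #{x ∈ Q | conflict i R x} ≤ m * #F * #Q := by
  rcases lt_or_ge (#Q) r with hr | hr
  · refine ⟨Q, Subset.rfl, hr.le, ?_⟩
    rw [sum_eq_zero fun i hi => card_eq_zero.2 (filter_eq_empty_iff.2 fun x hx hconflict =>
      hmem i hi Q x hconflict hx)]
    simp
  obtain ⟨R, hR, hmin⟩ := exists_min_image (Q.powersetCard r)
    (fun R => ∑ i ∈ F, #{x ∈ Q | conflict i R x}) (powersetCard_nonempty.2 hr)
  obtain ⟨hRQ, hRr⟩ := mem_powersetCard.1 hR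
  refine ⟨R, hRQ, hRr.le, ?_⟩
  set W := ∑ i ∈ F, #{x ∈ Q | conflict i R x}
  have haverage : (#Q).choose r * W ≤ #F * (m * (#Q).choose (r + 1)) := by
    calc (#Q).choose r * W
        ≤ ∑ R ∈ Q.powersetCard r, ∑ i ∈ F, #{x ∈ Q | conflict i R x} := by
          simpa using card_nsmul_le_sum (Q.powersetCard r) _ _ hmin
      _ = ∑ i ∈ F, ∑ R ∈ Q.powersetCard r, #{x ∈ Q | conflict i R x} := sum_comm
      _ ≤ #F * (m * (#Q).choose (r + 1)) := sum_le_card_nsmul _ _ _ fun i hi =>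
          sum_card_conflicts_le (hmem i hi) (hdef i hi) (hcard i hi) Q r
  have hscaled : (#Q).choose r * (W * (r + 1)) ≤ (#Q).choose r * (m * #F * (#Q - r)) := by
    calc (#Q).choose r * (W * (r + 1)) = ((#Q).choose r * W) * (r + 1) := by ring
      _ ≤ (#F * (m * (#Q).choose (r + 1))) * (r + 1) := by gcongr
      _ = m * #F * ((#Q).choose (r + 1) * (r + 1)) := by ring
      _ = (#Q).choose r * (m * #F * (#Q - r)) := by rw [Nat.choose_succ_right_eq]; ring
  calc r * W ≤ W * (r + 1) := by linarith
    _ ≤ m * #F * (#Q - r) := Nat.le_of_mul_le_mul_left hscaled (Nat.choose_pos hr)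
    _ ≤ m * #F * #Q := by gcongr; exact Nat.sub_le _ _

end RandomSampling

section Cutting

open scoped Classical in
/-- The points of `P` lying on some but not all of the graphs in `G`. -/
def splitters (P : Finset (ℝ × ℝ)) (G : Finset Quad) : Finset (ℝ × ℝ) :=
  {p ∈ P | (∃ f ∈ G, height p f = 0) ∧ ∃ g ∈ G, height p g ≠ 0}

variable {F G : Finset Quad} {S : Finset (ℝ × ℝ)} {P : Finset (ℝ × ℝ)} {f : Quad} {p : ℝ × ℝ}

lemma mem_splitters : p ∈ splitters P G ↔
    p ∈ P ∧ (∃ f ∈ G, height p f = 0) ∧ ∃ g ∈ G, height p g ≠ 0 := by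
  simp [splitters]

lemma splitters_mono (P : Finset (ℝ × ℝ)) (h : G ⊆ F) : splitters P G ⊆ splitters P F := by
  intro p hp
  obtain ⟨hpP, ⟨f, hf, hf0⟩, g, hg, hg0⟩ := mem_splitters.1 hp
  exact mem_splitters.2 ⟨hpP, ⟨f, h hf, hf0⟩, g, h hg, hg0⟩

lemma exists_sample_sum_card_not_isClear_le {B : Finset (ℝ × ℝ)}
    (hB : ∀ f ∈ F, IsBoundedCell B f) (Q : Finset (ℝ × ℝ)) (r : ℕ) :
    open scoped Classical in
    ∃ R ⊆ Q, #R ≤ r ∧ r * ∑ f ∈ F, #{x ∈ Q | ¬ IsClear (R ∪ B) f x} ≤ 15 * #F * #Q := by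
  classical
  have hbounded : ∀ f ∈ F, ∀ R, IsBoundedCell (R ∪ B) f := fun f hf R =>
    (hB f hf).mono subset_union_right
  refine exists_sample_sum_card_conflicts_le (conflict := fun f R x => ¬ IsClear (R ∪ B) f x)
    (definers := fun f R => definers (R ∪ B) f) ?_ ?_ ?_ Q r
  · exact fun f hf R x hx hmem => hx (isClear_of_mem (hbounded f hf R) (mem_union_left _ hmem))
  · intro f hf R x hx
    by_contra hdef
    rw [insert_union] at hdef
    exact hx (isClear_of_notMem_definers (hbounded f hf R) hdef)
  · exact fun f hf R => card_definers_le (hbounded f hf R)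

lemma exists_sandwich {B : Finset (ℝ × ℝ)} (hB : IsGeneric F B) (P : Finset (ℝ × ℝ)) :
    ∃ x : (ℝ × ℝ) × Bool → ℝ × ℝ, Set.InjOn x ↑(P ×ˢ (univ : Finset Bool)) ∧
      IsGeneric F (B ∪ (P ×ˢ univ).image x) ∧ ∀ p ∈ P, ∀ f ∈ F, ∀ g ∈ F,
        (∀ b, 0 < height (x (p, b)) f * height (x (p, b)) g) → height p f = 0 →
          height p g = 0 := by
  choose δ hδ hgap using exists_le_abs_height F
  obtain ⟨y, hy, hinj, hgen⟩ := hB.exists_family (P ×ˢ (univ : Finset Bool)) (fun i => i.1.1)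
    (a := fun i => if i.2 then i.1.2 else i.1.2 - δ i.1)
    (b := fun i => if i.2 then i.1.2 + δ i.1 else i.1.2)
    (fun i _ => by rcases i with ⟨p, _ | _⟩ <;> simpa using hδ p)
  refine ⟨_, hinj, hgen, fun p hp f _ g hg hsame => ?_⟩
  have hbelow := hy (p, false) (by simp [hp])
  have habove := hy (p, true) (by simp [hp])
  simp only [if_true, Bool.false_eq_true, if_false] at hbelow habove
  exact height_eq_zero_of_sandwich hbelow habove (hgap p g hg) (hsame false) (hsame true)

lemma IsGeneric.mono {Z Z' : Finset (ℝ × ℝ)} (hZ : IsGeneric F Z) (h : Z' ⊆ Z) :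
    IsGeneric F Z' :=
  ⟨fun q hq => hZ.height_ne_zero q (h hq), fun g =>
    (card_le_card (filter_subset_filter _ h)).trans (hZ.card_le_three g)⟩

lemma card_splitters_le {Q : Finset (ℝ × ℝ)} {x : (ℝ × ℝ) × Bool → ℝ × ℝ}
    (hS : ∀ g ∈ F, IsBoundedCell S g) (hgen : IsGeneric F (S ∪ Q))
    (hinj : Set.InjOn x ↑(P ×ˢ (univ : Finset Bool))) (hQ : ∀ p ∈ P, ∀ b, x (p, b) ∈ Q)
    (hx : ∀ p ∈ P, ∀ f ∈ F, ∀ g ∈ F, (∀ b, 0 < height (x (p, b)) f * height (x (p, b)) g) →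
      height p f = 0 → height p g = 0) (hf : f ∈ F) :
    open scoped Classical in
    #(splitters P {g ∈ F | label S g = label S f}) ≤ #{q ∈ Q | ¬ IsClear S f q} := by
  classical
  have hconflict : ∀ p ∈ splitters P {g ∈ F | label S g = label S f},
      ∃ b, ¬ IsClear S f (x (p, b)) := by
    intro p hp
    obtain ⟨hpP, ⟨g, hg, hg0⟩, g', hg', hg'0⟩ := mem_splitters.1 hp
    rw [mem_filter] at hg hg'
    by_contra! hclear
    have hpos : ∀ h ∈ F, label S h = label S f →
        ∀ b, 0 < height (x (p, b)) f * height (x (p, b)) h := fun h hh hlabel b =>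
      ((hclear b).height_mul_nonneg (hgen.mono subset_union_left) hf hh (hS f hf) (hS h hh)
        hlabel.symm).lt_of_ne' (mul_ne_zero
          (hgen.height_ne_zero _ (mem_union_right _ (hQ p hpP b)) f hf)
          (hgen.height_ne_zero _ (mem_union_right _ (hQ p hpP b)) h hh))
    have hf0 : height p f = 0 := hx p hpP g hg.1 f hf (fun b => by
      rw [mul_comm]; exact hpos g hg.1 hg.2 b) hg0
    exact hg'0 (hx p hpP f hf g' hg'.1 (hpos g' hg'.1 hg'.2) hf0)
  choose! b hb using hconflict
  have hP : ∀ p ∈ splitters P {g ∈ F | label S g = label S f}, p ∈ P := fun p hp =>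
    (mem_splitters.1 hp).1
  refine card_le_card_of_injOn (fun p => x (p, b p))
    (fun p hp => mem_filter.2 ⟨hQ p (hP p hp) _, hb p hp⟩) fun p hp q hq hpq => ?_
  exact congrArg Prod.fst (hinj (by simp [hP p hp]) (by simp [hP q hq]) hpq)

/-- A cutting of the dual arrangement: on average, few points of `P` split the class of a quadratic
in `F`. -/
lemma exists_cutting (F : Finset Quad) (P : Finset (ℝ × ℝ)) (r : ℕ) :
    ∃ lab : Quad → Fin 3 → (ℝ × ℝ) × Bool, #(F.image lab) ≤ 8 * (r + 6) ^ 3 ∧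
      r * ∑ f ∈ F, #(splitters P {g ∈ F | lab g = lab f}) ≤ 30 * #F * #P := by
  classical
  obtain ⟨B, hBcard, hBgen, hB⟩ := exists_forall_isBoundedCell F
  obtain ⟨x, hinj, hgen, hx⟩ := exists_sandwich hBgen P
  set Q := (P ×ˢ univ).image x
  have hQcard : #Q ≤ 2 * #P := card_image_le.trans (by simp [mul_comm])
  obtain ⟨R, hRQ, hRcard, hR⟩ := exists_sample_sum_card_not_isClear_le hB Q r
  have hbounded : ∀ f ∈ F, IsBoundedCell (R ∪ B) f := fun f hf => (hB f hf).mono subset_union_right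
  refine ⟨label (R ∪ B), (card_image_label_le hbounded).trans ?_, ?_⟩
  · have : #(R ∪ B) ≤ r + 6 := (card_union_le _ _).trans (by omega)
    gcongr
  have hgen' : IsGeneric F (R ∪ B ∪ Q) := hgen.mono (by
    rw [union_right_comm, union_eq_right.2 hRQ, union_comm])
  calc r * ∑ f ∈ F, #(splitters P {g ∈ F | label (R ∪ B) g = label (R ∪ B) f})
      ≤ r * ∑ f ∈ F, #{q ∈ Q | ¬ IsClear (R ∪ B) f q} := by
        refine Nat.mul_le_mul_left r (sum_le_sum fun f hf => ?_)
        convert card_splitters_le hbounded hgen' hinj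
          (fun p hp b => mem_image_of_mem _ (by simp [hp])) hx hf
    _ ≤ 15 * #F * #Q := hR
    _ ≤ 15 * #F * (2 * #P) := by gcongr
    _ = 30 * #F * #P := by ring

end Cutting

/-! ### Bootstrapping -/

section Incidences

lemma card_incidences_eq_sum (P : Finset (ℝ × ℝ)) (F : Finset Quad) :
    #(incidences P F) = ∑ f ∈ F, #{p ∈ P | height p f = 0} := by
  simp only [incidences, card_filter, sum_product_right, height, sub_eq_zero]

lemma le_two_add_choose_three (n : ℕ) : n ≤ 2 + n.choose 3 := by
  induction n with
  | zero => simp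
  | succ n ih =>
    rcases lt_or_ge n 2 with hn | hn
    · omega
    · have := Nat.choose_pos hn
      have : (n + 1).choose 3 = n.choose 2 + n.choose 3 := Nat.choose_succ_succ' n 2
      omega

lemma card_incidences_le_two_mul_add_pow (P : Finset (ℝ × ℝ)) (F : Finset Quad) :
    #(incidences P F) ≤ 2 * #F + #P ^ 3 := by
  classical
  set triples : Quad → Finset (Finset (ℝ × ℝ)) := fun f =>
    {p ∈ P | height p f = 0}.powersetCard 3 with htriples
  have hdisjoint : (F : Set Quad).PairwiseDisjoint triples := by
    intro f _ f' _ hne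
    refine disjoint_left.2 fun T hT hT' => hne ?_
    obtain ⟨hTf, hTcard⟩ := mem_powersetCard.1 hT
    obtain ⟨hTf', -⟩ := mem_powersetCard.1 hT'
    exact eq_of_mem_interpolants hTcard.ge (fun p hp => (mem_filter.1 (hTf hp)).2)
      fun p hp => (mem_filter.1 (hTf' hp)).2
  calc #(incidences P F) = ∑ f ∈ F, #{p ∈ P | height p f = 0} := card_incidences_eq_sum P F
    _ ≤ ∑ f ∈ F, (2 + #(triples f)) := by
        simp only [htriples, card_powersetCard]
        exact sum_le_sum fun f _ => le_two_add_choose_three _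
    _ = 2 * #F + #(F.biUnion triples) := by
        rw [sum_add_distrib, card_biUnion hdisjoint, sum_const, smul_eq_mul, mul_comm]
    _ ≤ 2 * #F + #(P.powersetCard 3) := by
        gcongr
        exact biUnion_subset.2 fun f _ => powersetCard_mono (filter_subset _ _)
    _ ≤ 2 * #F + #P ^ 3 := by
        rw [card_powersetCard]
        gcongr
        exact Nat.choose_le_pow _ _

lemma card_incidences_le_add_splitters (P : Finset (ℝ × ℝ)) {g : Finset Quad} (hg : 2 ≤ #g) :
    #(incidences P g) ≤ 2 * #g + #(incidences (splitters P g) g) := by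
  classical
  have hcommon : #{p ∈ P | ∀ f ∈ g, height p f = 0} ≤ 2 := by
    obtain ⟨f, hf, f', hf', hne⟩ := one_lt_card.1 hg
    by_contra! h
    exact hne (eq_of_mem_interpolants h (fun p hp => (mem_filter.1 hp).2 f hf)
      fun p hp => (mem_filter.1 hp).2 f' hf')
  have hcover : ∀ f ∈ g, #{p ∈ P | height p f = 0} ≤
      2 + #{p ∈ splitters P g | height p f = 0} := by
    intro f hf
    calc #{p ∈ P | height p f = 0}
        ≤ #({p ∈ P | ∀ f ∈ g, height p f = 0} ∪ {p ∈ splitters P g | height p f = 0}) := by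
          refine card_le_card fun p hp => ?_
          obtain ⟨hpP, hpf⟩ := mem_filter.1 hp
          by_cases hall : ∀ f ∈ g, height p f = 0
          · exact mem_union_left _ (mem_filter.2 ⟨hpP, hall⟩)
          · exact mem_union_right _ (mem_filter.2
              ⟨mem_splitters.2 ⟨hpP, ⟨f, hf, hpf⟩, by push Not at hall; exact hall⟩, hpf⟩)
      _ ≤ 2 + #{p ∈ splitters P g | height p f = 0} := (card_union_le _ _).trans (by gcongr)
  calc #(incidences P g) = ∑ f ∈ g, #{p ∈ P | height p f = 0} := card_incidences_eq_sum P g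
    _ ≤ ∑ f ∈ g, (2 + #{p ∈ splitters P g | height p f = 0}) := sum_le_sum hcover
    _ = 2 * #g + #(incidences (splitters P g) g) := by
        rw [sum_add_distrib, sum_const, smul_eq_mul, mul_comm, card_incidences_eq_sum]

end Incidences

section Grouping

lemma exists_pairwiseDisjoint_card_eq {α β : Type*} [DecidableEq α] [DecidableEq β] (lab : α → β)
    {s : ℕ} (hs : 0 < s) (F : Finset α) :
    ∃ G : Finset (Finset α), (∀ g ∈ G, g ⊆ F ∧ #g = s ∧ ∀ a ∈ g, ∀ b ∈ g, lab a = lab b) ∧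
      (G : Set (Finset α)).PairwiseDisjoint id ∧ #(F \ G.biUnion id) ≤ #(F.image lab) * s := by
  induction F using Finset.strongInduction with
  | H F ih =>
  by_cases hsmall : ∀ l ∈ F.image lab, #{f ∈ F | lab f = l} ≤ s
  · refine ⟨∅, by simp, by simp, ?_⟩
    rw [biUnion_empty, sdiff_empty,
      card_eq_sum_card_fiberwise (f := lab) fun f hf => mem_image_of_mem _ hf]
    exact sum_le_card_nsmul _ _ s hsmall
  push Not at hsmall
  obtain ⟨l, -, hl⟩ := hsmall
  obtain ⟨g, hg, hgcard⟩ := exists_subset_card_eq hl.le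
  have hgF : g ⊆ F := hg.trans (filter_subset _ _)
  have hgne : g.Nonempty := card_pos.1 (hgcard ▸ hs)
  obtain ⟨G, hG, hdisjoint, hrest⟩ := ih (F \ g) (sdiff_ssubset hgF hgne)
  refine ⟨insert g G, ?_, ?_, ?_⟩
  · refine forall_mem_insert .. |>.2 ⟨⟨hgF, hgcard, fun a ha b hb => ?_⟩, fun h hh =>
      ⟨(hG h hh).1.trans sdiff_subset, (hG h hh).2⟩⟩
    rw [(mem_filter.1 (hg ha)).2, (mem_filter.1 (hg hb)).2]
  · rw [coe_insert]
    exact hdisjoint.insert fun h hh _ => disjoint_of_subset_right (hG h hh).1 disjoint_sdiff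
  · rw [biUnion_insert, id, ← sup_eq_union, ← sdiff_sdiff_left]
    exact hrest.trans (Nat.mul_le_mul_right s (card_le_card (image_subset_image sdiff_subset)))

lemma exists_groups (P : Finset (ℝ × ℝ)) (F : Finset Quad) {r s : ℕ} (hr : 1 ≤ r) (hs : 0 < s) :
    ∃ G : Finset (Finset Quad), (∀ g ∈ G, g ⊆ F ∧ #g = s) ∧
      (G : Set (Finset Quad)).PairwiseDisjoint id ∧ #(F \ G.biUnion id) ≤ 2744 * r ^ 3 * s ∧
      r * ∑ g ∈ G, #(splitters P g) * s ≤ 30 * #F * #P := by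
  obtain ⟨lab, hlab, hsplit⟩ := exists_cutting F P r
  obtain ⟨G, hG, hdisjoint, hrest⟩ := exists_pairwiseDisjoint_card_eq lab hs F
  refine ⟨G, fun g hg => ⟨(hG g hg).1, (hG g hg).2.1⟩, hdisjoint, ?_, ?_⟩
  · calc #(F \ G.biUnion id) ≤ #(F.image lab) * s := hrest
      _ ≤ 8 * (r + 6) ^ 3 * s := by gcongr
      _ ≤ 8 * (7 * r) ^ 3 * s := by gcongr; omega
      _ = 2744 * r ^ 3 * s := by ring
  refine le_trans (Nat.mul_le_mul_left r ?_) hsplit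
  calc ∑ g ∈ G, #(splitters P g) * s
      = ∑ g ∈ G, ∑ _f ∈ g, #(splitters P g) := sum_congr rfl fun g hg => by
        rw [sum_const, (hG g hg).2.1, smul_eq_mul, mul_comm]
    _ ≤ ∑ g ∈ G, ∑ f ∈ g, #(splitters P {h ∈ F | lab h = lab f}) :=
        sum_le_sum fun g hg => sum_le_sum fun f hf => card_le_card (splitters_mono P fun h hh =>
          mem_filter.2 ⟨(hG g hg).1 hh, (hG g hg).2.2 h hh f hf⟩)
    _ = ∑ f ∈ G.biUnion id, #(splitters P {h ∈ F | lab h = lab f}) := (sum_biUnion hdisjoint).symm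
    _ ≤ ∑ f ∈ F, #(splitters P {h ∈ F | lab h = lab f}) :=
        sum_le_sum_of_subset (biUnion_subset.2 fun g hg => (hG g hg).1)

lemma sum_rpow_two_thirds_le {ι : Type*} (s : Finset ι) {a : ι → ℝ} (ha : ∀ i ∈ s, 0 ≤ a i) :
    ∑ i ∈ s, a i ^ (2 / 3 : ℝ) ≤ (#s : ℝ) ^ (1 / 3 : ℝ) * (∑ i ∈ s, a i) ^ (2 / 3 : ℝ) := by
  have hconj : Real.HolderConjugate 3 (3 / 2) := by rw [Real.holderConjugate_iff]; norm_num
  have hpow : ∑ i ∈ s, (a i ^ (2 / 3 : ℝ)) ^ (3 / 2 : ℝ) = ∑ i ∈ s, a i :=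
    sum_congr rfl fun i hi => by rw [← Real.rpow_mul (ha i hi)]; norm_num
  have h := Real.inner_le_Lp_mul_Lq_of_nonneg s hconj (f := fun _ => 1)
    (g := fun i => a i ^ (2 / 3 : ℝ)) (fun _ _ => zero_le_one)
    fun i hi => Real.rpow_nonneg (ha i hi) _
  rw [hpow] at h
  simpa using h

/-- The bound on the incidences with the grouped quadratics in terms of the number `m` of points,
the number `n` of quadratics, the size `r` of the random sample and the size `s` of the groups. -/
def groupingError (m n r s : ℝ) : ℝ :=
  3 * n + 180 * (n * m / (r * s)) +
    6 * ((n / s) ^ (1 / 3 : ℝ) * (30 * n * m / r) ^ (2 / 3 : ℝ)) +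
    120 * (n * (√s * (1 + Real.log s)))

lemma sum_card_incidences_le_groupingError {G : Finset (Finset Quad)} {P : Finset (ℝ × ℝ)}
    {n r s : ℕ} (hr : 1 ≤ r) (hs : 2 ≤ s) (hG : ∀ g ∈ G, #g = s) (hcard : #G * s ≤ n)
    (hsplit : r * ∑ g ∈ G, #(splitters P g) * s ≤ 30 * n * #P) :
    (∑ g ∈ G, #(incidences P g) : ℝ) ≤ groupingError #P n r s := by
  have hs₀ : (0 : ℝ) < s := by positivity
  have hr₀ : (0 : ℝ) < r := by positivity
  have := Real.log_natCast_nonneg s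
  have hcard' : (#G : ℝ) * s ≤ n := by exact_mod_cast hcard
  have hsplit' : ∑ g ∈ G, (#(splitters P g) : ℝ) * s ≤ 30 * n * #P / r := by
    rw [le_div_iff₀' hr₀]
    exact_mod_cast hsplit
  have hgroup : ∀ g ∈ G, (#(incidences P g) : ℝ) ≤ 3 * s + 6 * #(splitters P g) +
      6 * (#(splitters P g) * s : ℝ) ^ (2 / 3 : ℝ) + 120 * (s * √s * (1 + Real.log s)) := by
    intro g hg
    have hreduce : (#(incidences P g) : ℝ) ≤ 2 * #g + #(incidences (splitters P g) g) :=
      mod_cast card_incidences_le_add_splitters P ((hG g hg).symm ▸ hs)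
    have hbase := card_incidences_le (splitters P g) g
    rw [hG g hg] at hreduce hbase
    linarith
  have hlinear : ∑ g ∈ G, (#(splitters P g) : ℝ) ≤ 30 * (n * #P / (r * s)) := by
    rw [← sum_mul, ← le_div_iff₀ hs₀] at hsplit'
    exact hsplit'.trans_eq (by field_simp)
  have hpower : ∑ g ∈ G, (#(splitters P g) * s : ℝ) ^ (2 / 3 : ℝ) ≤
      (n / s : ℝ) ^ (1 / 3 : ℝ) * (30 * n * #P / r : ℝ) ^ (2 / 3 : ℝ) := by
    refine (sum_rpow_two_thirds_le G fun g _ => by positivity).trans ?_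
    rw [← le_div_iff₀ hs₀] at hcard'
    gcongr
  have hrest : (#G : ℝ) * (s * √s * (1 + Real.log s)) ≤ n * (√s * (1 + Real.log s)) := by
    calc (#G : ℝ) * (s * √s * (1 + Real.log s)) = #G * s * (√s * (1 + Real.log s)) := by ring
      _ ≤ n * (√s * (1 + Real.log s)) := by gcongr
  calc (∑ g ∈ G, #(incidences P g) : ℝ)
      ≤ 3 * (#G * s) + 6 * ∑ g ∈ G, (#(splitters P g) : ℝ) +
          6 * ∑ g ∈ G, (#(splitters P g) * s : ℝ) ^ (2 / 3 : ℝ) +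
          120 * (#G * (s * √s * (1 + Real.log s))) := by
        refine (sum_le_sum hgroup).trans_eq ?_
        simp only [sum_add_distrib, sum_const, nsmul_eq_mul, ← mul_sum]
        ring
    _ ≤ groupingError #P n r s := by unfold groupingError; linarith

lemma exists_subset_card_incidences_le (P : Finset (ℝ × ℝ)) (F : Finset Quad) {r s : ℕ}
    (hr : 1 ≤ r) (hs : 2 ≤ s) :
    ∃ F' ⊆ F, #F' ≤ 2744 * r ^ 3 * s ∧
      (#(incidences P F) : ℝ) ≤ #(incidences P F') + groupingError #P #F r s := by
  obtain ⟨G, hG, hdisjoint, hrest, hsplit⟩ := exists_groups P F hr (by omega : 0 < s)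
  have hsub : G.biUnion id ⊆ F := biUnion_subset.2 fun g hg => (hG g hg).1
  have hcard : #G * s ≤ #F := by
    calc #G * s = ∑ g ∈ G, #(id g) := (sum_const_nat fun g hg => (hG g hg).2).symm
      _ = #(G.biUnion id) := (card_biUnion hdisjoint).symm
      _ ≤ #F := card_le_card hsub
  have hdecompose : #(incidences P F) =
      #(incidences P (F \ G.biUnion id)) + ∑ g ∈ G, #(incidences P g) := by
    simp only [card_incidences_eq_sum]
    rw [← sum_sdiff hsub, sum_biUnion hdisjoint]
    rfl
  refine ⟨F \ G.biUnion id, sdiff_subset, hrest, ?_⟩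
  rw [hdecompose]
  push_cast
  gcongr
  exact sum_card_incidences_le_groupingError hr hs (fun g hg => (hG g hg).2) hcard hsplit

end Grouping

section GroupSize

variable {m n : ℝ}

/-- The logarithm of `m / n ^ (1 / 3)`: it measures by how much `m` points and `n` quadratics leave
the range `m ^ 3 ≲ n` where the elementary bound on the number of incidences is linear. -/
def logRatio (m n : ℝ) : ℝ := Real.log m - Real.log n / 3

/-- The size `s` of the groups that balances the last two terms of `groupingError m n r s` when
`r ^ 3 * s` is comparable to `n`. -/
def groupSize (m n : ℝ) : ℝ :=
  Real.exp (12 / 11 * logRatio m n - 18 / 11 * Real.log (1 + logRatio m n))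

/-- The dominant term of the bound on the number of incidences of `m` points and `n` quadratics. -/
def lensBound (m n : ℝ) : ℝ :=
  m ^ (6 / 11 : ℝ) * n ^ (9 / 11 : ℝ) * (1 + Real.log n) ^ (2 / 11 : ℝ)

lemma log_one_add_le {u : ℝ} (hu : 0 ≤ u) : Real.log (1 + u) ≤ 3 / 10 * u + 1 := by
  have hbernoulli := Real.log_le_sub_one_of_pos (show 0 < (1 + u) * (3 / 10) by linarith)
  rw [Real.log_mul (by linarith) (by norm_num)] at hbernoulli
  have hinv : Real.log (3 / 10)⁻¹ ≤ Real.log (2 ^ 2) :=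
    Real.log_le_log (by norm_num) (by norm_num)
  rw [Real.log_inv, Real.log_pow] at hinv
  have := Real.log_two_lt_d9
  push_cast at hinv
  linarith

lemma log_groupSize (m n : ℝ) : Real.log (groupSize m n) =
    12 / 11 * logRatio m n - 18 / 11 * Real.log (1 + logRatio m n) :=
  Real.log_exp _

lemma log_eq_logRatio_add (m n : ℝ) : Real.log m = logRatio m n + Real.log n / 3 := by
  unfold logRatio
  ring

lemma groupSize_pos (m n : ℝ) : 0 < groupSize m n := Real.exp_pos _

lemma four_le_logRatio (hn : 0 < n) (h : 2 ^ 18 * n ≤ m ^ 3) : 4 ≤ logRatio m n := by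
  have hlog := Real.log_le_log (by positivity) h
  rw [Real.log_mul (by norm_num) hn.ne', Real.log_pow, Real.log_pow] at hlog
  push_cast at hlog
  linarith [Real.log_two_gt_d9, log_eq_logRatio_add m n]

lemma one_lt_groupSize (hu : 4 ≤ logRatio m n) : 1 < groupSize m n := by
  have := log_one_add_le (zero_le_four.trans hu)
  rw [groupSize, Real.one_lt_exp_iff]
  linarith

lemma lensBound_nonneg (hm : 0 ≤ m) (n : ℕ) : 0 ≤ lensBound m n := by
  have := Real.log_natCast_nonneg n
  unfold lensBound
  positivity

lemma lensBound_le_of_le_half (hm : 0 ≤ m) {n n' : ℕ} (hn : 0 < n) (h : (n' : ℝ) ≤ n / 2) :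
    lensBound m n' ≤ 3 / 4 * lensBound m n := by
  have hlog' := Real.log_natCast_nonneg n'
  have hlog : Real.log n' ≤ Real.log n := by
    rcases n'.eq_zero_or_pos with rfl | hn'
    · simpa using Real.log_natCast_nonneg n
    · have : (0 : ℝ) < n := by positivity
      exact Real.log_le_log (by positivity) (by linarith)
  have hhalf : (1 / 2 : ℝ) ^ (9 / 11 : ℝ) ≤ 3 / 4 := by
    calc (1 / 2 : ℝ) ^ (9 / 11 : ℝ) ≤ (1 / 2 : ℝ) ^ (1 / 2 : ℝ) :=
          Real.rpow_le_rpow_of_exponent_ge (by norm_num) (by norm_num) (by norm_num)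
      _ ≤ 3 / 4 := by rw [← Real.sqrt_eq_rpow]; exact Real.sqrt_le_iff.2 (by norm_num)
  have hpow : (n' : ℝ) ^ (9 / 11 : ℝ) ≤ 3 / 4 * (n : ℝ) ^ (9 / 11 : ℝ) := by
    calc (n' : ℝ) ^ (9 / 11 : ℝ) ≤ (1 / 2 * n : ℝ) ^ (9 / 11 : ℝ) := by gcongr; linarith
      _ = (1 / 2 : ℝ) ^ (9 / 11 : ℝ) * (n : ℝ) ^ (9 / 11 : ℝ) :=
          Real.mul_rpow (by norm_num) (by positivity)
      _ ≤ 3 / 4 * (n : ℝ) ^ (9 / 11 : ℝ) := by gcongr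
  calc lensBound m n'
      ≤ m ^ (6 / 11 : ℝ) * (3 / 4 * (n : ℝ) ^ (9 / 11 : ℝ)) *
          (1 + Real.log n) ^ (2 / 11 : ℝ) := by unfold lensBound; gcongr
    _ = 3 / 4 * lensBound m n := by unfold lensBound; ring

lemma mul_sqrt_mul_one_add_log_le {c u y : ℝ} (hn : 0 < n) (hy : 0 < y) (hu : 0 ≤ u)
    (h : 1 + Real.log y ≤ c * (1 + u)) :
    n * (√y * (1 + Real.log y)) ≤
      c * Real.exp (Real.log n + Real.log y / 2 + Real.log (1 + u)) := by
  have hsqrt : √y = Real.exp (Real.log y / 2) := by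
    rw [← Real.log_sqrt hy.le, Real.exp_log (Real.sqrt_pos.2 hy)]
  calc n * (√y * (1 + Real.log y)) ≤ n * (√y * (c * (1 + u))) := by gcongr
    _ = c * Real.exp (Real.log n + Real.log y / 2 + Real.log (1 + u)) := by
        rw [Real.exp_add, Real.exp_add, Real.exp_log hn, Real.exp_log (by linarith), hsqrt]
        ring

lemma mul_sqrt_mul_one_add_log_le_rpow (hm : 0 < m) (hn : 0 < n) (hu : 0 ≤ logRatio m n)
    (h : n < 2 ^ 14 * groupSize m n) :
    n * √n * (1 + Real.log n) ≤ 12 * Real.exp 6 * (m * n) ^ (2 / 3 : ℝ) := by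
  have hlog := Real.log_lt_log hn h
  rw [Real.log_mul (by norm_num) (groupSize_pos m n).ne', Real.log_pow, log_groupSize] at hlog
  have hlog_nonneg : 0 ≤ Real.log (1 + logRatio m n) := Real.log_nonneg (by linarith)
  have := Real.log_two_lt_d9
  push_cast at hlog
  calc n * √n * (1 + Real.log n) = n * (√n * (1 + Real.log n)) := mul_assoc _ _ _
    _ ≤ 12 * Real.exp (Real.log n + Real.log n / 2 + Real.log (1 + logRatio m n)) :=
        mul_sqrt_mul_one_add_log_le hn hn hu (by linarith)
    _ ≤ 12 * Real.exp (6 + Real.log (m * n) * (2 / 3)) := by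
        refine mul_le_mul_of_nonneg_left (Real.exp_le_exp.2 ?_) (by norm_num)
        rw [Real.log_mul hm.ne' hn.ne']
        linarith [log_eq_logRatio_add m n]
    _ = 12 * Real.exp 6 * (m * n) ^ (2 / 3 : ℝ) := by
        rw [Real.exp_add, Real.rpow_def_of_pos (by positivity), mul_assoc]

lemma log_sizes_le {r s : ℝ} (hn : 0 < n) (hr : 0 < r) (hs : 0 < s) (hs_lower : groupSize m n ≤ s)
    (hs_upper : s ≤ 2 * groupSize m n) (hr_lower : n ≤ 2 ^ 16 * r ^ 3 * s) :
    12 / 11 * logRatio m n - 18 / 11 * Real.log (1 + logRatio m n) ≤ Real.log s ∧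
      Real.log s ≤
        Real.log 2 + (12 / 11 * logRatio m n - 18 / 11 * Real.log (1 + logRatio m n)) ∧
      Real.log n ≤ 16 * Real.log 2 + 3 * Real.log r + Real.log s := by
  rw [← log_groupSize, ← Real.log_mul two_ne_zero (groupSize_pos m n).ne']
  refine ⟨Real.log_le_log (groupSize_pos m n) hs_lower, Real.log_le_log hs hs_upper, ?_⟩
  have hlog := Real.log_le_log hn hr_lower
  rwa [Real.log_mul (by positivity) hs.ne', Real.log_mul (by norm_num) (by positivity),
    Real.log_pow, Real.log_pow] at hlog

lemma groupingError_le_exp {r s : ℝ} (hm : 0 < m) (hn : 0 < n) (hr : 0 < r) (hs : 0 < s)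
    (hu : 0 ≤ logRatio m n) (hs_lower : groupSize m n ≤ s) (hs_upper : s ≤ 2 * groupSize m n)
    (hr_lower : n ≤ 2 ^ 16 * r ^ 3 * s) :
    groupingError m n r s ≤ 429 * Real.exp (17 + (Real.log m * (6 / 11) + Real.log n * (9 / 11) +
      Real.log (1 + logRatio m n) * (2 / 11))) := by
  set E := Real.exp (17 + (Real.log m * (6 / 11) + Real.log n * (9 / 11) +
      Real.log (1 + logRatio m n) * (2 / 11))) with hE
  obtain ⟨hlog_s, hlog_s', hlog_r⟩ := log_sizes_le hn hr hs hs_lower hs_upper hr_lower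
  have hlog_m := log_eq_logRatio_add m n
  have hL : 0 ≤ Real.log (1 + logRatio m n) := Real.log_nonneg (by linarith)
  have hL' := log_one_add_le hu
  have hlog_two := Real.log_two_lt_d9
  have hlog_thirty : Real.log 30 ≤ 5 * Real.log 2 := by
    simpa using Real.log_le_log (by norm_num) (show (30 : ℝ) ≤ 2 ^ 5 by norm_num)
  have hn_le : n ≤ E := by
    rw [← Real.log_le_iff_le_exp hn]
    linarith
  have hratio_le : n * m / (r * s) ≤ E := by
    rw [← Real.log_le_iff_le_exp (by positivity), Real.log_div (by positivity) (by positivity),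
      Real.log_mul hn.ne' hm.ne', Real.log_mul hr.ne' hs.ne']
    linarith
  have hpow_le : (n / s) ^ (1 / 3 : ℝ) * (30 * n * m / r) ^ (2 / 3 : ℝ) ≤ E := by
    rw [← Real.log_le_iff_le_exp (by positivity), Real.log_mul (by positivity) (by positivity),
      Real.log_rpow (by positivity), Real.log_rpow (by positivity), Real.log_div hn.ne' hs.ne',
      Real.log_div (by positivity) hr.ne', Real.log_mul (by positivity) hm.ne',
      Real.log_mul (by norm_num) hn.ne']
    linarith
  have hsqrt_le : n * (√s * (1 + Real.log s)) ≤ 2 * E := by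
    refine (mul_sqrt_mul_one_add_log_le (c := 2) hn hs hu (by linarith)).trans ?_
    rw [hE]
    refine mul_le_mul_of_nonneg_left (Real.exp_le_exp.2 ?_) zero_le_two
    linarith
  unfold groupingError
  linarith

lemma exp_le_lensBound (hm : 0 < m) (hn : 1 ≤ n) (hu : 0 ≤ logRatio m n)
    (h : 2 ^ 14 * groupSize m n ≤ n) :
    Real.exp (Real.log m * (6 / 11) + Real.log n * (9 / 11) +
      Real.log (1 + logRatio m n) * (2 / 11)) ≤ 4 * lensBound m n := by
  have hlog_n := Real.log_nonneg hn
  have hlog := Real.log_le_log (mul_pos (by norm_num) (groupSize_pos m n)) h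
  rw [Real.log_mul (by norm_num) (groupSize_pos m n).ne', Real.log_pow, log_groupSize] at hlog
  push_cast at hlog
  have := log_one_add_le hu
  have := Real.log_two_gt_d9
  have hL : Real.log (1 + logRatio m n) ≤ Real.log 4 + Real.log (1 + Real.log n) := by
    rw [← Real.log_mul (by norm_num) (by linarith)]
    exact Real.log_le_log (by linarith) (by linarith)
  have hlog_four : 0 ≤ Real.log 4 := Real.log_nonneg (by norm_num)
  have : 0 < lensBound m n := by unfold lensBound; positivity
  rw [← Real.le_log_iff_exp_le (by positivity), Real.log_mul (by norm_num) this.ne', lensBound,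
    Real.log_mul (by positivity) (by positivity), Real.log_mul (by positivity) (by positivity),
    Real.log_rpow hm, Real.log_rpow (by linarith), Real.log_rpow (by linarith)]
  linarith

lemma groupingError_le_lensBound {r s : ℝ} (hm : 0 < m) (hn : 1 ≤ n) (hr : 0 < r) (hs : 0 < s)
    (hu : 0 ≤ logRatio m n) (h : 2 ^ 14 * groupSize m n ≤ n) (hs_lower : groupSize m n ≤ s)
    (hs_upper : s ≤ 2 * groupSize m n) (hr_lower : n ≤ 2 ^ 16 * r ^ 3 * s) :
    groupingError m n r s ≤ 1716 * Real.exp 17 * lensBound m n := by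
  refine (groupingError_le_exp hm (by linarith) hr hs hu hs_lower hs_upper hr_lower).trans ?_
  rw [Real.exp_add]
  calc _ ≤ 429 * (Real.exp 17 * (4 * lensBound m n)) := by gcongr; exact exp_le_lensBound hm hn hu h
    _ = 1716 * Real.exp 17 * lensBound m n := by ring

lemma exists_nat_pow_three_le {x : ℝ} (hx : 1 ≤ x) :
    ∃ r : ℕ, 1 ≤ r ∧ (r : ℝ) ^ 3 ≤ x ∧ x ≤ 8 * (r : ℝ) ^ 3 := by
  set c := x ^ (1 / 3 : ℝ) with hc
  have hcube : c ^ 3 = x := by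
    rw [hc, ← Real.rpow_natCast, ← Real.rpow_mul (by linarith)]
    norm_num
  have hc₁ : 1 ≤ c := Real.one_le_rpow hx (by norm_num)
  have hr : 1 ≤ ⌊c⌋₊ := (Nat.one_le_floor_iff c).2 hc₁
  refine ⟨⌊c⌋₊, hr, ?_, ?_⟩
  · rw [← hcube]
    gcongr
    exact Nat.floor_le (by linarith)
  · have hr' : (1 : ℝ) ≤ ⌊c⌋₊ := by exact_mod_cast hr
    have := Nat.lt_floor_add_one c
    calc x = c ^ 3 := hcube.symm
      _ ≤ (2 * ⌊c⌋₊ : ℝ) ^ 3 := by gcongr; linarith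
      _ = 8 * (⌊c⌋₊ : ℝ) ^ 3 := by ring

lemma exists_sample_size_group_size {σ : ℝ} (hσ : 1 < σ) (h : 2 ^ 14 * σ ≤ n) :
    ∃ r s : ℕ, 1 ≤ r ∧ 2 ≤ s ∧ σ ≤ s ∧ s ≤ 2 * σ ∧ 2 * (2744 * (r : ℝ) ^ 3 * s) ≤ n ∧
      n ≤ 2 ^ 16 * (r : ℝ) ^ 3 * s := by
  have hs_lower : σ ≤ ⌈σ⌉₊ := Nat.le_ceil σ
  have hs_upper : (⌈σ⌉₊ : ℝ) ≤ 2 * σ := by linarith [Nat.ceil_lt_add_one (by linarith : 0 ≤ σ)]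
  have hs : 2 ≤ ⌈σ⌉₊ := by exact_mod_cast Nat.lt_ceil.2 (by simpa using hσ)
  have : (0 : ℝ) < ⌈σ⌉₊ := by linarith
  obtain ⟨r, hr, hr_upper, hr_lower⟩ := exists_nat_pow_three_le (x := n / (5488 * ⌈σ⌉₊)) (by
    rw [le_div_iff₀ (by positivity)]
    linarith)
  rw [le_div_iff₀ (by positivity)] at hr_upper
  rw [div_le_iff₀ (by positivity)] at hr_lower
  have : 0 ≤ (r : ℝ) ^ 3 * ⌈σ⌉₊ := by positivity
  exact ⟨r, ⌈σ⌉₊, hr, hs, hs_lower, hs_upper, by linarith, by linarith⟩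

end GroupSize

/-- Below the thresholds the elementary bounds suffice; above them, grouping leaves at most half of
the quadratics. -/
lemma card_incidences_le_or_exists_subset (P : Finset (ℝ × ℝ)) (F : Finset Quad) :
    (#(incidences P F) : ℝ) ≤
        (2 ^ 18 + 8 + 1440 * Real.exp 6) * (#P + #F + ((#P : ℝ) * #F) ^ (2 / 3 : ℝ)) ∨
      ∃ F' ⊂ F, (#F' : ℝ) ≤ #F / 2 ∧ (#(incidences P F) : ℝ) ≤
        #(incidences P F') + 1716 * Real.exp 17 * lensBound #P #F := by
  set R := ((#P : ℝ) * #F) ^ (2 / 3 : ℝ)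
  have hR : 0 ≤ R := by positivity
  have hexp := Real.exp_pos 6
  rcases F.eq_empty_or_nonempty with rfl | hF
  · left
    rw [card_incidences_eq_sum, sum_empty, Nat.cast_zero]
    positivity
  have hn : (1 : ℝ) ≤ #F := mod_cast hF.card_pos
  rcases le_or_gt ((#P : ℝ) ^ 3) (2 ^ 18 * #F) with hsmall | hlarge
  · left
    have htrivial : (#(incidences P F) : ℝ) ≤ 2 * #F + (#P : ℝ) ^ 3 :=
      mod_cast card_incidences_le_two_mul_add_pow P F
    nlinarith [Nat.cast_nonneg (α := ℝ) #P]
  have hu := four_le_logRatio (by linarith) hlarge.le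
  have hm : (0 : ℝ) < #P := by
    refine (Nat.cast_nonneg _).lt_of_ne fun h => ?_
    rw [← h] at hlarge
    norm_num at hlarge
    linarith
  rcases lt_or_ge (#F : ℝ) (2 ^ 14 * groupSize #P #F) with hfew | hmany
  · left
    have hbase := card_incidences_le P F
    have hlens := mul_sqrt_mul_one_add_log_le_rpow hm (by linarith) (by linarith) hfew
    nlinarith [mul_nonneg hexp.le hm.le, mul_nonneg hexp.le (zero_le_one.trans hn)]
  right
  obtain ⟨r, s, hr, hs, hs_lower, hs_upper, hhalf, hr_lower⟩ :=
    exists_sample_size_group_size (one_lt_groupSize hu) hmany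
  obtain ⟨F', hF', hcard, hI⟩ := exists_subset_card_incidences_le P F hr hs
  have hcard' : (#F' : ℝ) ≤ #F / 2 := by
    have : (#F' : ℝ) ≤ 2744 * (r : ℝ) ^ 3 * s := mod_cast hcard
    linarith
  refine ⟨F', hF'.ssubset_of_ne fun h => ?_, hcard', hI.trans ?_⟩
  · rw [h] at hcard'
    linarith
  · gcongr
    exact groupingError_le_lensBound hm hn (by positivity) (by positivity) (by linarith) hmany
      hs_lower hs_upper hr_lower

theorem exists_card_incidences_le : ∃ A : ℝ, 0 < A ∧ ∀ (P : Finset (ℝ × ℝ)) (F : Finset Quad),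
    (#(incidences P F) : ℝ) ≤
      A * (#P + #F + ((#P : ℝ) * #F) ^ (2 / 3 : ℝ) + lensBound #P #F) := by
  set A₁ := 2 ^ 18 + 8 + 1440 * Real.exp 6
  set A₂ := 1716 * Real.exp 17
  have hA₁ : 0 < A₁ := by positivity
  have hA₂ : 0 < A₂ := by positivity
  have hbound (P : Finset (ℝ × ℝ)) (F : Finset Quad) : (#(incidences P F) : ℝ) ≤
      A₁ * (#P + #F + ((#P : ℝ) * #F) ^ (2 / 3 : ℝ)) + 4 * A₂ * lensBound #P #F := by
    induction F using Finset.strongInduction with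
    | H F ih =>
    have hlens := lensBound_nonneg (Nat.cast_nonneg (α := ℝ) #P) #F
    rcases card_incidences_le_or_exists_subset P F with hbase | ⟨F', hF', hhalf, hstep⟩
    · exact hbase.trans (le_add_of_nonneg_right (by positivity))
    have hcard : (#F' : ℝ) ≤ #F := mod_cast card_le_card hF'.subset
    calc (#(incidences P F) : ℝ) ≤ #(incidences P F') + A₂ * lensBound #P #F := hstep
      _ ≤ A₁ * (#P + #F' + ((#P : ℝ) * #F') ^ (2 / 3 : ℝ)) +
            4 * A₂ * (3 / 4 * lensBound #P #F) + A₂ * lensBound #P #F := by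
          refine add_le_add_left ((ih F' hF').trans ?_) _
          gcongr
          exact lensBound_le_of_le_half (Nat.cast_nonneg _)
            ((Nat.zero_le _).trans_lt (card_lt_card hF')) hhalf
      _ ≤ A₁ * (#P + #F + ((#P : ℝ) * #F) ^ (2 / 3 : ℝ)) +
            4 * A₂ * (3 / 4 * lensBound #P #F) + A₂ * lensBound #P #F := by gcongr
      _ = A₁ * (#P + #F + ((#P : ℝ) * #F) ^ (2 / 3 : ℝ)) + 4 * A₂ * lensBound #P #F := by ring
  refine ⟨A₁ + 4 * A₂, by positivity, fun P F => (hbound P F).trans ?_⟩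
  have hlens := lensBound_nonneg (Nat.cast_nonneg (α := ℝ) #P) #F
  have hrest : 0 ≤ #P + #F + ((#P : ℝ) * #F) ^ (2 / 3 : ℝ) := by positivity
  nlinarith [mul_nonneg hA₁.le hlens, mul_nonneg hA₂.le hrest]

/-! ### Duality -/

section Duality

variable {p : ℝ × ℝ} {f : Quad}

/-- The line dual to the point `p`. Its normal vector `(1 - t ^ 2, 2 * t)`, where `t = p.1`, has
length `1 + t ^ 2`, so the distance to the line is rational in `t` and every direction occurs. -/
def dualLine (p : ℝ × ℝ) : Set Pt2 := {x | (1 - p.1 ^ 2) * x 0 + 2 * p.1 * x 1 = p.2}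

/-- The circle whose tangents at signed distance `(f 0 + f 2) / 2` from its center are the lines
dual to the points on the graph of `f`. -/
def dualCircle (f : Quad) : Set Pt2 :=
  Metric.sphere !₂[(f 2 - f 0) / 2, f 1 / 2] |(f 0 + f 2) / 2|

/-- The quadratic dual to the same circle as `f`, with the opposite signed radius. -/
def reverse (f : Quad) : Quad := !₂[-f 2, f 1, -f 0]

lemma dualCircle_reverse (f : Quad) : dualCircle (reverse f) = dualCircle f := by
  have hcenter : -f 0 + f 2 = f 2 - f 0 := by ring
  have hradius : (-f 2 + -f 0) / 2 = -((f 0 + f 2) / 2) := by ring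
  simp [dualCircle, reverse, hcenter, hradius]

lemma mem_dualCircle {x : Pt2} : x ∈ dualCircle f ↔
    (x 0 - (f 2 - f 0) / 2) ^ 2 + (x 1 - f 1 / 2) ^ 2 = ((f 0 + f 2) / 2) ^ 2 := by
  rw [dualCircle, Metric.mem_sphere, ← sq_eq_sq₀ dist_nonneg (abs_nonneg _), sq_abs,
    EuclideanSpace.dist_sq_eq]
  simp [Real.dist_eq]

lemma exists_eq_dualCircle {s : Set Pt2} (hs : IsCircle2 s) :
    ∃ f, s = dualCircle f := by
  obtain ⟨c, r, hr, rfl⟩ := hs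
  refine ⟨!₂[r - c 0, 2 * c 1, r + c 0], ?_⟩
  have hcenter : !₂[c 0, c 1] = c := by ext i; fin_cases i <;> rfl
  simp [dualCircle, hcenter, abs_of_pos hr]

lemma exists_normal_perpendicular (v : Pt2) : ∃ t : ℝ, (1 - t ^ 2) * v 0 + 2 * t * v 1 = 0 := by
  rcases eq_or_ne (v 0) 0 with h | h
  · exact ⟨0, by simp [h]⟩
  · refine ⟨(v 1 + √(v 0 ^ 2 + v 1 ^ 2)) / v 0, ?_⟩
    have hsq := Real.sq_sqrt (show 0 ≤ v 0 ^ 2 + v 1 ^ 2 by positivity)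
    field_simp
    linear_combination -hsq

lemma exists_eq_dualLine {l : Set Pt2} (hl : IsLine2 l) : ∃ p, l = dualLine p := by
  obtain ⟨a, v, hv, rfl⟩ := hl
  obtain ⟨t, ht⟩ := exists_normal_perpendicular v
  refine ⟨(t, (1 - t ^ 2) * a 0 + 2 * t * a 1), Set.ext fun x => ⟨?_, fun hx => ?_⟩⟩
  · rintro ⟨s, rfl⟩
    simp only [dualLine, Set.mem_ofPred_eq, PiLp.add_apply, PiLp.smul_apply, smul_eq_mul]
    linear_combination s * ht
  replace hx : (1 - t ^ 2) * x 0 + 2 * t * x 1 = (1 - t ^ 2) * a 0 + 2 * t * a 1 := hx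
  have hparallel : v 0 * (x 1 - a 1) = v 1 * (x 0 - a 0) := by
    refine mul_left_cancel₀ (show (1 + t ^ 2) ^ 2 ≠ 0 by positivity) ?_
    linear_combination ((1 - t ^ 2) * (x 1 - a 1) - 2 * t * (x 0 - a 0)) * ht -
      ((1 - t ^ 2) * v 1 - 2 * t * v 0) * hx
  have hv' : v 0 ^ 2 + v 1 ^ 2 ≠ 0 := by
    refine fun h => hv ?_
    ext i
    fin_cases i <;> simp <;> nlinarith
  refine ⟨(v 0 * (x 0 - a 0) + v 1 * (x 1 - a 1)) / (v 0 ^ 2 + v 1 ^ 2), ?_⟩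
  ext i
  fin_cases i <;> simp <;> field_simp
  · linear_combination -v 1 * hparallel
  · linear_combination v 0 * hparallel

/-- The reflection of the point of tangency in the diameter orthogonal to the line is again a
common point, so the point of tangency lies on that diameter. -/
lemma sq_eq_of_tangent2 (h : Tangent2 (dualLine p) (dualCircle f)) :
    ((1 - p.1 ^ 2) * ((f 2 - f 0) / 2) + 2 * p.1 * (f 1 / 2) - p.2) ^ 2 =
      ((f 0 + f 2) / 2 * (1 + p.1 ^ 2)) ^ 2 := by
  obtain ⟨x, hx⟩ := h
  obtain ⟨hline, hcircle⟩ : x ∈ dualLine p ∩ dualCircle f := hx ▸ rfl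
  replace hline : (1 - p.1 ^ 2) * x 0 + 2 * p.1 * x 1 = p.2 := hline
  rw [mem_dualCircle] at hcircle
  set t := p.1
  set a := (f 2 - f 0) / 2
  set b := f 1 / 2
  set offset := (1 - t ^ 2) * (x 1 - b) - 2 * t * (x 0 - a)
  set μ := 2 * offset / (1 + t ^ 2) ^ 2 with hμ
  have hμ_mul : μ * (1 + t ^ 2) ^ 2 = 2 * offset := by rw [hμ]; field_simp
  have hreflection : !₂[x 0 + μ * (2 * t), x 1 - μ * (1 - t ^ 2)] ∈
      dualLine p ∩ dualCircle f := by
    refine ⟨?_, mem_dualCircle.2 ?_⟩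
    · simp only [dualLine, Set.mem_ofPred_eq]
      simp
      linear_combination hline
    · simp
      linear_combination hcircle + μ * hμ_mul
  rw [hx] at hreflection
  have hfixed : !₂[x 0 + μ * (2 * t), x 1 - μ * (1 - t ^ 2)] = x := hreflection
  have h0 : x 0 + μ * (2 * t) = x 0 := congrArg (· 0) hfixed
  have h1 : x 1 - μ * (1 - t ^ 2) = x 1 := congrArg (· 1) hfixed
  have hoffset_zero : offset = 0 := by
    linear_combination (-1 / 2) * hμ_mul + t * h0 - (1 - t ^ 2) / 2 * h1
  rw [← hline]
  linear_combination (1 + t ^ 2) ^ 2 * hcircle - offset * hoffset_zero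

lemma eval_eq_or_eval_reverse_eq_of_tangent2 (h : Tangent2 (dualLine p) (dualCircle f)) :
    eval f p.1 = p.2 ∨ eval (reverse f) p.1 = p.2 := by
  rcases sq_eq_sq_iff_eq_or_eq_neg.1 (sq_eq_of_tangent2 h) with h | h
  · right
    simp [eval, reverse]
    linear_combination h
  · left
    simp [eval]
    linear_combination h

lemma exists_ncard_tangent2_le {L C : Finset (Set Pt2)} (hL : ∀ l ∈ L, IsLine2 l)
    (hC : ∀ s ∈ C, IsCircle2 s) :
    ∃ (P : Finset (ℝ × ℝ)) (F : Finset Quad), #P ≤ #L ∧ #F ≤ 2 * #C ∧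
      {q : Set Pt2 × Set Pt2 | q.1 ∈ L ∧ q.2 ∈ C ∧ Tangent2 q.1 q.2}.ncard ≤
        #(incidences P F) := by
  classical
  choose! point hpoint using fun l hl => exists_eq_dualLine (hL l hl)
  choose! quad hquad using fun s hs => exists_eq_dualCircle (hC s hs)
  refine ⟨L.image point, C.image quad ∪ C.image (reverse ∘ quad), card_image_le, ?_, ?_⟩
  · rw [two_mul]
    exact (card_union_le _ _).trans (add_le_add card_image_le card_image_le)
  set I := incidences (L.image point) (C.image quad ∪ C.image (reverse ∘ quad))
  have hcover : {q : Set Pt2 × Set Pt2 | q.1 ∈ L ∧ q.2 ∈ C ∧ Tangent2 q.1 q.2} ⊆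
      (I.image (Prod.map dualLine dualCircle) : Set (Set Pt2 × Set Pt2)) := by
    rintro ⟨l, s⟩ ⟨hl, hs, htangent⟩
    dsimp only at hl hs htangent
    rw [hpoint l hl, hquad s hs] at htangent
    have hp := mem_image_of_mem point hl
    rw [mem_coe, mem_image]
    rcases eval_eq_or_eval_reverse_eq_of_tangent2 htangent with h | h
    · exact ⟨(point l, quad s), mem_incidences.2
        ⟨⟨hp, mem_union_left _ (mem_image_of_mem _ hs)⟩, h⟩,
        Prod.ext (hpoint l hl).symm (hquad s hs).symm⟩
    · exact ⟨(point l, reverse (quad s)), mem_incidences.2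
        ⟨⟨hp, mem_union_right _ (mem_image_of_mem (reverse ∘ quad) hs)⟩, h⟩,
        Prod.ext (hpoint l hl).symm ((dualCircle_reverse _).trans (hquad s hs).symm)⟩
  calc _ ≤ (I.image (Prod.map dualLine dualCircle) : Set (Set Pt2 × Set Pt2)).ncard :=
        Set.ncard_le_ncard hcover (finite_toSet _)
    _ ≤ #I := by
        rw [Set.ncard_coe_finset]
        exact card_image_le

end Duality

section Constants

variable {m K n k : ℕ}

lemma mul_rpow_two_thirds_le (hm : m ≤ n) (hK : K ≤ 2 * k) :
    ((m : ℝ) * K) ^ (2 / 3 : ℝ) ≤ 2 * ((n : ℝ) ^ (2 / 3 : ℝ) * (k : ℝ) ^ (2 / 3 : ℝ)) := by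
  have hK' : (K : ℝ) ≤ 2 * k := mod_cast hK
  calc ((m : ℝ) * K) ^ (2 / 3 : ℝ) ≤ (n * (2 * k) : ℝ) ^ (2 / 3 : ℝ) := by gcongr
    _ = 2 ^ (2 / 3 : ℝ) * ((n : ℝ) ^ (2 / 3 : ℝ) * (k : ℝ) ^ (2 / 3 : ℝ)) := by
        rw [Real.mul_rpow (by positivity) (by positivity), Real.mul_rpow two_pos.le (by positivity)]
        ring
    _ ≤ 2 * ((n : ℝ) ^ (2 / 3 : ℝ) * (k : ℝ) ^ (2 / 3 : ℝ)) := by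
        gcongr
        exact Real.rpow_le_self_of_one_le (by norm_num) (by norm_num)

lemma one_add_log_le (hk : 2 ≤ k) (hK : K ≤ 2 * k) : 1 + Real.log K ≤ 4 * Real.log k := by
  have hk' : (2 : ℝ) ≤ k := mod_cast hk
  have hlog_two := Real.log_two_gt_d9
  have hlog_k := Real.log_le_log two_pos hk'
  rcases K.eq_zero_or_pos with rfl | hK₀
  · simp
    linarith
  have hlog_K := Real.log_le_log (by positivity) (show (K : ℝ) ≤ 2 * k from mod_cast hK)
  rw [Real.log_mul two_ne_zero (by positivity)] at hlog_K
  linarith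

lemma lensBound_le (hm : m ≤ n) (hK : K ≤ 2 * k) (hk : 2 ≤ k) :
    lensBound m K ≤ 8 * ((n : ℝ) ^ (6 / 11 : ℝ) * (k : ℝ) ^ (9 / 11 : ℝ) *
      Real.log k ^ (2 / 11 : ℝ)) := by
  have hK' : (K : ℝ) ≤ 2 * k := mod_cast hK
  have := Real.log_natCast_nonneg K
  have hlog_k := Real.log_natCast_nonneg k
  calc lensBound m K ≤ (n : ℝ) ^ (6 / 11 : ℝ) * (2 * k : ℝ) ^ (9 / 11 : ℝ) *
        (4 * Real.log k) ^ (2 / 11 : ℝ) := by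
        unfold lensBound
        gcongr
        exact one_add_log_le hk hK
    _ = 2 ^ (9 / 11 : ℝ) * 4 ^ (2 / 11 : ℝ) * ((n : ℝ) ^ (6 / 11 : ℝ) * (k : ℝ) ^ (9 / 11 : ℝ) *
        Real.log k ^ (2 / 11 : ℝ)) := by
        rw [Real.mul_rpow two_pos.le (by positivity), Real.mul_rpow (by norm_num) hlog_k]
        ring
    _ ≤ 2 * 4 * ((n : ℝ) ^ (6 / 11 : ℝ) * (k : ℝ) ^ (9 / 11 : ℝ) *
        Real.log k ^ (2 / 11 : ℝ)) := by
        gcongr <;> exact Real.rpow_le_self_of_one_le (by norm_num) (by norm_num)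
    _ = _ := by ring

lemma add_rpow_add_lensBound_le (hm : m ≤ n) (hK : K ≤ 2 * k) (hk : 2 ≤ k) :
    m + K + ((m : ℝ) * K) ^ (2 / 3 : ℝ) + lensBound m K ≤
      8 * ((n : ℝ) ^ (2 / 3 : ℝ) * (k : ℝ) ^ (2 / 3 : ℝ) +
        (n : ℝ) ^ (6 / 11 : ℝ) * (k : ℝ) ^ (9 / 11 : ℝ) * Real.log k ^ (2 / 11 : ℝ) + k + n) := by
  have hm' : (m : ℝ) ≤ n := mod_cast hm
  have hK' : (K : ℝ) ≤ 2 * k := mod_cast hK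
  have hpow : (0 : ℝ) ≤ (n : ℝ) ^ (2 / 3 : ℝ) * (k : ℝ) ^ (2 / 3 : ℝ) := by positivity
  linarith [mul_rpow_two_thirds_le hm hK, lensBound_le hm hK hk]

end Constants

end LineCircle

theorem line_circle_tangencies :
    ∃ A : ℝ, 0 < A ∧
      ∀ (n k : ℕ) (L C : Finset (Set Pt2)),
        L.card = n → C.card = k → 2 ≤ k →
        (∀ l ∈ L, IsLine2 l) → (∀ s ∈ C, IsCircle2 s) →
        (({q : Set Pt2 × Set Pt2 | q.1 ∈ L ∧ q.2 ∈ C ∧ Tangent2 q.1 q.2}).ncard : ℝ) ≤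
          A * ((n : ℝ) ^ ((2 : ℝ) / 3) * (k : ℝ) ^ ((2 : ℝ) / 3) +
               (n : ℝ) ^ ((6 : ℝ) / 11) * (k : ℝ) ^ ((9 : ℝ) / 11) *
                 (Real.log k) ^ ((2 : ℝ) / 11) +
               (k : ℝ) + (n : ℝ)) := by
  obtain ⟨A, hA, hincidences⟩ := LineCircle.exists_card_incidences_le
  refine ⟨A * 8, by positivity, ?_⟩
  rintro n k L C rfl rfl hk hL hC
  obtain ⟨P, F, hP, hF, htangent⟩ := LineCircle.exists_ncard_tangent2_le hL hC
  rw [mul_assoc]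
  calc _ ≤ ((LineCircle.incidences P F).card : ℝ) := mod_cast htangent
    _ ≤ _ := hincidences P F
    _ ≤ _ := mul_le_mul_of_nonneg_left (LineCircle.add_rpow_add_lensBound_le hP hF hk) hA.le
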